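/- arXiv:2311.06173 — 2 statements merged into one kernel-verified Lean document; each statement's English description precedes it below -/
import Mathlib

section
/- For every m ≥ 1, the algebra Λ = k[x]/(x^m) is hom-irreducible and ext-irreducible: for all d, e ∈ ℕ, both of the following Zariski-closed subsets of matrix spaces are irreducible: (i) {(U, V, f) ∈ M_{e×e}(k) × M_{d×d}(k) × M_{d×e}(k) : U^m = 0, V^m = 0, f U = V f}, and (ii) {(U, V, Z) ∈ M_{e×e}(k) × M_{d×d}(k) × M_{d×e}(k) : U^m = 0, V^m = 0, Σ_{i=0}^{m−1} V^{m−1−i} Z U^{i} = 0}. -/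
/-!
Formalization of a statement from:
"Algebras with irreducible module varieties: two-vertex case completed"
-/

universe u v

open Quiver

noncomputable section

/-- The Zariski topology on the affine coordinate space `ι → k`: it is generated by the
basic open sets `{x | p(x) ≠ 0}` for multivariate polynomials `p`. -/
def zariskiTop (k : Type u) [CommSemiring k] (ι : Type v) : TopologicalSpace (ι → k) :=
  TopologicalSpace.generateFrom
    {U | ∃ p : MvPolynomial ι k, U = {x | MvPolynomial.eval x p ≠ 0}}

/-- The ambient affine space `M_{e×e}(k) × M_{d×d}(k) × M_{d×e}(k)` of triples
`(U, V, f)` (respectively `(U, V, Z)`). -/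
def CSpace (k : Type u) [Field k] (d e : ℕ) : Type u :=
  Matrix (Fin e) (Fin e) k × Matrix (Fin d) (Fin d) k × Matrix (Fin d) (Fin e) k

/-- The index type for the affine coordinates on `CSpace`. -/
def CIdx (d e : ℕ) : Type := (Fin e × Fin e) ⊕ (Fin d × Fin d) ⊕ (Fin d × Fin e)

/-- The affine coordinates on `CSpace`. -/
def cCoords {k : Type u} [Field k] {d e : ℕ} (x : CSpace k d e) : CIdx d e → k
  | Sum.inl i => x.1 i.1 i.2
  | Sum.inr (Sum.inl i) => x.2.1 i.1 i.2
  | Sum.inr (Sum.inr i) => x.2.2 i.1 i.2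

/-- The Zariski topology on `CSpace`. -/
def cTop (k : Type u) [Field k] (d e : ℕ) : TopologicalSpace (CSpace k d e) :=
  (zariskiTop k (CIdx d e)).induced cCoords


namespace HomExt



section Jordan
variable {k : Type u} [Field k]
variable {M : Type*} [AddCommGroup M] [Module k M]
variable {N : Type*} [AddCommGroup N] [Module k N]

theorem inter_pow {U : Module.End k M} {V : Module.End k N} {f : M →ₗ[k] N}
    (h : f ∘ₗ U = V ∘ₗ f) (n : ℕ) (v : M) : f ((U ^ n) v) = (V ^ n) (f v) := by
  induction n generalizing v with
  | zero => simp
  | succ n ih =>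
    rw [pow_succ, pow_succ, Module.End.mul_apply, Module.End.mul_apply, ih]
    congr 1
    exact LinearMap.congr_fun h v

/-- The chain vectors. -/
def chain (U : Module.End k M) {ι : Type*} (a : ι → ℕ) (y : ι → M) (p : Σ i, Fin (a i)) : M :=
  (U ^ (p.2 : ℕ)) (y p.1)

/-- `y` are generators of a Jordan decomposition of `U` with block sizes `a`. -/
structure IsJ (U : Module.End k M) {ι : Type*} (a : ι → ℕ) (y : ι → M) : Prop where
  kill : ∀ i, (U ^ a i) (y i) = 0
  li : LinearIndependent k (chain U a y)
  sp : ⊤ ≤ Submodule.span k (Set.range (chain U a y))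

variable {ι : Type*} {U : Module.End k M} {a : ι → ℕ} {y : ι → M}

def IsJ.basis (h : IsJ U a y) : Module.Basis (Σ i, Fin (a i)) k M := Module.Basis.mk h.li h.sp

theorem IsJ.basis_apply (h : IsJ U a y) (i : ι) (s : Fin (a i)) :
    h.basis ⟨i, s⟩ = (U ^ (s : ℕ)) (y i) := by
  simp [IsJ.basis, chain]

theorem IsJ.kill' (h : IsJ U a y) (i : ι) (n : ℕ) (hn : a i ≤ n) : (U ^ n) (y i) = 0 := by
  obtain ⟨r, rfl⟩ := Nat.exists_eq_add_of_le hn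
  rw [add_comm, pow_add, Module.End.mul_apply, h.kill, map_zero]

theorem IsJ.ext (h : IsJ U a y) {V : Module.End k N} {f g : M →ₗ[k] N}
    (hf : f ∘ₗ U = V ∘ₗ f) (hg : g ∘ₗ U = V ∘ₗ g) (he : ∀ i, f (y i) = g (y i)) : f = g := by
  apply h.basis.ext
  rintro ⟨i, s⟩
  rw [h.basis_apply, inter_pow hf, inter_pow hg, he]

theorem IsJ.ext_inter (h : IsJ U a y) {V : Module.End k N} {f : M →ₗ[k] N}
    (he : ∀ i, ∀ s < a i, f (U ((U ^ s) (y i))) = V (f ((U ^ s) (y i)))) : f ∘ₗ U = V ∘ₗ f := by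
  apply h.basis.ext
  rintro ⟨i, s⟩
  rw [h.basis_apply]
  exact he i s s.2

theorem IsJ.lift (h : IsJ U a y) (V : Module.End k N) (n : ι → N)
    (hn : ∀ i, (V ^ a i) (n i) = 0) :
    ∃ f : M →ₗ[k] N, f ∘ₗ U = V ∘ₗ f ∧ ∀ i, f (y i) = n i := by
  let f : M →ₗ[k] N := h.basis.constr k (fun p => (V ^ (p.2 : ℕ)) (n p.1))
  have hf : ∀ i s, s < a i → f ((U ^ s) (y i)) = (V ^ s) (n i) := by
    intro i s hs
    have := h.basis.constr_basis k (fun p => (V ^ (p.2 : ℕ)) (n p.1)) ⟨i, ⟨s, hs⟩⟩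
    rwa [h.basis_apply] at this
  refine ⟨f, h.ext_inter ?_, ?_⟩
  · intro i s hs
    rw [hf i s hs, ← Module.End.mul_apply, ← pow_succ', ← Module.End.mul_apply V, ← pow_succ']
    rcases Nat.lt_or_ge (s + 1) (a i) with h1 | h1
    · exact hf i _ h1
    · have h2 : s + 1 = a i := by omega
      rw [h2, hn, h.kill, map_zero]
  · intro i
    rcases Nat.eq_zero_or_pos (a i) with h0 | h0
    · have h1 := h.kill i
      have h2 := hn i
      rw [h0] at h1 h2
      simp only [pow_zero, Module.End.one_apply] at h1 h2
      rw [h1, h2, map_zero]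
    · simpa using hf i 0 h0

theorem IsJ.of_gen [Fintype ι] [FiniteDimensional k M] 
    (hk : ∀ i, (U ^ a i) (y i) = 0)
    (hg : ∀ W : Submodule k M, (∀ v ∈ W, U v ∈ W) → (∀ i, y i ∈ W) → W = ⊤)
    (hd : ∑ i, a i = Module.finrank k M) : IsJ U a y := by
  have hs : ⊤ ≤ Submodule.span k (Set.range (chain U a y)) := by
    refine (hg _ ?_ ?_).ge
    · intro v hv
      induction hv using Submodule.span_induction with
      | mem x hx =>
        obtain ⟨⟨i, s⟩, rfl⟩ := hx
        simp only [chain]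
        rw [← Module.End.mul_apply, ← pow_succ']
        rcases Nat.lt_or_ge (s + 1) (a i) with h1 | h1
        · exact Submodule.subset_span ⟨⟨i, ⟨s + 1, h1⟩⟩, rfl⟩
        · have h2 : (s : ℕ) + 1 = a i := by have := s.2; omega
          rw [h2, hk]
          exact Submodule.zero_mem _
      | zero => simp
      | add x y _ _ hx hy => rw [map_add]; exact Submodule.add_mem _ hx hy
      | smul c x _ hx => rw [map_smul]; exact Submodule.smul_mem _ _ hx
    · intro i
      rcases Nat.eq_zero_or_pos (a i) with h0 | h0
      · have h1 := hk i
        rw [h0] at h1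
        simp only [pow_zero, Module.End.one_apply] at h1 
        rw [h1]; exact Submodule.zero_mem _
      · exact Submodule.subset_span ⟨⟨i, ⟨0, h0⟩⟩, by simp [chain]⟩
  refine ⟨hk, ?_, hs⟩
  apply linearIndependent_of_top_le_span_of_card_eq_finrank hs
  simp [hd]

theorem IsJ.finrank_eq [Fintype ι] (h : IsJ U a y) : Module.finrank k M = ∑ i, a i := by
  rw [Module.finrank_eq_card_basis h.basis]; simp

theorem IsJ.finrank_range [Fintype ι] (h : IsJ U a y) (s : ℕ) :
    Module.finrank k (LinearMap.range (U ^ s)) = ∑ i, (a i - s) := by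
  let c : (Σ i, Fin (a i - s)) → (Σ i, Fin (a i)) := fun p => ⟨p.1, ⟨p.2 + s, by
    have := p.2.2; omega⟩⟩
  have hc : Function.Injective c := by
    rintro ⟨i, r⟩ ⟨j, t⟩ h
    simp only [c, Sigma.mk.injEq] at h
    obtain ⟨rfl, h⟩ := h
    simp only [heq_eq_eq, Fin.mk.injEq] at h
    congr 1
    ext; omega
  have h1 : LinearMap.range (U ^ s) = Submodule.span k (Set.range (chain U a y ∘ c)) := by
    apply le_antisymm
    · rintro _ ⟨v, rfl⟩
      have hv : v ∈ Submodule.span k (Set.range (chain U a y)) := h.sp trivial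
      induction hv using Submodule.span_induction with
      | mem x hx =>
        obtain ⟨⟨i, r⟩, rfl⟩ := hx
        simp only [chain]
        rw [← Module.End.mul_apply, ← pow_add]
        rcases Nat.lt_or_ge (s + r) (a i) with h1 | h1
        · refine Submodule.subset_span ⟨⟨i, ⟨r, by omega⟩⟩, ?_⟩
          simp [chain, c, add_comm]
        · rw [h.kill' _ _ h1]
          exact Submodule.zero_mem _
      | zero => simp
      | add x y _ _ hx hy => rw [map_add]; exact Submodule.add_mem _ hx hy
      | smul c x _ hx => rw [map_smul]; exact Submodule.smul_mem _ _ hx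
    · rw [Submodule.span_le]
      rintro _ ⟨⟨i, r⟩, rfl⟩
      refine ⟨(U ^ (r : ℕ)) (y i), ?_⟩
      simp only [chain, c, Function.comp]
      rw [← Module.End.mul_apply, ← pow_add, add_comm]
  rw [h1, finrank_span_eq_card (h.li.comp c hc)]
  simp

theorem exists_model {ι : Type} (a : ι → ℕ) [Fintype ι] [DecidableEq ι] : 
    ∃ (S : Module.End k ((Σ i, Fin (a i)) → k)) (y : ι → ((Σ i, Fin (a i)) → k)),
    IsJ S a y := by
  let b := Pi.basisFun k (Σ i, Fin (a i))
  let e : ι → ℕ → ((Σ i, Fin (a i)) → k) := fun i s => if h : s < a i then b ⟨i, ⟨s, h⟩⟩ else 0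
  let S : Module.End k ((Σ i, Fin (a i)) → k) := b.constr k (fun p => e p.1 (p.2 + 1))
  have hS : ∀ i s, S (e i s) = e i (s + 1) := by
    intro i s
    by_cases h : s < a i
    · have := b.constr_basis k (fun p => e p.1 (p.2 + 1)) ⟨i, ⟨s, h⟩⟩
      simp only [e, h, dif_pos]
      exact this
    · have h' : ¬ (s + 1 < a i) := by omega
      simp [e, h, h']
  have hp : ∀ i s, (S ^ s) (e i 0) = e i s := by
    intro i s
    induction s with
    | zero => simp
    | succ s ih => rw [pow_succ', Module.End.mul_apply, ih, hS]
  have hch : chain S a (fun i => e i 0) = b := by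
    ext ⟨i, s⟩ : 1
    simp [chain, hp, e]
  refine ⟨S, fun i => e i 0, ?_, ?_, ?_⟩
  · intro i; rw [hp]; simp [e]
  · rw [hch]; exact b.linearIndependent
  · rw [hch, b.span_eq]

end Jordan


section JordanEx
variable {k : Type u} [Field k]
variable {M : Type*} [AddCommGroup M] [Module k M] [FiniteDimensional k M]

theorem finrank_quot_X (c : ℕ) :
    Module.finrank k (Polynomial k ⧸ Submodule.span (Polynomial k) {(Polynomial.X : Polynomial k) ^ c}) = c := by
  have := finrank_quotient_span_eq_natDegree (K := k) (f := (Polynomial.X : Polynomial k) ^ c)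
  rw [Polynomial.natDegree_X_pow] at this
  exact this

open Polynomial in
theorem exists_isJ_aux (U : Module.End k M) (m : ℕ) (hU : U ^ m = 0) :
    ∃ (n : ℕ) (a : Fin n → ℕ) (y : Fin n → M), IsJ U a y := by
  have ht : Module.IsTorsion' (Module.AEval' U) (Submonoid.powers (X : k[X])) := by
    intro x
    obtain ⟨v, rfl⟩ := (Module.AEval'.of U).surjective x
    refine ⟨⟨X ^ m, m, rfl⟩, ?_⟩
    change (X ^ m : k[X]) • (Module.AEval'.of U v) = 0
    rw [Module.AEval'.X_pow_smul_of, hU]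
    simp
  obtain ⟨n, c, ⟨φ⟩⟩ := Module.torsion_by_prime_power_decomposition (R := k[X]) (p := X) Polynomial.irreducible_X ht
  classical
  let w : Fin n → Module.AEval' U := fun i => φ.symm (DirectSum.lof k[X] (Fin n) _ i (Submodule.Quotient.mk 1))
  refine ⟨n, c, fun i => (Module.AEval'.of U).symm (w i), ?_⟩
  have hpow : ∀ s v, (U ^ s) ((Module.AEval'.of U).symm v) = (Module.AEval'.of U).symm ((X ^ s : k[X]) • v) := by
    intro s v
    obtain ⟨v, rfl⟩ := (Module.AEval'.of U).surjective v
    rw [Module.AEval'.X_pow_smul_of]; simp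
  apply IsJ.of_gen
  · intro i
    rw [hpow]
    simp only [w]
    rw [← map_smul, ← map_smul, ← Submodule.Quotient.mk_smul]
    rw [(Submodule.Quotient.mk_eq_zero _).2]
    · simp
    · simp only [smul_eq_mul, mul_one]; exact Submodule.mem_span_singleton_self _
  · intro W hW hy
    rw [eq_top_iff]
    rintro v -
    have hp : ∀ (p : k[X]) (u : Module.AEval' U), (Module.AEval'.of U).symm u ∈ W →
        (Module.AEval'.of U).symm (p • u) ∈ W := by
      intro p u hu
      induction p using Polynomial.induction_on' with
      | add p q hp hq => rw [add_smul, map_add]; exact W.add_mem hp hq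
      | monomial s r =>
        rw [← Polynomial.C_mul_X_pow_eq_monomial, mul_smul]
        have h1 : (Module.AEval'.of U).symm ((X ^ s : k[X]) • u) ∈ W := by
          rw [← hpow]
          clear hpow
          induction s with
          | zero => simpa using hu
          | succ s ih => rw [pow_succ', Module.End.mul_apply]; exact hW _ ih
        have h2 : (C r : k[X]) • ((X ^ s : k[X]) • u) = r • ((X ^ s : k[X]) • u) := by
          rw [← Polynomial.algebraMap_eq, algebraMap_smul]
        rw [h2, map_smul]
        exact W.smul_mem _ h1
    have key : ∀ z, (Module.AEval'.of U).symm (φ.symm z) ∈ W := by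
      intro z
      induction z using DirectSum.induction_on with
      | zero => simp
      | add x y hx hy => rw [map_add, map_add]; exact W.add_mem hx hy
      | of i x =>
        obtain ⟨p, rfl⟩ := Submodule.Quotient.mk_surjective _ x
        have : (DirectSum.of (fun i => k[X] ⧸ Submodule.span k[X] {(X : k[X]) ^ c i}) i) (Submodule.Quotient.mk p)
          = p • DirectSum.lof k[X] (Fin n) _ i (Submodule.Quotient.mk 1) := by
          rw [← map_smul, ← Submodule.Quotient.mk_smul, smul_eq_mul, mul_one]; rfl
        rw [this, map_smul]
        exact hp _ _ (hy i)
    have := key (φ (Module.AEval'.of U v))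
    simpa using this
  · have e1 : Module.finrank k M = Module.finrank k (Module.AEval' U) :=
      (Module.AEval'.of U).finrank_eq
    have e2 := (φ.restrictScalars k).finrank_eq
    have hfin : ∀ i, Module.Finite k (k[X] ⧸ Submodule.span k[X] {(X : k[X]) ^ c i}) := by
      intro i
      exact (Polynomial.monic_X_pow (R := k) (c i)).finite_quotient
    rw [e1, e2, Module.finrank_directSum]
    simp only [finrank_quot_X]

theorem exists_isJ (U : Module.End k M) (m : ℕ) (hU : U ^ m = 0) :
    ∃ (ι : Type) (_ : Fintype ι) (_ : DecidableEq ι) (a : ι → ℕ) (y : ι → M), IsJ U a y ∧ ∀ i, 0 < a i ∧ a i ≤ m := by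
  classical
  obtain ⟨n, a, y, h⟩ := exists_isJ_aux U m hU
  refine ⟨{i : Fin n // a i ≠ 0}, inferInstance, inferInstance, fun i => a i, fun i => y i, ?_, ?_⟩
  · apply IsJ.of_gen
    · intro i; exact h.kill i
    · intro W hW hy
      rw [eq_top_iff]
      refine h.sp.trans ?_
      rw [Submodule.span_le]
      rintro _ ⟨⟨i, s⟩, rfl⟩
      simp only [chain]
      have h0 : y i ∈ W := hy ⟨i, by have := s.2; omega⟩
      generalize (s : ℕ) = r
      induction r with
      | zero => simpa using h0
      | succ s ih => rw [pow_succ', Module.End.mul_apply]; exact hW _ ih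
    · rw [h.finrank_eq]
      have := Finset.sum_subtype (p := fun i => a i ≠ 0) (F := inferInstance) (Finset.univ.filter (fun i => a i ≠ 0))
        (by simp) a
      rw [← this, Finset.sum_filter_ne_zero]
  · rintro ⟨i, hi⟩
    refine ⟨Nat.pos_of_ne_zero hi, ?_⟩
    by_contra hlt
    push Not at hlt
    have := h.li.ne_zero ⟨i, ⟨m, hlt⟩⟩
    simp [chain, hU] at this

end JordanEx


section Move
variable {k : Type u} [Field k]

theorem move (b l c : ℕ) (hb : 1 ≤ b) (hl : b ≤ l) (hc : b ≤ c) :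
    ∃ (W : Type u) (_ : AddCommGroup W) (_ : Module k W) (_ : FiniteDimensional k W)
      (U A : Module.End k W) (y₁ y₂ : W),
      IsJ U ![l + c - b, b] ![y₁, y₂] ∧
      (∀ t : k, t ≠ 0 → ∃ y₂', IsJ (U + t • A) ![l + c - b + 1, b - 1] ![y₁, y₂']) ∧
      (∀ (N : Type u) [AddCommGroup N] [Module k N] (V : Module.End k N) (f : W →ₗ[k] N),
        f ∘ₗ U = V ∘ₗ f → ∀ δ : N, (V ^ l) δ = (V ^ (b - 1)) (f y₂) - (V ^ (l - 1)) (f y₁) →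
        ∃ h : W →ₗ[k] N, ∀ t : k, (f + t • h) ∘ₗ (U + t • A) = V ∘ₗ (f + t • h)) := by
  obtain ⟨W, _, _, _, S, w, hJ⟩ : ∃ (W : Type u) (_ : AddCommGroup W) (_ : Module k W)
      (_ : FiniteDimensional k W) (S : Module.End k W) (w : Fin 2 → W), IsJ S ![l, c] w := by
    obtain ⟨S, w, hJ⟩ := exists_model (k := k) ![l, c]
    exact ⟨_, inferInstance, inferInstance, inferInstance, S, w, hJ⟩
  have hl0 : l - 1 < ![l, c] 0 := by simp; omega
  let φ : W →ₗ[k] k := hJ.basis.coord ⟨0, ⟨l - 1, hl0⟩⟩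
  have hφu : ∀ i < l, φ ((S ^ i) (w 0)) = if i = l - 1 then 1 else 0 := by
    intro i hi
    have := hJ.basis_apply 0 ⟨i, hi⟩
    simp only at this
    rw [← this]
    simp only [φ, Module.Basis.coord_apply, Module.Basis.repr_self]
    rw [Finsupp.single_apply]
    congr 1
    simp only [Sigma.mk.injEq, heq_eq_eq, true_and]
    exact propext Fin.ext_iff
  have hφz : ∀ i, φ ((S ^ i) (w 1)) = 0 := by
    intro i
    rcases Nat.lt_or_ge i c with hi | hi
    · have := hJ.basis_apply 1 ⟨i, hi⟩
      simp only at this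
      rw [← this]
      simp only [φ, Module.Basis.coord_apply, Module.Basis.repr_self]
      rw [Finsupp.single_apply, if_neg]
      intro h
      have := congrArg Sigma.fst h
      simp at this
    · rw [hJ.kill' 1 i hi, map_zero]
  let A : Module.End k W := φ.smulRight ((S ^ (b - 1)) (w 1))
  let U : Module.End k W := S - φ.smulRight ((S ^ b) (w 1))
  have hUt : ∀ (t : k) (v : W), (U + t • A) v = S v + φ v • (t • (S ^ (b - 1)) (w 1) - (S ^ b) (w 1)) := by
    intro t v
    simp only [U, A, LinearMap.add_apply, LinearMap.sub_apply, LinearMap.smul_apply,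
      LinearMap.smulRight_apply, smul_sub, smul_comm t]
    abel
  have hz : ∀ (t : k) (i : ℕ), ((U + t • A) ^ i) (w 1) = (S ^ i) (w 1) := by
    intro t i
    induction i with
    | zero => simp
    | succ i ih => 
      rw [pow_succ', Module.End.mul_apply, ih, hUt, hφz, zero_smul, add_zero, pow_succ', Module.End.mul_apply]
  have hu : ∀ t : k, ∀ i < l, ((U + t • A) ^ i) (w 0) = (S ^ i) (w 0) := by
    intro t i hi
    induction i with
    | zero => simp
    | succ i ih => 
      rw [pow_succ', Module.End.mul_apply, ih (by omega), hUt, hφu _ (by omega), if_neg (by omega), zero_smul, add_zero, pow_succ', Module.End.mul_apply]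
  have hul : ∀ t : k, ((U + t • A) ^ l) (w 0) = t • (S ^ (b - 1)) (w 1) - (S ^ b) (w 1) := by
    intro t
    obtain ⟨l', rfl⟩ : ∃ l', l = l' + 1 := ⟨l - 1, by omega⟩
    have h0 : (S ^ (l' + 1)) (w 0) = 0 := hJ.kill 0
    rw [pow_succ', Module.End.mul_apply, hu t _ (by omega), hUt, hφu _ (by omega), if_pos (by omega), one_smul,
      ← Module.End.mul_apply, ← pow_succ', h0, zero_add]
  have hpowmem : ∀ (T : Module.End k W) (X : Submodule k W), (∀ v ∈ X, T v ∈ X) → ∀ v ∈ X, ∀ i, (T ^ i) v ∈ X := by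
    intro T X hX v hv i
    induction i with
    | zero => simpa
    | succ i ih => rw [pow_succ', Module.End.mul_apply]; exact hX _ ih
  have hgen : ∀ t : k, ∀ X : Submodule k W, (∀ v ∈ X, (U + t • A) v ∈ X) → w 0 ∈ X → w 1 ∈ X → X = ⊤ := by
    intro t X hX h0 h1
    rw [eq_top_iff]
    refine hJ.sp.trans ?_
    rw [Submodule.span_le]
    rintro _ ⟨⟨i, s, hs⟩, rfl⟩
    fin_cases i
    · change (S ^ s) (w 0) ∈ X
      rw [← hu t s hs]; exact hpowmem _ _ hX _ h0 _
    · change (S ^ s) (w 1) ∈ X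
      rw [← hz t s]; exact hpowmem _ _ hX _ h1 _
  have hdim : Module.finrank k W = l + c := by
    rw [hJ.finrank_eq]; simp
  have hSc : ∀ i, c ≤ i → (S ^ i) (w 1) = 0 := fun i hi => hJ.kill' 1 i hi
  refine ⟨W, inferInstance, inferInstance, inferInstance, U, A, w 0, w 1 + (U ^ (l - b)) (w 0), ?_, ?_, ?_⟩
  · have hU0 : U + (0 : k) • A = U := by simp
    have hz0 := hz 0
    have hul0 := hul 0
    have hgen0 := hgen 0
    rw [hU0] at hz0 hul0 hgen0
    rw [zero_smul, zero_sub] at hul0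
    apply IsJ.of_gen
    · intro i
      fin_cases i
      · change (U ^ (l + c - b)) (w 0) = 0
        rw [show l + c - b = (c - b) + l by omega, pow_add, Module.End.mul_apply, hul0, map_neg, ← hz0,
          ← Module.End.mul_apply, ← pow_add, hz0, hSc _ (by omega), neg_zero]
      · change (U ^ b) (w 1 + (U ^ (l - b)) (w 0)) = 0
        rw [map_add, ← Module.End.mul_apply, ← pow_add, show b + (l - b) = l by omega, hul0, hz0]
        simp
    · intro X hX h
      have h0 : w 0 ∈ X := h 0
      have h1 : w 1 + (U ^ (l - b)) (w 0) ∈ X := h 1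
      exact hgen0 X hX h0 ((X.add_mem_iff_left (hpowmem _ _ hX _ h0 _)).1 h1)
    · rw [hdim]; simp; omega
  · intro t ht
    set T := U + t • A with hT
    let q : Module.End k W := t⁻¹ • ∑ i ∈ Finset.range c, (t⁻¹ • T) ^ i
    have hq : q * (t • 1 - T) = 1 - (t⁻¹ • T) ^ c := by
      have := geom_sum_mul_neg (t⁻¹ • T) c
      rw [← this]
      have h2 : t • (1 : Module.End k W) - T = t • (1 - t⁻¹ • T) := by
        rw [smul_sub, smul_smul, mul_inv_cancel₀ ht, one_smul]
      rw [h2, smul_mul_smul_comm, inv_mul_cancel₀ ht, one_smul]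
    have hcomm : q * T ^ (b - 1) = T ^ (b - 1) * q := by
      have : Commute T q := by
        apply Commute.smul_right
        apply Commute.sum_right
        intro i _
        apply Commute.pow_right
        exact (Commute.refl T).smul_right _
      exact ((this.pow_left (b - 1)).eq).symm
    have hqX : ∀ X : Submodule k W, (∀ v ∈ X, T v ∈ X) → ∀ v ∈ X, q v ∈ X := by
      intro X hX v hv
      simp only [q, LinearMap.smul_apply, LinearMap.sum_apply]
      refine X.smul_mem _ (X.sum_mem ?_)
      intro i _
      rw [smul_pow, LinearMap.smul_apply]
      exact X.smul_mem _ (hpowmem _ _ hX _ hv _)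
    refine ⟨w 1 - q ((T ^ (l - b + 1)) (w 0)), ?_⟩
    apply IsJ.of_gen
    · intro i
      fin_cases i
      · change (T ^ (l + c - b + 1)) (w 0) = 0
        rw [show l + c - b + 1 = (c - b + 1) + l by omega, pow_add, Module.End.mul_apply, hul t, map_sub, map_smul, ← hz t,
          ← hz t, ← Module.End.mul_apply, ← Module.End.mul_apply, ← pow_add, ← pow_add, hz, hz, hSc _ (by omega), hSc _ (by omega)]
        simp
      · change (T ^ (b - 1)) (w 1 - q ((T ^ (l - b + 1)) (w 0))) = 0
        rw [map_sub, ← Module.End.mul_apply _ q, ← hcomm, Module.End.mul_apply, ← Module.End.mul_apply (T ^ (b - 1)), ← pow_add,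
          show b - 1 + (l - b + 1) = l by omega, hul t, ← hz t, ← hz t]
        have h3 : t • (T ^ (b - 1)) (w 1) - (T ^ b) (w 1) = (t • 1 - T) ((T ^ (b - 1)) (w 1)) := by
          rw [LinearMap.sub_apply, ← Module.End.mul_apply T, ← pow_succ', show b - 1 + 1 = b by omega]
          simp
        rw [h3, ← Module.End.mul_apply q, hq, smul_pow, LinearMap.sub_apply, LinearMap.smul_apply,
          ← Module.End.mul_apply (T ^ c), ← pow_add, hz t (c + (b - 1)), hSc _ (by omega)]
        simp
    · intro X hX h
      have h0 : w 0 ∈ X := h 0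
      have h1 : w 1 - q ((T ^ (l - b + 1)) (w 0)) ∈ X := h 1
      exact hgen t X hX h0 ((X.sub_mem_iff_left (hqX _ hX _ (hpowmem _ _ hX _ h0 _))).1 h1)
    · rw [hdim]; simp; omega
  · intro N _ _ V f hf δ hδ
    let h : W →ₗ[k] N := hJ.basis.constr k (fun p => if p.1 = 0 then (V ^ (p.2 : ℕ)) δ else 0)
    have hh0 : ∀ s < l, h ((S ^ s) (w 0)) = (V ^ s) δ := by
      intro s hs
      have := hJ.basis.constr_basis k (fun p => if p.1 = 0 then (V ^ (p.2 : ℕ)) δ else 0) ⟨0, ⟨s, hs⟩⟩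
      rw [hJ.basis_apply] at this
      exact this.trans (if_pos rfl)
    have hh1 : ∀ s, h ((S ^ s) (w 1)) = 0 := by
      intro s
      rcases Nat.lt_or_ge s c with hs | hs
      · have := hJ.basis.constr_basis k (fun p => if p.1 = 0 then (V ^ (p.2 : ℕ)) δ else 0) ⟨1, ⟨s, hs⟩⟩
        rw [hJ.basis_apply] at this
        exact this.trans (if_neg (by simp))
      · rw [hSc s hs, map_zero]
    have hU0 : U + (0 : k) • A = U := by simp
    have hz0 := hz 0
    have hul0 := hul 0
    have hu0 := hu 0
    rw [hU0] at hz0 hul0 hu0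
    rw [zero_smul, zero_sub] at hul0
    have hfz : ∀ s, f ((S ^ s) (w 1)) = (V ^ s) (f (w 1)) := by
      intro s; rw [← hz0, inter_pow hf]
    have hfu : ∀ s < l, f ((S ^ s) (w 0)) = (V ^ s) (f (w 0)) := by
      intro s hs; rw [← hu0 s hs, inter_pow hf]
    have hδ' : (V ^ l) δ = (V ^ (b - 1)) (f (w 1)) := by
      rw [hδ, map_add, map_add, inter_pow hf, ← Module.End.mul_apply, ← pow_add, show b - 1 + (l - b) = l - 1 by omega]
      abel
    have hful : (V ^ l) (f (w 0)) = - (V ^ b) (f (w 1)) := by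
      rw [← inter_pow hf, hul0, map_neg, hfz]
    refine ⟨h, fun t => ?_⟩
    apply hJ.basis.ext
    rintro ⟨i, s, hs⟩
    rw [hJ.basis_apply]
    fin_cases i
    · change (f + t • h) ((U + t • A) ((S ^ s) (w 0))) = V ((f + t • h) ((S ^ s) (w 0)))
      replace hs : s < l := hs
      rw [← hu t s hs, ← Module.End.mul_apply (U + t • A), ← pow_succ']
      rcases Nat.lt_or_ge (s + 1) l with h1 | h1
      · rw [hu t _ h1, hu t _ hs]
        simp only [LinearMap.add_apply, LinearMap.smul_apply, hfu _ hs, hfu _ h1, hh0 _ hs, hh0 _ h1, map_add, map_smul]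
        rw [pow_succ', Module.End.mul_apply, Module.End.mul_apply]
      · have h2 : s + 1 = l := by omega
        rw [h2, hul, hu t s hs]
        simp only [LinearMap.add_apply, LinearMap.smul_apply, hfu _ hs, hh0 _ hs, map_add, map_smul, map_sub, hfz, hh1]
        rw [← Module.End.mul_apply V, ← Module.End.mul_apply V, ← pow_succ', h2, hδ', hful]
        simp; abel
    · change (f + t • h) ((U + t • A) ((S ^ s) (w 1))) = V ((f + t • h) ((S ^ s) (w 1)))
      rw [← hz t s, ← Module.End.mul_apply (U + t • A), ← pow_succ', hz, hz]
      simp only [LinearMap.add_apply, LinearMap.smul_apply, hfz, hh1, smul_zero, add_zero]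
      rw [pow_succ', Module.End.mul_apply]

end Move


section Retract
variable {k : Type u} [Field k]
variable {M : Type*} [AddCommGroup M] [Module k M]
variable {W : Type*} [AddCommGroup W] [Module k W]

def meas (m : ℕ) (U : Module.End k M) : ℕ :=
  ∑ s ∈ Finset.range m, Module.finrank k (LinearMap.range (U ^ s))

theorem retract_pow {U : Module.End k M} {U1 : Module.End k W} {i : W →ₗ[k] M} {P : M →ₗ[k] W}
    (hPi : ∀ w, P (i w) = w) (hi : i ∘ₗ U1 = U ∘ₗ i) (hP : P ∘ₗ U = U1 ∘ₗ P)
    (D : Module.End k W) (n : ℕ) (v : M) :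
    ((U + i ∘ₗ D ∘ₗ P) ^ n) v = i (((U1 + D) ^ n) (P v)) + (U ^ n) (v - i (P v)) := by
  induction n with
  | zero => simp
  | succ n ih =>
    have h1 : P ((U ^ n) (v - i (P v))) = 0 := by
      rw [inter_pow hP, map_sub, hPi, sub_self, map_zero]
    have h2 : ∀ w, U (i w) = i (U1 w) := fun w => (LinearMap.congr_fun hi w).symm
    rw [pow_succ', Module.End.mul_apply, ih, pow_succ', pow_succ', Module.End.mul_apply, Module.End.mul_apply]
    simp only [LinearMap.add_apply, LinearMap.comp_apply, map_add, h1, hPi, h2, map_zero, add_zero]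

theorem retract_rank_aux [FiniteDimensional k M] {U : Module.End k M} {U1 : Module.End k W} {i : W →ₗ[k] M} {P : M →ₗ[k] W}
    (hPi : ∀ w, P (i w) = w) (hi : i ∘ₗ U1 = U ∘ₗ i) (hP : P ∘ₗ U = U1 ∘ₗ P)
    (D : Module.End k W) (n : ℕ) :
    Module.finrank k (LinearMap.range ((U + i ∘ₗ D ∘ₗ P) ^ n)) =
    Module.finrank k (LinearMap.range ((U1 + D) ^ n)) +
      Module.finrank k (LinearMap.range ((U ^ n) ∘ₗ (LinearMap.id - i ∘ₗ P))) := by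
  have h1 : ∀ v, P ((U ^ n) (v - i (P v))) = 0 := by
    intro v
    rw [inter_pow hP, map_sub, hPi, sub_self, map_zero]
  have hinj : Function.Injective i := fun x y h => by rw [← hPi x, ← hPi y, h]
  have hr : LinearMap.range ((U + i ∘ₗ D ∘ₗ P) ^ n) =
      (LinearMap.range ((U1 + D) ^ n)).map i ⊔ LinearMap.range ((U ^ n) ∘ₗ (LinearMap.id - i ∘ₗ P)) := by
    apply le_antisymm
    · rintro _ ⟨v, rfl⟩
      rw [retract_pow hPi hi hP]
      refine Submodule.add_mem_sup ⟨_, ⟨_, rfl⟩, rfl⟩ ⟨v, ?_⟩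
      simp
    · apply sup_le
      · rintro _ ⟨_, ⟨w, rfl⟩, rfl⟩
        refine ⟨i w, ?_⟩
        rw [retract_pow hPi hi hP]
        simp [hPi]
      · rintro _ ⟨v, rfl⟩
        refine ⟨v - i (P v), ?_⟩
        rw [retract_pow hPi hi hP]
        simp [hPi]
  have hd : (LinearMap.range ((U1 + D) ^ n)).map i ⊓ LinearMap.range ((U ^ n) ∘ₗ (LinearMap.id - i ∘ₗ P)) = ⊥ := by
    rw [eq_bot_iff]
    rintro _ ⟨⟨w, hw, rfl⟩, ⟨v, hv⟩⟩
    have h2 := h1 v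
    have h3 : (U ^ n) (v - i (P v)) = i w := by simpa using hv
    rw [h3, hPi] at h2
    simp [h2]
  have := Submodule.finrank_sup_add_finrank_inf_eq ((LinearMap.range ((U1 + D) ^ n)).map i) (LinearMap.range ((U ^ n) ∘ₗ (LinearMap.id - i ∘ₗ P)))
  rw [hd, finrank_bot, add_zero] at this
  rw [hr, this]
  congr 1
  exact (LinearEquiv.finrank_eq (Submodule.equivMapOfInjective i hinj _)).symm

theorem retract_rank [FiniteDimensional k M] {U : Module.End k M} {U1 : Module.End k W} {i : W →ₗ[k] M} {P : M →ₗ[k] W}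
    (hPi : ∀ w, P (i w) = w) (hi : i ∘ₗ U1 = U ∘ₗ i) (hP : P ∘ₗ U = U1 ∘ₗ P)
    (D : Module.End k W) (n : ℕ) :
    Module.finrank k (LinearMap.range ((U + i ∘ₗ D ∘ₗ P) ^ n)) + Module.finrank k (LinearMap.range (U1 ^ n)) =
    Module.finrank k (LinearMap.range (U ^ n)) + Module.finrank k (LinearMap.range ((U1 + D) ^ n)) := by
  have h1 := retract_rank_aux hPi hi hP D n
  have h2 := retract_rank_aux hPi hi hP 0 n
  rw [LinearMap.zero_comp, LinearMap.comp_zero, add_zero, add_zero] at h2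
  omega

theorem retract_meas [FiniteDimensional k M] {U : Module.End k M} {U1 : Module.End k W} {i : W →ₗ[k] M} {P : M →ₗ[k] W}
    (hPi : ∀ w, P (i w) = w) (hi : i ∘ₗ U1 = U ∘ₗ i) (hP : P ∘ₗ U = U1 ∘ₗ P)
    (D : Module.End k W) {m a b : ℕ} (_ : 1 ≤ b) (hab : b ≤ a) (ham : a < m)
    {y₁ y₂ z₁ z₂ : W} (h1 : IsJ U1 ![a, b] ![y₁, y₂]) (h2 : IsJ (U1 + D) ![a + 1, b - 1] ![z₁, z₂])
    (hU : U ^ m = 0) :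
    (U + i ∘ₗ D ∘ₗ P) ^ m = 0 ∧ meas m U < meas m (U + i ∘ₗ D ∘ₗ P) := by
  have key : ∀ n, Module.finrank k (LinearMap.range ((U + i ∘ₗ D ∘ₗ P) ^ n)) + (a - n + (b - n)) =
      Module.finrank k (LinearMap.range (U ^ n)) + (a + 1 - n + (b - 1 - n)) := by
    intro n
    have := retract_rank hPi hi hP D n
    rw [h1.finrank_range, h2.finrank_range] at this
    simpa using this
  constructor
  · have h := key m
    rw [hU, LinearMap.range_zero, finrank_bot] at h
    have h' : Module.finrank k (LinearMap.range ((U + i ∘ₗ D ∘ₗ P) ^ m)) = 0 := by omega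
    exact LinearMap.range_eq_bot.1 (Submodule.finrank_eq_zero.1 h')
  · apply Finset.sum_lt_sum
    · intro n _
      have := key n
      omega
    · refine ⟨a, Finset.mem_range.2 ham, ?_⟩
      have := key a
      omega

end Retract


section KeyA
variable {k : Type u} [Field k]
variable {M : Type u} [AddCommGroup M] [Module k M] 
variable {N : Type u} [AddCommGroup N] [Module k N] 

def Good (m : ℕ) (U : Module.End k M) (V : Module.End k N) (f : M →ₗ[k] N) : Prop :=
  ∃ (A : Module.End k M) (B : Module.End k N) (g : M →ₗ[k] N), ∀ t : k,
    (U + t • A) ^ m = 0 ∧ (V + t • B) ^ m = 0 ∧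
    (f + t • g) ∘ₗ (U + t • A) = (V + t • B) ∘ₗ (f + t • g) ∧
    (t ≠ 0 → meas m U + meas m V < meas m (U + t • A) + meas m (V + t • B))

theorem good_of_delta [FiniteDimensional k M] [FiniteDimensional k N] {m : ℕ} {U : Module.End k M} {V : Module.End k N} {f : M →ₗ[k] N}
    (hU : U ^ m = 0) (hV : V ^ m = 0) (hf : f ∘ₗ U = V ∘ₗ f)
    {ι : Type} [DecidableEq ι] {α : ι → ℕ} {y : ι → M} (hJ : IsJ U α y)
    {i₁ i₂ : ι} (hne : i₁ ≠ i₂) {a b : ℕ} (ha : α i₁ = a) (hb : α i₂ = b) (hb1 : 1 ≤ b) (hab : b ≤ a) (ham : a < m)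
    {l : ℕ} (hbl : b ≤ l) (hla : l ≤ a) {κ : k} (hκ : κ ≠ 0) {δ : N}
    (hδ : (V ^ l) δ = (V ^ (b - 1)) (f (y i₂)) - κ • (V ^ (l - 1)) (f (y i₁))) :
    Good m U V f := by
  obtain ⟨W, _, _, _, U1, A1, y₁, y₂, h1, h2, h3⟩ := move (k := k) b l (a + b - l) hb1 hbl (by omega)
  rw [show l + (a + b - l) - b = a by omega] at h1 h2
  obtain ⟨i, hi, hiy⟩ := h1.lift U ![κ • y i₁, y i₂] (by
    intro j
    fin_cases j
    · change (U ^ a) (κ • y i₁) = 0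
      rw [map_smul, ← ha, hJ.kill, smul_zero]
    · change (U ^ b) (y i₂) = 0
      rw [← hb, hJ.kill])
  have hi1 : i y₁ = κ • y i₁ := hiy 0
  have hi2 : i y₂ = y i₂ := hiy 1
  obtain ⟨P, hP, hPy⟩ := hJ.lift U1 (fun j => if j = i₁ then κ⁻¹ • y₁ else if j = i₂ then y₂ else 0) (by
    intro j
    split_ifs with e1 e2
    · subst e1
      rw [map_smul, ha]
      have : (U1 ^ a) y₁ = 0 := h1.kill 0
      rw [this, smul_zero]
    · subst e2
      rw [hb]
      exact h1.kill 1
    · simp)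
  have hPi' : P ∘ₗ i = LinearMap.id := by
    apply h1.ext (V := U1)
    · rw [LinearMap.comp_assoc, hi, ← LinearMap.comp_assoc, hP, LinearMap.comp_assoc]
    · rfl
    · intro j
      fin_cases j
      · change P (i y₁) = y₁
        rw [hi1, map_smul, hPy, if_pos rfl, smul_smul, mul_inv_cancel₀ hκ, one_smul]
      · change P (i y₂) = y₂
        rw [hi2, hPy, if_neg (Ne.symm hne), if_pos rfl]
  have hPi : ∀ w, P (i w) = w := fun w => LinearMap.congr_fun hPi' w
  obtain ⟨h, hh⟩ := h3 N V (f ∘ₗ i) (by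
    rw [LinearMap.comp_assoc, hi, ← LinearMap.comp_assoc, hf, LinearMap.comp_assoc]) δ (by
    rw [hδ, LinearMap.comp_apply, LinearMap.comp_apply, hi1, hi2, map_smul, map_smul])
  refine ⟨i ∘ₗ A1 ∘ₗ P, 0, h ∘ₗ P, fun t => ?_⟩
  have hmm : t ≠ 0 → (U + t • (i ∘ₗ A1 ∘ₗ P)) ^ m = 0 ∧ meas m U < meas m (U + t • (i ∘ₗ A1 ∘ₗ P)) := by
    intro ht
    obtain ⟨z, hz⟩ := h2 t ht
    have := retract_meas hPi hi hP (t • A1) hb1 hab ham h1 hz hU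
    have e : i ∘ₗ (t • A1) ∘ₗ P = t • (i ∘ₗ A1 ∘ₗ P) := by
      rw [LinearMap.smul_comp, LinearMap.comp_smul]
    rwa [e] at this
  refine ⟨?_, ?_, ?_, ?_⟩
  · by_cases ht : t = 0
    · subst ht; simpa using hU
    · exact (hmm ht).1
  · simpa using hV
  · apply LinearMap.ext
    intro v
    have e1 := LinearMap.congr_fun (hh t) (P v)
    have e2 : f (U v) = V (f v) := LinearMap.congr_fun hf v
    have e3 : P (U v) = U1 (P v) := LinearMap.congr_fun hP v
    have e4 : ∀ w, f (U w) = V (f w) := fun w => LinearMap.congr_fun hf w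
    have e5 : ∀ w, U (i w) = i (U1 w) := fun w => (LinearMap.congr_fun hi w).symm
    simp only [LinearMap.comp_apply, LinearMap.add_apply, LinearMap.smul_apply, map_add, map_smul, ← e4, e5] at e1
    simp only [LinearMap.comp_apply, LinearMap.add_apply, LinearMap.smul_apply, map_add, map_smul, smul_zero, add_zero, e2, e3, hPi]
    rw [← sub_eq_zero] at e1 ⊢
    rw [← e1]
    module
  · intro ht
    have := (hmm ht).2
    simpa using this

theorem good_pair [FiniteDimensional k M] [FiniteDimensional k N] {m : ℕ} {U : Module.End k M} {V : Module.End k N} {f : M →ₗ[k] N}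
    (hU : U ^ m = 0) (hV : V ^ m = 0) (hf : f ∘ₗ U = V ∘ₗ f)
    {ι : Type} [DecidableEq ι] {α : ι → ℕ} {y : ι → M} (hJ : IsJ U α y)
    {ι' : Type} [DecidableEq ι'] {β : ι' → ℕ} {c : ι' → N} (hJV : IsJ V β c)
    {i₁ i₂ : ι} (hne : i₁ ≠ i₂) {j₁ j₂ : ι'} (hnej : j₁ ≠ j₂)
    {a b : ℕ} (ha : α i₁ = a) (hb : α i₂ = b) (ha' : β j₁ = a) (hb' : β j₂ = b)
    (hb1 : 1 ≤ b) (hab : b ≤ a) (ham : a < m) :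
    ∃ f₀ : M →ₗ[k] N, f₀ ∘ₗ U = V ∘ₗ f₀ ∧ ∃ S : Set k, S.Finite ∧ ∀ s ∉ S, Good m U V (f + s • f₀) := by
  obtain ⟨W, _, _, _, U1, A1, y₁, y₂, h1, h2, -⟩ := move (k := k) b a b hb1 hab le_rfl
  rw [show a + b - b = a by omega] at h1 h2
  obtain ⟨i, hi, hiy⟩ := h1.lift U ![y i₁, y i₂] (by
    intro j
    fin_cases j
    · change (U ^ a) (y i₁) = 0
      rw [← ha, hJ.kill]
    · change (U ^ b) (y i₂) = 0
      rw [← hb, hJ.kill])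
  have hi1 : i y₁ = y i₁ := hiy 0
  have hi2 : i y₂ = y i₂ := hiy 1
  obtain ⟨ρ, hρ, hρc⟩ := hJV.lift U1 (fun j => if j = j₁ then y₁ else if j = j₂ then y₂ else 0) (by
    intro j
    split_ifs with e1 e2
    · subst e1
      rw [ha']
      exact h1.kill 0
    · subst e2
      rw [hb']
      exact h1.kill 1
    · simp)
  obtain ⟨f₀, hf₀, hf₀y⟩ := hJ.lift V (fun j => if j = i₁ then c j₁ else if j = i₂ then c j₂ else 0) (by
    intro j
    split_ifs with e1 e2
    · subst e1
      rw [ha, ← ha', hJV.kill]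
    · subst e2
      rw [hb, ← hb', hJV.kill]
    · simp)
  have hid : ρ ∘ₗ f₀ ∘ₗ i = LinearMap.id := by
    apply h1.ext (V := U1)
    · apply LinearMap.ext
      intro w
      have e1 := LinearMap.congr_fun hi w
      have e2 := LinearMap.congr_fun hf₀ (i w)
      have e3 := LinearMap.congr_fun hρ (f₀ (i w))
      simp only [LinearMap.comp_apply] at e1 e2 e3 ⊢
      rw [e1, e2, e3]
    · rfl
    · intro j
      fin_cases j
      · change ρ (f₀ (i y₁)) = y₁
        rw [hi1, hf₀y, if_pos rfl, hρc, if_pos rfl]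
      · change ρ (f₀ (i y₂)) = y₂
        rw [hi2, hf₀y, if_neg (Ne.symm hne), if_pos rfl, hρc, if_neg (Ne.symm hnej), if_pos rfl]
  refine ⟨f₀, hf₀, {s | Module.End.HasEigenvalue (-(ρ ∘ₗ f ∘ₗ i) : Module.End k W) s}, ?_, ?_⟩
  · exact Module.End.finite_hasEigenvalue _
  intro s hs
  set F := f + s • f₀ with hF
  have hFU : F ∘ₗ U = V ∘ₗ F := by
    rw [hF, LinearMap.add_comp, LinearMap.comp_add, LinearMap.smul_comp, LinearMap.comp_smul, hf, hf₀]
  let T : Module.End k W := ρ ∘ₗ F ∘ₗ i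
  have hTinj : Function.Injective T := by
    rw [injective_iff_map_eq_zero]
    intro w hw
    by_contra hw0
    apply hs
    apply Module.End.hasEigenvalue_of_hasEigenvector (x := w)
    refine ⟨?_, hw0⟩
    rw [Module.End.mem_eigenspace_iff]
    have e1 : T w = ρ (f (i w)) + s • w := by
      have := LinearMap.congr_fun hid w
      simp only [LinearMap.comp_apply, LinearMap.id_apply] at this
      simp [T, hF, this]
    rw [e1] at hw
    simp only [LinearMap.neg_apply, LinearMap.comp_apply]
    exact neg_eq_of_add_eq_zero_right hw
  let Te : W ≃ₗ[k] W := LinearEquiv.ofInjectiveEndo T hTinj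
  have hTe : ∀ w, Te w = T w := fun w => rfl
  have hTU : ∀ w, T (U1 w) = U1 (T w) := by
    intro w
    have e1 := LinearMap.congr_fun hi w
    have e2 := LinearMap.congr_fun hFU (i w)
    have e3 := LinearMap.congr_fun hρ (F (i w))
    simp only [LinearMap.comp_apply] at e1 e2 e3
    simp only [T, LinearMap.comp_apply]
    rw [e1, e2, e3]
  let r : N →ₗ[k] W := (Te.symm : W →ₗ[k] W) ∘ₗ ρ
  have hr : r ∘ₗ V = U1 ∘ₗ r := by
    apply LinearMap.ext
    intro v
    apply Te.injective
    have e3 := LinearMap.congr_fun hρ v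
    simp only [LinearMap.comp_apply] at e3
    simp only [r, LinearMap.comp_apply, LinearEquiv.coe_coe, LinearEquiv.apply_symm_apply, e3]
    rw [hTe, hTU, ← hTe, LinearEquiv.apply_symm_apply]
  have hrF : ∀ w, r (F (i w)) = w := by
    intro w
    apply Te.injective
    simp only [r, LinearMap.comp_apply, LinearEquiv.coe_coe, LinearEquiv.apply_symm_apply]
    rfl
  have hrF' : (r ∘ₗ F) ∘ₗ U = U1 ∘ₗ (r ∘ₗ F) := by
    rw [LinearMap.comp_assoc, hFU, ← LinearMap.comp_assoc, hr, LinearMap.comp_assoc]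
  have hFi : (F ∘ₗ i) ∘ₗ U1 = V ∘ₗ (F ∘ₗ i) := by
    rw [LinearMap.comp_assoc, hi, ← LinearMap.comp_assoc, hFU, LinearMap.comp_assoc]
  refine ⟨i ∘ₗ A1 ∘ₗ (r ∘ₗ F), (F ∘ₗ i) ∘ₗ A1 ∘ₗ r, 0, fun t => ?_⟩
  have hmm : t ≠ 0 → (U + t • (i ∘ₗ A1 ∘ₗ (r ∘ₗ F))) ^ m = 0 ∧ meas m U < meas m (U + t • (i ∘ₗ A1 ∘ₗ (r ∘ₗ F))) := by
    intro ht
    obtain ⟨z, hz⟩ := h2 t ht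
    have := retract_meas (i := i) (P := r ∘ₗ F) hrF hi hrF' (t • A1) hb1 hab ham h1 hz hU
    rwa [LinearMap.smul_comp, LinearMap.comp_smul] at this
  have hmm' : t ≠ 0 → (V + t • ((F ∘ₗ i) ∘ₗ A1 ∘ₗ r)) ^ m = 0 ∧ meas m V < meas m (V + t • ((F ∘ₗ i) ∘ₗ A1 ∘ₗ r)) := by
    intro ht
    obtain ⟨z, hz⟩ := h2 t ht
    have := retract_meas (i := F ∘ₗ i) (P := r) hrF hFi hr (t • A1) hb1 hab ham h1 hz hV
    rwa [LinearMap.smul_comp, LinearMap.comp_smul] at this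
  refine ⟨?_, ?_, ?_, ?_⟩
  · by_cases ht : t = 0
    · subst ht; simpa using hU
    · exact (hmm ht).1
  · by_cases ht : t = 0
    · subst ht; simpa using hV
    · exact (hmm' ht).1
  · rw [smul_zero, add_zero]
    apply LinearMap.ext
    intro v
    change F (U v + t • i (A1 (r (F v)))) = V (F v) + t • F (i (A1 (r (F v))))
    rw [map_add, map_smul, show F (U v) = V (F v) from LinearMap.congr_fun hFU v]
  · intro ht
    exact add_lt_add (hmm ht).2 (hmm' ht).2

theorem IsJ.repr_pow {ι' : Type} [DecidableEq ι'] {V : Module.End k N} {β : ι' → ℕ} {c : ι' → N} (h : IsJ V β c)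
    (r : ℕ) (n : N) (j : ι') (s : ℕ) (hs : s < β j) :
    h.basis.repr ((V ^ r) n) ⟨j, ⟨s, hs⟩⟩ =
      if r ≤ s then h.basis.repr n ⟨j, ⟨s - r, by omega⟩⟩ else 0 := by
  have key : h.basis.coord ⟨j, ⟨s, hs⟩⟩ ∘ₗ (V ^ r) =
      if r ≤ s then h.basis.coord ⟨j, ⟨s - r, by omega⟩⟩ else 0 := by
    apply h.basis.ext
    rintro ⟨j', s', hs'⟩
    rw [LinearMap.comp_apply]
    have e0 : (V ^ r) (h.basis ⟨j', ⟨s', hs'⟩⟩) = (V ^ (r + s')) (c j') := by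
      rw [h.basis_apply, pow_add, Module.End.mul_apply]
    rw [e0]
    rcases Nat.lt_or_ge (r + s') (β j') with h1 | h1
    · have e1 := h.basis_apply j' ⟨r + s', h1⟩
      simp only at e1
      rw [← e1, Module.Basis.coord_apply, Module.Basis.repr_self, Finsupp.single_apply]
      split_ifs with h2 h3 h3
      · rw [Module.Basis.coord_apply, Module.Basis.repr_self, Finsupp.single_apply, if_pos]
        obtain ⟨rfl, h4⟩ := Sigma.mk.inj_iff.1 h2
        have h4 := congrArg Fin.val (eq_of_heq h4)
        simp only at h4
        congr 2
        omega
      · exfalso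
        obtain ⟨rfl, h4⟩ := Sigma.mk.inj_iff.1 h2
        have h4 := congrArg Fin.val (eq_of_heq h4)
        simp only at h4
        omega
      · rw [Module.Basis.coord_apply, Module.Basis.repr_self, Finsupp.single_apply, if_neg]
        intro h5
        apply h2
        obtain ⟨rfl, h4⟩ := Sigma.mk.inj_iff.1 h5
        have h4 := congrArg Fin.val (eq_of_heq h4)
        simp only at h4
        congr 2
        omega
      · rfl
    · rw [h.kill' j' _ h1, map_zero]
      split_ifs with h3
      · rw [Module.Basis.coord_apply, Module.Basis.repr_self, Finsupp.single_apply, if_neg]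
        intro h5
        obtain ⟨rfl, h4⟩ := Sigma.mk.inj_iff.1 h5
        have h4 := congrArg Fin.val (eq_of_heq h4)
        simp only at h4
        omega
      · rfl
  have := LinearMap.congr_fun key n
  rw [LinearMap.comp_apply, Module.Basis.coord_apply] at this
  rw [this]
  split_ifs <;> rfl

theorem IsJ.mem_range {ι' : Type} [Fintype ι'] {V : Module.End k N} {β : ι' → ℕ} {c : ι' → N} (h : IsJ V β c)
    (l : ℕ) (n : N) (hn : ∀ j s, ∀ hs : s < β j, s < l → h.basis.repr n ⟨j, ⟨s, hs⟩⟩ = 0) :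
    ∃ δ, (V ^ l) δ = n := by
  change n ∈ LinearMap.range (V ^ l)
  rw [← h.basis.sum_repr n]
  refine Submodule.sum_mem _ ?_
  rintro ⟨j, s, hs⟩ _
  rcases Nat.lt_or_ge s l with h1 | h1
  · rw [hn j s hs h1, zero_smul]; exact Submodule.zero_mem _
  · refine Submodule.smul_mem _ _ ⟨(V ^ (s - l)) (c j), ?_⟩
    rw [h.basis_apply, ← Module.End.mul_apply, ← pow_add]
    congr 2
    simp only
    omega

end KeyA


section KeyB
variable {k : Type u} [Field k]
variable {M : Type u} [AddCommGroup M] [Module k M] [FiniteDimensional k M]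
variable {N : Type u} [AddCommGroup N] [Module k N] [FiniteDimensional k N]

theorem good_of_coords {m : ℕ} {U : Module.End k M} {V : Module.End k N} {f : M →ₗ[k] N}
    (hU : U ^ m = 0) (hV : V ^ m = 0) (hf : f ∘ₗ U = V ∘ₗ f)
    {ι : Type} [DecidableEq ι] {α : ι → ℕ} {y : ι → M} (hJ : IsJ U α y)
    {ι' : Type} [Fintype ι'] [DecidableEq ι'] {β : ι' → ℕ} {c : ι' → N} (hJV : IsJ V β c)
    {i₁ i₂ : ι} (hne : i₁ ≠ i₂) {a b : ℕ} (ha : α i₁ = a) (hb : α i₂ = b) (hb1 : 1 ≤ b) (hab : b ≤ a) (ham : a < m)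
    {l : ℕ} (hbl : b ≤ l) (hla : l ≤ a) {κ : k} (hκ : κ ≠ 0)
    (hl : ∀ j, b ≤ β j → β j ≤ a → ∃ hj : β j = l,
      hJV.basis.repr (f (y i₂)) ⟨j, ⟨l - b, by omega⟩⟩ = κ * hJV.basis.repr (f (y i₁)) ⟨j, ⟨0, by omega⟩⟩)
    (hl' : l = a ∨ ∃ j, β j = l) :
    Good m U V f := by
  have hn2 : ∀ j s, ∀ hs : s < β j, s + b < β j → hJV.basis.repr (f (y i₂)) ⟨j, ⟨s, hs⟩⟩ = 0 := by
    intro j s hs hsb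
    have h0 : (V ^ b) (f (y i₂)) = 0 := by rw [← inter_pow hf, ← hb, hJ.kill, map_zero]
    have h1 := hJV.repr_pow b (f (y i₂)) j (s + b) hsb
    rw [h0, if_pos (by omega)] at h1
    simp only [Nat.add_sub_cancel] at h1
    rw [← h1]; simp
  have hn1 : ∀ j s, ∀ hs : s < β j, s + a < β j → hJV.basis.repr (f (y i₁)) ⟨j, ⟨s, hs⟩⟩ = 0 := by
    intro j s hs hsb
    have h0 : (V ^ a) (f (y i₁)) = 0 := by rw [← inter_pow hf, ← ha, hJ.kill, map_zero]
    have h1 := hJV.repr_pow a (f (y i₁)) j (s + a) hsb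
    rw [h0, if_pos (by omega)] at h1
    simp only [Nat.add_sub_cancel] at h1
    rw [← h1]; simp
  obtain ⟨δ, hδ⟩ := hJV.mem_range l ((V ^ (b - 1)) (f (y i₂)) - κ • (V ^ (l - 1)) (f (y i₁))) (by
    intro j s hs hsl
    rw [map_sub, map_smul, Finsupp.sub_apply, Finsupp.smul_apply, hJV.repr_pow, hJV.repr_pow, smul_eq_mul]
    by_cases hjJ : b ≤ β j ∧ β j ≤ a
    · obtain ⟨hj, he⟩ := hl j hjJ.1 hjJ.2
      by_cases hs1 : s + 1 = l
      · rw [if_pos (by omega), if_pos (by omega)]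
        have e1 : s - (b - 1) = l - b := by omega
        have e2 : s - (l - 1) = 0 := by omega
        simp only [e1, e2]
        rw [he, sub_self]
      · rw [if_neg (by omega : ¬ (l - 1 ≤ s)), mul_zero, sub_zero]
        split_ifs with h1
        · exact hn2 _ _ _ (by omega)
        · rfl
    · have z1 : (if l - 1 ≤ s then hJV.basis.repr (f (y i₁)) ⟨j, ⟨s - (l - 1), by omega⟩⟩ else 0) = 0 := by
        split_ifs with h1
        · by_cases h2 : a < β j
          · exact hn1 _ _ _ (by omega)
          · exfalso; omega
        · rfl
      have z2 : (if b - 1 ≤ s then hJV.basis.repr (f (y i₂)) ⟨j, ⟨s - (b - 1), by omega⟩⟩ else 0) = 0 := by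
        split_ifs with h1
        · exact hn2 _ _ _ (by omega)
        · rfl
      rw [z1, z2, mul_zero, sub_zero])
  exact good_of_delta hU hV hf hJ hne ha hb hb1 hab ham hbl hla hκ hδ

theorem keyA {m : ℕ} {U : Module.End k M} {V : Module.End k N} {f : M →ₗ[k] N}
    (hU : U ^ m = 0) (hV : V ^ m = 0) (hf : f ∘ₗ U = V ∘ₗ f)
    {ι : Type} [DecidableEq ι] {α : ι → ℕ} {y : ι → M} (hJ : IsJ U α y)
    {ι' : Type} [Fintype ι'] [DecidableEq ι'] {β : ι' → ℕ} {c : ι' → N} (hJV : IsJ V β c)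
    {i₁ i₂ : ι} (hne : i₁ ≠ i₂) {a b : ℕ} (ha : α i₁ = a) (hb : α i₂ = b) (hb1 : 1 ≤ b) (hab : b ≤ a) (ham : a < m)
    (hgap : ∀ j₁ j₂, j₁ ≠ j₂ → β j₁ < m → 1 ≤ β j₂ → β j₂ ≤ β j₁ → a - b ≤ β j₁ - β j₂) :
    ∃ f₀ : M →ₗ[k] N, f₀ ∘ₗ U = V ∘ₗ f₀ ∧ ∃ S : Set k, S.Finite ∧ ∀ s ∉ S, Good m U V (f + s • f₀) := by
  by_cases hJ0 : ∃ j, b ≤ β j ∧ β j ≤ a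
  swap
  · refine ⟨0, by simp, ∅, Set.finite_empty, fun s _ => ?_⟩
    rw [smul_zero, add_zero]
    refine good_of_coords hU hV hf hJ hJV hne ha hb hb1 hab ham hab le_rfl one_ne_zero ?_ (Or.inl rfl)
    intro j h1 h2
    exact absurd ⟨j, h1, h2⟩ hJ0
  obtain ⟨j₀, hj1, hj2⟩ := hJ0
  by_cases hJ1 : ∃ j, j ≠ j₀ ∧ b ≤ β j ∧ β j ≤ a
  · obtain ⟨j, hne', h1, h2⟩ := hJ1
    rcases le_total (β j) (β j₀) with h | h
    · have := hgap j₀ j hne'.symm (by omega) (by omega) h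
      exact good_pair hU hV hf hJ hJV hne hne'.symm ha hb (by omega) (by omega) hb1 hab ham
    · have := hgap j j₀ hne' (by omega) (by omega) h
      exact good_pair hU hV hf hJ hJV hne hne' ha hb (by omega) (by omega) hb1 hab ham
  · obtain ⟨f₀, hf₀, hf₀y⟩ := hJ.lift V (fun i => if i = i₁ then c j₀ else if i = i₂ then (V ^ (β j₀ - b)) (c j₀) else 0) (by
      intro j
      split_ifs with e1 e2
      · subst e1
        rw [ha, hJV.kill' _ _ hj2]
      · subst e2
        rw [hb, ← Module.End.mul_apply, ← pow_add, hJV.kill' _ _ (by omega)]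
      · simp)
    let p := hJV.basis.repr (f (y i₁)) ⟨j₀, ⟨0, by omega⟩⟩
    let q := hJV.basis.repr (f (y i₂)) ⟨j₀, ⟨β j₀ - b, by omega⟩⟩
    refine ⟨f₀, hf₀, {-p, -q}, by simp, fun s hs => ?_⟩
    simp only [Set.mem_insert_iff, Set.mem_singleton_iff, not_or] at hs
    have hs1 : p + s ≠ 0 := fun h => hs.1 (eq_neg_of_add_eq_zero_right h)
    have hs2 : q + s ≠ 0 := fun h => hs.2 (eq_neg_of_add_eq_zero_right h)
    have hF : (f + s • f₀) ∘ₗ U = V ∘ₗ (f + s • f₀) := by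
      rw [LinearMap.add_comp, LinearMap.comp_add, LinearMap.smul_comp, LinearMap.comp_smul, hf, hf₀]
    have hp : hJV.basis.repr ((f + s • f₀) (y i₁)) ⟨j₀, ⟨0, by omega⟩⟩ = p + s := by
      have e1 := hJV.basis_apply j₀ ⟨0, by omega⟩
      simp only [pow_zero, Module.End.one_apply] at e1
      rw [LinearMap.add_apply, LinearMap.smul_apply, hf₀y, if_pos rfl, map_add, map_smul, ← e1]
      simp [p]
    have hq : hJV.basis.repr ((f + s • f₀) (y i₂)) ⟨j₀, ⟨β j₀ - b, by omega⟩⟩ = q + s := by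
      have e1 := hJV.basis_apply j₀ ⟨β j₀ - b, by omega⟩
      simp only at e1
      rw [LinearMap.add_apply, LinearMap.smul_apply, hf₀y, if_neg hne.symm, if_pos rfl, map_add, map_smul, ← e1]
      simp [q]
    refine good_of_coords hU hV hF hJ hJV hne ha hb hb1 hab ham hj1 hj2 (κ := (q + s) / (p + s)) (div_ne_zero hs2 hs1) ?_ (Or.inr ⟨j₀, rfl⟩)
    intro j h1 h2
    have hj : j = j₀ := by
      by_contra h
      exact hJ1 ⟨j, h, h1, h2⟩
    subst hj
    refine ⟨rfl, ?_⟩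
    rw [hp, hq, div_mul_cancel₀ _ hs1]

end KeyB


section MatrixLevel
variable {k : Type u} [Field k]

theorem isJ_transpose {d : ℕ} {V : Matrix (Fin d) (Fin d) k} {ι : Type} [Fintype ι] [DecidableEq ι] {β : ι → ℕ}
    {c : ι → (Fin d → k)} (h : IsJ (Matrix.toLin' V) β c) (hpos : ∀ i, 0 < β i) :
    ∃ c' : ι → (Fin d → k), IsJ (Matrix.toLin' V.transpose) β c' := by
  let φ := dotProductEquiv k (Fin d)
  set T := Matrix.toLin' V.transpose with hT
  set V' := Matrix.toLin' V with hV'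
  have h1 : ∀ w v, φ (T w) v = φ w (V' v) := by
    intro w v
    simp only [φ, dotProductEquiv_apply_apply, hT, hV', Matrix.toLin'_apply]
    rw [Matrix.mulVec_transpose, ← Matrix.dotProduct_mulVec]
  have hn : ∀ n w v, φ ((T ^ n) w) v = φ w ((V' ^ n) v) := by
    intro n
    induction n with
    | zero => intro w v; simp
    | succ n ih =>
      intro w v
      rw [pow_succ', Module.End.mul_apply, h1, ih, pow_succ, Module.End.mul_apply]
  let y : ι → (Fin d → k) := fun j => φ.symm (h.basis.coord ⟨j, ⟨β j - 1, by have := hpos j; omega⟩⟩)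
  refine ⟨y, IsJ.of_gen ?_ ?_ ?_⟩
  · intro j
    apply φ.injective
    apply LinearMap.ext
    intro v
    rw [hn, map_zero, LinearMap.zero_apply]
    simp only [y, LinearEquiv.apply_symm_apply, Module.Basis.coord_apply]
    rw [h.repr_pow, if_neg]
    have := hpos j
    omega
  · intro X hX hy
    have hXn : ∀ n, ∀ v ∈ X, (T ^ n) v ∈ X := by
      intro n
      induction n with
      | zero => intro v hv; simpa
      | succ n ih => intro v hv; rw [pow_succ', Module.End.mul_apply]; exact hX _ (ih v hv)
    have hc : ∀ p, φ.symm (h.basis.coord p) ∈ X := by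
      rintro ⟨j, s, hs⟩
      have := hXn (β j - 1 - s) _ (hy j)
      convert this using 1
      apply φ.injective
      apply LinearMap.ext
      intro v
      rw [hn]
      simp only [y, LinearEquiv.apply_symm_apply, Module.Basis.coord_apply]
      rw [h.repr_pow, if_pos (by omega)]
      congr 3
      omega
    rw [eq_top_iff]
    intro w _
    have hw : w = φ.symm (φ w) := by simp
    rw [hw, ← h.basis.dualBasis.sum_repr (φ w), map_sum]
    refine Submodule.sum_mem _ fun p _ => ?_
    rw [map_smul]
    refine Submodule.smul_mem _ _ ?_
    rw [Module.Basis.coe_dualBasis]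
    exact hc p
  · rw [h.finrank_eq]

def InH (m : ℕ) {d e : ℕ} (U : Matrix (Fin e) (Fin e) k) (V : Matrix (Fin d) (Fin d) k) (f : Matrix (Fin d) (Fin e) k) : Prop :=
  U ^ m = 0 ∧ V ^ m = 0 ∧ f * U = V * f

def measM (m : ℕ) {d : ℕ} (U : Matrix (Fin d) (Fin d) k) : ℕ := ∑ s ∈ Finset.range m, (U ^ s).rank

theorem meas_toLin' (m : ℕ) {d : ℕ} (U : Matrix (Fin d) (Fin d) k) : meas m (Matrix.toLin' U) = measM m U := by
  unfold meas measM
  refine Finset.sum_congr rfl fun s _ => ?_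
  rw [← Matrix.toLin'_pow]
  rfl

theorem measM_transpose (m : ℕ) {d : ℕ} (U : Matrix (Fin d) (Fin d) k) : measM m U.transpose = measM m U := by
  unfold measM
  refine Finset.sum_congr rfl fun s _ => ?_
  rw [← Matrix.transpose_pow, Matrix.rank_transpose]

theorem measM_le (m : ℕ) {d : ℕ} (U : Matrix (Fin d) (Fin d) k) : measM m U ≤ m * d := by
  unfold measM
  calc _ ≤ ∑ s ∈ Finset.range m, d := Finset.sum_le_sum fun s _ => (Matrix.rank_le_width _)
    _ = m * d := by simp

def GoodM (m : ℕ) {d e : ℕ} (U : Matrix (Fin e) (Fin e) k) (V : Matrix (Fin d) (Fin d) k) (f : Matrix (Fin d) (Fin e) k) : Prop :=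
  ∃ (A : Matrix (Fin e) (Fin e) k) (B : Matrix (Fin d) (Fin d) k) (g : Matrix (Fin d) (Fin e) k), ∀ t : k,
    InH m (U + t • A) (V + t • B) (f + t • g) ∧
    (t ≠ 0 → measM m U + measM m V < measM m (U + t • A) + measM m (V + t • B))

theorem InH.transpose {m d e : ℕ} {U : Matrix (Fin e) (Fin e) k} {V : Matrix (Fin d) (Fin d) k} {f : Matrix (Fin d) (Fin e) k}
    (h : InH m U V f) : InH m V.transpose U.transpose f.transpose := by
  refine ⟨?_, ?_, ?_⟩
  · rw [← Matrix.transpose_pow, h.2.1, Matrix.transpose_zero]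
  · rw [← Matrix.transpose_pow, h.1, Matrix.transpose_zero]
  · rw [← Matrix.transpose_mul, ← Matrix.transpose_mul, h.2.2]

theorem GoodM.transpose {m d e : ℕ} {U : Matrix (Fin e) (Fin e) k} {V : Matrix (Fin d) (Fin d) k} {f : Matrix (Fin d) (Fin e) k}
    (h : GoodM m U V f) : GoodM m V.transpose U.transpose f.transpose := by
  obtain ⟨A, B, g, h⟩ := h
  refine ⟨B.transpose, A.transpose, g.transpose, fun t => ?_⟩
  obtain ⟨h1, h2⟩ := h t
  rw [← Matrix.transpose_smul, ← Matrix.transpose_smul, ← Matrix.transpose_smul, ← Matrix.transpose_add,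
    ← Matrix.transpose_add, ← Matrix.transpose_add]
  refine ⟨h1.transpose, fun ht => ?_⟩
  simp only [measM_transpose]
  have := h2 ht
  omega

theorem Good.toM {m d e : ℕ} {U : Matrix (Fin e) (Fin e) k} {V : Matrix (Fin d) (Fin d) k} {f : Matrix (Fin d) (Fin e) k}
    (h : Good m (Matrix.toLin' U) (Matrix.toLin' V) (Matrix.toLin' f)) : GoodM m U V f := by
  obtain ⟨A, B, g, h⟩ := h
  obtain ⟨A, rfl⟩ := Matrix.toLin'.surjective A
  obtain ⟨B, rfl⟩ := Matrix.toLin'.surjective B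
  obtain ⟨g, rfl⟩ := Matrix.toLin'.surjective g
  refine ⟨A, B, g, fun t => ?_⟩
  obtain ⟨h1, h2, h3, h4⟩ := h t
  simp only [← map_smul, ← map_add, ← Matrix.toLin'_pow, ← Matrix.toLin'_mul, meas_toLin'] at h1 h2 h3 h4
  refine ⟨⟨?_, ?_, ?_⟩, h4⟩
  · exact Matrix.toLin'.injective (by rw [h1, map_zero])
  · exact Matrix.toLin'.injective (by rw [h2, map_zero])
  · exact Matrix.toLin'.injective h3

theorem keyM {m d e : ℕ} {U : Matrix (Fin e) (Fin e) k} {V : Matrix (Fin d) (Fin d) k} {f : Matrix (Fin d) (Fin e) k}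
    (hH : InH m U V f)
    {ι : Type} [DecidableEq ι] {α : ι → ℕ} {y : ι → (Fin e → k)} (hJ : IsJ (Matrix.toLin' U) α y)
    {ι' : Type} [Fintype ι'] [DecidableEq ι'] {β : ι' → ℕ} {c : ι' → (Fin d → k)} (hJV : IsJ (Matrix.toLin' V) β c)
    {i₁ i₂ : ι} (hne : i₁ ≠ i₂) (hb1 : 1 ≤ α i₂) (hab : α i₂ ≤ α i₁) (ham : α i₁ < m)
    (hgap : ∀ j₁ j₂, j₁ ≠ j₂ → β j₁ < m → 1 ≤ β j₂ → β j₂ ≤ β j₁ → α i₁ - α i₂ ≤ β j₁ - β j₂) :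
    ∃ f₀ : Matrix (Fin d) (Fin e) k, f₀ * U = V * f₀ ∧ ∃ S : Set k, S.Finite ∧ ∀ s ∉ S, GoodM m U V (f + s • f₀) := by
  obtain ⟨f₀, h0, S, hS, h⟩ := keyA (m := m) (U := Matrix.toLin' U) (V := Matrix.toLin' V) (f := Matrix.toLin' f)
    (by rw [← Matrix.toLin'_pow, hH.1, map_zero]) (by rw [← Matrix.toLin'_pow, hH.2.1, map_zero])
    (by rw [← Matrix.toLin'_mul, ← Matrix.toLin'_mul, hH.2.2]) hJ hJV hne rfl rfl hb1 hab ham hgap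
  obtain ⟨f₀, rfl⟩ := Matrix.toLin'.surjective f₀
  refine ⟨f₀, ?_, S, hS, fun s hs => Good.toM ?_⟩
  · apply Matrix.toLin'.injective
    rw [Matrix.toLin'_mul, Matrix.toLin'_mul, h0]
  · rw [map_add, map_smul]
    exact h s hs

def Terminal (m : ℕ) {d : ℕ} (U : Matrix (Fin d) (Fin d) k) : Prop :=
  ∃ (ι : Type) (_ : Fintype ι) (_ : DecidableEq ι) (a : ι → ℕ) (y : ι → (Fin d → k)),
    IsJ (Matrix.toLin' U) a y ∧ (∀ i, 0 < a i ∧ a i ≤ m) ∧ ∀ i j, a i < m → a j < m → i = j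

theorem stepM {m d e : ℕ} {U : Matrix (Fin e) (Fin e) k} {V : Matrix (Fin d) (Fin d) k} {f : Matrix (Fin d) (Fin e) k}
    (hH : InH m U V f) (hT : ¬ (Terminal m U ∧ Terminal m V)) :
    ∃ f₀ : Matrix (Fin d) (Fin e) k, f₀ * U = V * f₀ ∧ ∃ S : Set k, S.Finite ∧ ∀ s ∉ S, GoodM m U V (f + s • f₀) := by
  obtain ⟨ι, _, _, α, y, hJ, hα⟩ := exists_isJ (Matrix.toLin' U) m (by rw [← Matrix.toLin'_pow, hH.1, map_zero])
  obtain ⟨ι', _, _, β, c, hJV, hβ⟩ := exists_isJ (Matrix.toLin' V) m (by rw [← Matrix.toLin'_pow, hH.2.1, map_zero])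
  let G : ℕ → Prop := fun g => (∃ i j, i ≠ j ∧ α i < m ∧ α j ≤ α i ∧ α i - α j = g) ∨
    (∃ i j, i ≠ j ∧ β i < m ∧ β j ≤ β i ∧ β i - β j = g)
  have hG : ∃ g, G g := by
    by_contra hG
    push Not at hG
    apply hT
    constructor
    · refine ⟨ι, inferInstance, inferInstance, α, y, hJ, hα, ?_⟩
      intro i j hi hj
      by_contra hij
      rcases le_total (α j) (α i) with h | h
      · exact hG _ (Or.inl ⟨i, j, hij, hi, h, rfl⟩)
      · exact hG _ (Or.inl ⟨j, i, Ne.symm hij, hj, h, rfl⟩)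
    · refine ⟨ι', inferInstance, inferInstance, β, c, hJV, hβ, ?_⟩
      intro i j hi hj
      by_contra hij
      rcases le_total (β j) (β i) with h | h
      · exact hG _ (Or.inr ⟨i, j, hij, hi, h, rfl⟩)
      · exact hG _ (Or.inr ⟨j, i, Ne.symm hij, hj, h, rfl⟩)
  classical
  have hmin : ∀ g, G g → Nat.find hG ≤ g := fun g hg => Nat.find_min' hG hg
  rcases Nat.find_spec hG with ⟨i, j, hij, h1, h2, h3⟩ | ⟨i, j, hij, h1, h2, h3⟩
  · apply keyM hH hJ hJV hij (hα j).1 h2 h1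
    intro j₁ j₂ hj hj1 _ hj2
    rw [h3]
    exact hmin _ (Or.inr ⟨j₁, j₂, hj, hj1, hj2, rfl⟩)
  · obtain ⟨y', hJ'⟩ := isJ_transpose hJ (fun i => (hα i).1)
    obtain ⟨c', hJV'⟩ := isJ_transpose hJV (fun i => (hβ i).1)
    obtain ⟨f₀, hf₀, S, hS, h⟩ := keyM hH.transpose hJV' hJ' hij (hβ j).1 h2 h1 (by
      intro j₁ j₂ hj hj1 _ hj2
      rw [h3]
      exact hmin _ (Or.inl ⟨j₁, j₂, hj, hj1, hj2, rfl⟩))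
    refine ⟨f₀.transpose, ?_, S, hS, fun s hs => ?_⟩
    · apply Matrix.transpose_injective
      rw [Matrix.transpose_mul, Matrix.transpose_mul, Matrix.transpose_transpose, hf₀]
    · have := (h s hs).transpose
      simpa [Matrix.transpose_add, Matrix.transpose_smul] using this

end MatrixLevel


section Terminal
variable {k : Type u} [Field k]

theorem term_card {ι : Type} [Fintype ι] [DecidableEq ι] {m e : ℕ} (hm : 1 ≤ m) {a : ι → ℕ} (ha : ∀ i, 0 < a i ∧ a i ≤ m)
    (hu : ∀ i j, a i < m → a j < m → i = j) (hs : ∑ i, a i = e) (v : ℕ) :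
    (Finset.univ.filter (fun i => a i = v)).card =
      if v = m then e / m else if v = 0 then 0 else if v = e % m then 1 else 0 := by
  set n := (Finset.univ.filter (fun i => a i = m)).card with hn
  have h1 : ∑ i ∈ Finset.univ.filter (fun i => a i = m), a i = n * m := by
    rw [Finset.sum_congr rfl (g := fun _ => m) (by intro i hi; exact (Finset.mem_filter.1 hi).2)]
    simp [hn]
  have h2 := Finset.sum_filter_add_sum_filter_not Finset.univ (fun i => a i = m) a
  rw [hs, h1] at h2
  have hcard : (Finset.univ.filter (fun i => ¬ a i = m)).card ≤ 1 := by
    rw [Finset.card_le_one]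
    intro i hi j hj
    rw [Finset.mem_filter] at hi hj
    exact hu i j (lt_of_le_of_ne (ha i).2 hi.2) (lt_of_le_of_ne (ha j).2 hj.2)
  rcases Nat.le_one_iff_eq_zero_or_eq_one.1 hcard with h0 | h0
  · rw [Finset.card_eq_zero] at h0
    rw [h0, Finset.sum_empty, add_zero] at h2
    have hall : ∀ i, a i = m := by
      intro i
      by_contra hi
      have : i ∈ Finset.univ.filter (fun i => ¬ a i = m) := by simp [hi]
      rw [h0] at this
      simp at this
    have hem : e % m = 0 := by rw [← h2]; simp
    have hdiv : e / m = n := by rw [← h2]; exact Nat.mul_div_cancel _ hm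
    by_cases hv : v = m
    · subst hv; rw [if_pos rfl, hdiv]
    · rw [if_neg hv, hem]
      have : Finset.univ.filter (fun i => a i = v) = ∅ := by
        ext i; simp [hall i, Ne.symm hv]
      rw [this]
      split_ifs <;> simp
  · rw [Finset.card_eq_one] at h0
    obtain ⟨i₀, h0⟩ := h0
    rw [h0, Finset.sum_singleton] at h2
    have hi₀ : a i₀ ≠ m := by
      have : i₀ ∈ Finset.univ.filter (fun i => ¬ a i = m) := by rw [h0]; simp
      simpa using this
    have hlt : a i₀ < m := lt_of_le_of_ne (ha i₀).2 hi₀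
    have hall : ∀ i, i ≠ i₀ → a i = m := by
      intro i hi
      by_contra hi'
      have : i ∈ Finset.univ.filter (fun i => ¬ a i = m) := by simp [hi']
      rw [h0] at this
      simp at this
      exact hi this
    have hem : e % m = a i₀ := by
      rw [← h2, Nat.add_comm, Nat.add_mul_mod_self_right, Nat.mod_eq_of_lt hlt]
    have hdiv : e / m = n := by
      rw [← h2, Nat.add_comm, Nat.add_mul_div_right _ _ hm, Nat.div_eq_of_lt hlt, zero_add]
    by_cases hv : v = m
    · subst hv; rw [if_pos rfl, hdiv]
    · rw [if_neg hv, hem]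
      by_cases hv2 : v = a i₀
      · rw [if_neg (by have := (ha i₀).1; omega), if_pos hv2, Finset.card_eq_one]
        refine ⟨i₀, ?_⟩
        ext i
        simp only [Finset.mem_filter, Finset.mem_univ, true_and, Finset.mem_singleton]
        constructor
        · intro h
          by_contra hi
          have := hall i hi
          omega
        · rintro rfl; exact hv2.symm
      · have : Finset.univ.filter (fun i => a i = v) = ∅ := by
          ext i
          simp only [Finset.mem_filter, Finset.mem_univ, true_and, Finset.notMem_empty, iff_false]
          intro h
          by_cases hi : i = i₀
          · subst hi; exact hv2 h.symm
          · have := hall i hi; omega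
        rw [this, if_neg hv2]
        split_ifs <;> simp

theorem terminal_conj {m e : ℕ} (hm : 1 ≤ m) {U U' : Matrix (Fin e) (Fin e) k} (h : Terminal m U) (h' : Terminal m U') :
    ∃ g h : Matrix (Fin e) (Fin e) k, g * h = 1 ∧ h * g = 1 ∧ U' = g * U * h := by
  obtain ⟨ι, _, _, a, y, hJ, ha, hu⟩ := h
  obtain ⟨ι', _, _, a', y', hJ', ha', hu'⟩ := h'
  have hd : ∑ i, a i = e := by rw [← hJ.finrank_eq]; simp
  have hd' : ∑ i, a' i = e := by rw [← hJ'.finrank_eq]; simp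
  have hσ : ∀ v : ℕ, Nonempty ({i // a i = v} ≃ {j // a' j = v}) := by
    intro v
    rw [← Fintype.card_eq, Fintype.card_subtype, Fintype.card_subtype, term_card hm ha hu hd v, term_card hm ha' hu' hd' v]
  let σ : ι ≃ ι' := Equiv.ofFiberEquiv (fun v => (hσ v).some)
  have hσa : ∀ i, a' (σ i) = a i := fun i => Equiv.ofFiberEquiv_map _ i
  obtain ⟨g, hg, hgy⟩ := hJ.lift (Matrix.toLin' U') (fun i => y' (σ i)) (fun i => by rw [← hσa, hJ'.kill])
  obtain ⟨h, hh, hhy⟩ := hJ'.lift (Matrix.toLin' U) (fun j => y (σ.symm j)) (fun j => by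
    have := hσa (σ.symm j)
    rw [Equiv.apply_symm_apply] at this
    rw [this, hJ.kill])
  have hgh : g ∘ₗ h = LinearMap.id := by
    apply hJ'.ext (V := Matrix.toLin' U')
    · rw [LinearMap.comp_assoc, hh, ← LinearMap.comp_assoc, hg, LinearMap.comp_assoc]
    · rfl
    · intro j
      rw [LinearMap.comp_apply, hhy, hgy, Equiv.apply_symm_apply, LinearMap.id_apply]
  have hhg : h ∘ₗ g = LinearMap.id := by
    apply hJ.ext (V := Matrix.toLin' U)
    · rw [LinearMap.comp_assoc, hg, ← LinearMap.comp_assoc, hh, LinearMap.comp_assoc]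
    · rfl
    · intro j
      rw [LinearMap.comp_apply, hgy, hhy, Equiv.symm_apply_apply, LinearMap.id_apply]
  obtain ⟨g, rfl⟩ := Matrix.toLin'.surjective g
  obtain ⟨h, rfl⟩ := Matrix.toLin'.surjective h
  rw [← Matrix.toLin'_mul, ← Matrix.toLin'_one] at hgh hhg
  have hgh := Matrix.toLin'.injective hgh
  have hhg := Matrix.toLin'.injective hhg
  refine ⟨g, h, hgh, hhg, ?_⟩
  rw [← Matrix.toLin'_mul, ← Matrix.toLin'_mul] at hg
  rw [Matrix.toLin'.injective hg, Matrix.mul_assoc, hgh, Matrix.mul_one]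

theorem poly_zero_of_infinite {q : Polynomial k} {S : Set k} (hS : S.Infinite) (h : ∀ t ∈ S, q.eval t = 0) (t : k) :
    q.eval t = 0 := by
  have : q = 0 := Polynomial.eq_zero_of_infinite_isRoot q (hS.mono h)
  simp [this]

theorem density [Infinite k] {m d e : ℕ}
    (Q : Matrix (Fin e) (Fin e) k → Matrix (Fin d) (Fin d) k → Matrix (Fin d) (Fin e) k → k)
    (hQ : ∀ U V f A B g, ∃ q : Polynomial k, ∀ t, q.eval t = Q (U + t • A) (V + t • B) (f + t • g))
    (hT : ∀ U V f, InH m U V f → Terminal m U → Terminal m V → Q U V f = 0) :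
    ∀ U V f, InH m U V f → Q U V f = 0 := by
  suffices ∀ n : ℕ, ∀ U V f, InH m U V f → m * e + m * d - (measM m U + measM m V) = n → Q U V f = 0 from
    fun U V f h => this _ U V f h rfl
  intro n
  induction n using Nat.strong_induction_on with
  | _ n ih =>
    intro U V f hH hn
    by_cases hter : Terminal m U ∧ Terminal m V
    · exact hT U V f hH hter.1 hter.2
    obtain ⟨f₀, hf₀, S, hS, hgood⟩ := stepM hH hter
    have key : ∀ s ∉ S, Q U V (f + s • f₀) = 0 := by
      intro s hs
      obtain ⟨A, B, g, h⟩ := hgood s hs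
      obtain ⟨q, hq⟩ := hQ U V (f + s • f₀) A B g
      have h0 := poly_zero_of_infinite (q := q) (Set.Finite.infinite_compl (Set.finite_singleton (0 : k))) (by
        intro t ht
        rw [hq]
        have h1 := (h t).2 ht
        have h2 := measM_le m (U + t • A)
        have h3 := measM_le m (V + t • B)
        exact ih _ (by omega) _ _ _ (h t).1 rfl) 0
      rw [hq] at h0
      simpa using h0
    obtain ⟨q, hq⟩ := hQ U V f 0 0 f₀
    have h0 := poly_zero_of_infinite (q := q) hS.infinite_compl (by
      intro t ht
      rw [hq]
      simpa using key t ht) 0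
    rw [hq] at h0
    simpa using h0

end Terminal


section Reg
variable {k : Type u} [Field k] {X : Type*}

def Reg (R : Subalgebra k (X → k)) (D : X → k) (hD : D ∈ R) : Subalgebra k (X → k) where
  carrier := {r | ∃ N : ℕ, ∃ P ∈ R, ∀ x, D x ≠ 0 → D x ^ N * r x = P x}
  mul_mem' := by
    rintro r s ⟨N, P, hP, h⟩ ⟨N', P', hP', h'⟩
    refine ⟨N + N', P * P', R.mul_mem hP hP', fun x hx => ?_⟩
    rw [Pi.mul_apply, Pi.mul_apply, ← h x hx, ← h' x hx]
    ring
  add_mem' := by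
    rintro r s ⟨N, P, hP, h⟩ ⟨N', P', hP', h'⟩
    refine ⟨N + N', D ^ N' * P + D ^ N * P', R.add_mem (R.mul_mem (R.pow_mem hD _) hP) (R.mul_mem (R.pow_mem hD _) hP'), fun x hx => ?_⟩
    simp only [Pi.mul_apply, Pi.add_apply, Pi.pow_apply]
    rw [← h x hx, ← h' x hx]
    ring
  algebraMap_mem' := by
    intro c
    exact ⟨0, algebraMap k (X → k) c, R.algebraMap_mem c, fun x _ => by simp⟩

theorem Reg.of_mem {R : Subalgebra k (X → k)} {D : X → k} {hD : D ∈ R} {r : X → k} (h : r ∈ R) : r ∈ Reg R D hD :=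
  ⟨0, r, h, fun x _ => by simp⟩

theorem Reg.of_eq {R : Subalgebra k (X → k)} {D : X → k} {hD : D ∈ R} {r P : X → k} (hP : P ∈ R)
    (h : ∀ x, D x ≠ 0 → D x * r x = P x) : r ∈ Reg R D hD :=
  ⟨1, P, hP, fun x hx => by rw [pow_one, h x hx]⟩

variable {R : Subalgebra k (X → k)}

def MR (R : Subalgebra k (X → k)) {n l : Type*} (A : X → Matrix n l k) : Prop := ∀ i j, (fun x => A x i j) ∈ R

theorem MR.const {n l : Type*} (A : Matrix n l k) : MR R (fun _ : X => A) := fun i j => R.algebraMap_mem (A i j)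

theorem MR.add {n l : Type*} {A B : X → Matrix n l k} (hA : MR R A) (hB : MR R B) : MR R (fun x => A x + B x) :=
  fun i j => R.add_mem (hA i j) (hB i j)

theorem MR.sub {n l : Type*} {A B : X → Matrix n l k} (hA : MR R A) (hB : MR R B) : MR R (fun x => A x - B x) :=
  fun i j => R.sub_mem (hA i j) (hB i j)

theorem MR.smul {n l : Type*} {c : X → k} {A : X → Matrix n l k} (hc : c ∈ R) (hA : MR R A) : MR R (fun x => c x • A x) :=
  fun i j => R.mul_mem hc (hA i j)

theorem MR.mul {n l p : Type*} [Fintype l] {A : X → Matrix n l k} {B : X → Matrix l p k} (hA : MR R A) (hB : MR R B) :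
    MR R (fun x => A x * B x) := by
  intro i j
  have : (fun x => (A x * B x) i j) = ∑ l, (fun x => A x i l) * (fun x => B x l j) := by
    ext x; simp [Matrix.mul_apply]
  rw [this]
  exact R.sum_mem fun l _ => R.mul_mem (hA i l) (hB l j)

theorem MR.det {n : Type*} [Fintype n] [DecidableEq n] {A : X → Matrix n n k} (hA : MR R A) : (fun x => (A x).det) ∈ R := by
  have : (fun x => (A x).det) = ∑ σ : Equiv.Perm n, algebraMap k (X → k) (((Equiv.Perm.sign σ : ℤ) : k)) * ∏ i, (fun x => A x (σ i) i) := by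
    ext x; simp [Matrix.det_apply']
  rw [this]
  exact R.sum_mem fun σ _ => R.mul_mem (R.algebraMap_mem _) (R.prod_mem fun i _ => hA _ _)

theorem MR.adjugate {n : Type*} [Fintype n] [DecidableEq n] {A : X → Matrix n n k} (hA : MR R A) : MR R (fun x => (A x).adjugate) := by
  intro i j
  simp only [Matrix.adjugate_apply]
  apply MR.det
  intro a b
  by_cases h : a = j
  · subst h
    simp only [Matrix.updateRow_self]
    exact R.algebraMap_mem _
  · simp only [Matrix.updateRow_ne h]
    exact hA a b

theorem MR.inv_reg {n : Type*} [Fintype n] [DecidableEq n] {A : X → Matrix n n k} (hA : MR R A) {D E : X → k} {hD : D ∈ R}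
    (hE : E ∈ R) (h : ∀ x, D x = E x * (A x).det) : MR (Reg R D hD) (fun x => (A x)⁻¹) := by
  intro i j
  refine Reg.of_eq (P := E * (fun x => (A x).adjugate i j)) (R.mul_mem hE (hA.adjugate i j)) ?_
  intro x hx
  show D x * (A x)⁻¹ i j = _
  rw [h x] at hx ⊢
  have h2 : (A x).det ≠ 0 := right_ne_zero_of_mul hx
  rw [Matrix.inv_def, Ring.inverse_eq_inv', Matrix.smul_apply, smul_eq_mul, Pi.mul_apply]
  field_simp

theorem MR.reg {n l : Type*} {A : X → Matrix n l k} (hA : MR R A) {D : X → k} {hD : D ∈ R} : MR (Reg R D hD) A :=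
  fun i j => Reg.of_mem (hA i j)

theorem eval_mem {σ : Type*} {c : X → σ → k} (hc : ∀ i, (fun x => c x i) ∈ R) (p : MvPolynomial σ k) :
    (fun x => MvPolynomial.eval (c x) p) ∈ R := by
  induction p using MvPolynomial.induction_on with
  | C a => simp only [MvPolynomial.eval_C]; exact R.algebraMap_mem a
  | add p q hp hq => simp only [map_add]; exact R.add_mem hp hq
  | mul_X p i hp => simp only [map_mul, MvPolynomial.eval_X]; exact R.mul_mem hp (hc i)

theorem cCoords_mem {d e : ℕ} {c : X → CSpace k d e} (h1 : MR R (fun x => (c x).1)) (h2 : MR R (fun x => (c x).2.1))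
    (h3 : MR R (fun x => (c x).2.2)) (i : CIdx d e) : (fun x => cCoords (c x) i) ∈ R := by
  rcases i with ⟨a, b⟩ | ⟨a, b⟩ | ⟨a, b⟩
  · exact h1 a b
  · exact h2 a b
  · exact h3 a b

/-- polynomial functions on `k` -/
def PolyAlg (k : Type u) [Field k] : Subalgebra k (k → k) := (Polynomial.aeval (id : k → k)).range

theorem PolyAlg.exists_poly {r : k → k} (h : r ∈ PolyAlg k) : ∃ q : Polynomial k, ∀ t, r t = q.eval t := by
  obtain ⟨q, rfl⟩ := h
  refine ⟨q, fun t => ?_⟩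
  induction q using Polynomial.induction_on' with
  | add p q hp hq => simp_all
  | monomial n a => simp [Polynomial.aeval_monomial]

theorem PolyAlg.id_mem : (fun t : k => t) ∈ PolyAlg k := ⟨Polynomial.X, by simp; rfl⟩

/-- polynomial functions on `CSpace` -/
def CAlg (k : Type u) [Field k] (d e : ℕ) : Subalgebra k (CSpace k d e → k) :=
  (MvPolynomial.aeval (fun (i : CIdx d e) (x : CSpace k d e) => cCoords x i)).range

theorem CAlg.exists_poly {d e : ℕ} {r : CSpace k d e → k} (h : r ∈ CAlg k d e) :
    ∃ q : MvPolynomial (CIdx d e) k, ∀ x, r x = MvPolynomial.eval (cCoords x) q := by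
  obtain ⟨q, rfl⟩ := h
  refine ⟨q, fun t => ?_⟩
  induction q using MvPolynomial.induction_on with
  | C a => simp
  | add p q hp hq => simp_all
  | mul_X p i hp => simp_all

theorem CAlg.coord_mem {d e : ℕ} (i : CIdx d e) : (fun x => cCoords x i) ∈ CAlg k d e :=
  ⟨MvPolynomial.X i, by simp⟩

end Reg

section Top
variable {k : Type u} [Field k]

theorem exists_basic {d e : ℕ} {O : Set (CSpace k d e)} (hO : @IsOpen _ (cTop k d e) O) {x : CSpace k d e} (hx : x ∈ O) :
    ∃ p : MvPolynomial (CIdx d e) k, MvPolynomial.eval (cCoords x) p ≠ 0 ∧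
      ∀ y, MvPolynomial.eval (cCoords y) p ≠ 0 → y ∈ O := by
  obtain ⟨O', hO', rfl⟩ := hO
  have key : ∀ z ∈ O', ∃ p : MvPolynomial (CIdx d e) k, MvPolynomial.eval z p ≠ 0 ∧
      ∀ y, MvPolynomial.eval y p ≠ 0 → y ∈ O' := by
    clear hx
    induction hO' with
    | basic s hs =>
      obtain ⟨p, rfl⟩ := hs
      intro z hz
      exact ⟨p, hz, fun y hy => hy⟩
    | univ => intro z _; exact ⟨1, by simp, fun _ _ => trivial⟩
    | inter s t _ _ h1 h2 =>
      intro z hz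
      obtain ⟨p, hp, hp'⟩ := h1 z hz.1
      obtain ⟨q, hq, hq'⟩ := h2 z hz.2
      refine ⟨p * q, by simp [hp, hq], fun y hy => ?_⟩
      rw [map_mul] at hy
      exact ⟨hp' y (left_ne_zero_of_mul hy), hq' y (right_ne_zero_of_mul hy)⟩
    | sUnion S _ h =>
      rintro z ⟨s, hs, hz⟩
      obtain ⟨p, hp, hp'⟩ := h s hs z hz
      exact ⟨p, hp, fun y hy => ⟨s, hs, hp' y hy⟩⟩
  obtain ⟨p, hp, hp'⟩ := key _ hx
  exact ⟨p, hp, fun y hy => hp' _ hy⟩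

theorem irreducible_of {d e : ℕ} {S : Set (CSpace k d e)} (h0 : S.Nonempty)
    (h : ∀ p q : MvPolynomial (CIdx d e) k, (∃ x ∈ S, MvPolynomial.eval (cCoords x) p ≠ 0) →
      (∃ x ∈ S, MvPolynomial.eval (cCoords x) q ≠ 0) →
      ∃ x ∈ S, MvPolynomial.eval (cCoords x) p ≠ 0 ∧ MvPolynomial.eval (cCoords x) q ≠ 0) :
    @IsIrreducible _ (cTop k d e) S := by
  letI := cTop k d e
  refine ⟨h0, ?_⟩
  rintro O O' hO hO' ⟨x, hxS, hx⟩ ⟨y, hyS, hy⟩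
  obtain ⟨p, hp, hp'⟩ := exists_basic hO hx
  obtain ⟨q, hq, hq'⟩ := exists_basic hO' hy
  obtain ⟨z, hz, h1, h2⟩ := h p q ⟨x, hxS, hp⟩ ⟨y, hyS, hq⟩
  exact ⟨z, hz, hp' z h1, hq' z h2⟩

end Top


section HIrr
variable {k : Type u} [Field k]

theorem conj_pow_mat {n : Type*} [Fintype n] [DecidableEq n] {G G' : Matrix n n k} (h : G' * G = 1) (h' : G * G' = 1)
    (U : Matrix n n k) (m : ℕ) : (G * U * G') ^ m = G * U ^ m * G' := by
  induction m with
  | zero => simp [h']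
  | succ m ih =>
    rw [pow_succ, ih, pow_succ]
    calc G * U ^ m * G' * (G * U * G') = G * U ^ m * (G' * G) * U * G' := by simp only [Matrix.mul_assoc]
      _ = _ := by rw [h, Matrix.mul_one]; simp only [Matrix.mul_assoc]

theorem exists_terminal [Infinite k] {m d e : ℕ} (p : MvPolynomial (CIdx d e) k)
    (h : ∃ U V f, InH m U V f ∧ MvPolynomial.eval (cCoords ((U, V, f) : CSpace k d e)) p ≠ 0) :
    ∃ U V f, InH m U V f ∧ Terminal m U ∧ Terminal m V ∧
      MvPolynomial.eval (cCoords ((U, V, f) : CSpace k d e)) p ≠ 0 := by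
  by_contra hcon
  obtain ⟨U, V, f, hH, hne⟩ := h
  apply hne
  refine density (m := m) (fun U V f => MvPolynomial.eval (cCoords ((U, V, f) : CSpace k d e)) p) ?_ ?_ U V f hH
  · intro U V f A B g
    have hl : ∀ {n l : Type} (A B : Matrix n l k), MR (PolyAlg k) (fun t : k => A + t • B) := fun A B =>
      (MR.const A).add (MR.smul PolyAlg.id_mem (MR.const B))
    have := eval_mem (R := PolyAlg k) (c := fun t : k => cCoords ((U + t • A, V + t • B, f + t • g) : CSpace k d e))
      (cCoords_mem (hl U A) (hl V B) (hl f g)) p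
    obtain ⟨q, hq⟩ := PolyAlg.exists_poly this
    exact ⟨q, fun t => (hq t).symm⟩
  · intro U V f hH h1 h2
    by_contra h3
    exact hcon ⟨U, V, f, hH, h1, h2, h3⟩

theorem H_common [Infinite k] {m d e : ℕ} (hm : 1 ≤ m) (p q : MvPolynomial (CIdx d e) k)
    (hp : ∃ U V f, InH m U V f ∧ MvPolynomial.eval (cCoords ((U, V, f) : CSpace k d e)) p ≠ 0)
    (hq : ∃ U V f, InH m U V f ∧ MvPolynomial.eval (cCoords ((U, V, f) : CSpace k d e)) q ≠ 0) :
    ∃ U V f, InH m U V f ∧ MvPolynomial.eval (cCoords ((U, V, f) : CSpace k d e)) p ≠ 0 ∧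
      MvPolynomial.eval (cCoords ((U, V, f) : CSpace k d e)) q ≠ 0 := by
  obtain ⟨U, V, f, hH, hTU, hTV, hp⟩ := exists_terminal p hp
  obtain ⟨U', V', f', hH', hTU', hTV', hq⟩ := exists_terminal q hq
  obtain ⟨g, g', hg, hg', hgU⟩ := terminal_conj hm hTU hTU'
  obtain ⟨h, h', hh, hh', hhV⟩ := terminal_conj hm hTV hTV'
  let G : k → Matrix (Fin e) (Fin e) k := fun t => 1 + t • (g - 1)
  let H : k → Matrix (Fin d) (Fin d) k := fun t => 1 + t • (h - 1)
  let F : k → Matrix (Fin d) (Fin e) k := fun t => f + t • (h' * f' * g - f)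
  let γ : k → CSpace k d e := fun t => (G t * U * (G t)⁻¹, H t * V * (H t)⁻¹, H t * F t * (G t)⁻¹)
  have hl : ∀ {n l : Type} (A B : Matrix n l k), MR (PolyAlg k) (fun t : k => A + t • B) := fun A B =>
    (MR.const A).add (MR.smul PolyAlg.id_mem (MR.const B))
  have hG : MR (PolyAlg k) G := hl _ _
  have hHm : MR (PolyAlg k) H := hl _ _
  have hF : MR (PolyAlg k) F := hl _ _
  let D : k → k := (fun t => (G t).det) * (fun t => (H t).det)
  have hD : D ∈ PolyAlg k := (PolyAlg k).mul_mem hG.det hHm.det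
  have hGi : MR (Reg (PolyAlg k) D hD) (fun t => (G t)⁻¹) := hG.inv_reg hHm.det (fun t => by simp only [D, Pi.mul_apply]; ring)
  have hHi : MR (Reg (PolyAlg k) D hD) (fun t => (H t)⁻¹) := hHm.inv_reg hG.det (fun t => by simp only [D, Pi.mul_apply])
  have hγ : ∀ r : MvPolynomial (CIdx d e) k, (fun t => MvPolynomial.eval (cCoords (γ t)) r) ∈ Reg (PolyAlg k) D hD := by
    intro r
    apply eval_mem
    apply cCoords_mem
    · exact (hG.reg.mul (MR.const U)).mul hGi
    · exact (hHm.reg.mul (MR.const V)).mul hHi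
    · exact (hHm.reg.mul hF.reg).mul hGi
  have hγ0 : γ 0 = (U, V, f) := by
    simp [γ, G, H, F]
    rfl
  have hγ1 : γ 1 = (U', V', f') := by
    have e1 : G 1 = g := by simp [G]
    have e2 : H 1 = h := by simp [H]
    have e3 : F 1 = h' * f' * g := by simp [F]
    have e4 : g⁻¹ = g' := Matrix.inv_eq_right_inv hg
    have e5 : h⁻¹ = h' := Matrix.inv_eq_right_inv hh
    have e6 : h * (h' * f' * g) * g' = f' := by
      calc h * (h' * f' * g) * g' = (h * h') * f' * (g * g') := by simp only [Matrix.mul_assoc]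
        _ = f' := by rw [hh, hg, Matrix.one_mul, Matrix.mul_one]
    simp only [γ, e1, e2, e3, e4, e5, e6, ← hgU, ← hhV]
    rfl
  have hD0 : D 0 ≠ 0 := by simp [D, G, H]
  have hD1 : D 1 ≠ 0 := by
    have e1 : G 1 = g := by simp [G]
    have e2 : H 1 = h := by simp [H]
    simp only [D, Pi.mul_apply, e1, e2]
    exact mul_ne_zero (Matrix.det_ne_zero_of_right_inverse hg) (Matrix.det_ne_zero_of_right_inverse hh)
  have hFt : ∀ t, F t * U = V * F t := by
    intro t
    have e1 : g * U = U' * g := by rw [hgU, Matrix.mul_assoc, hg', Matrix.mul_one]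
    have e2 : h' * V' = V * h' := by
      rw [hhV, ← Matrix.mul_assoc, ← Matrix.mul_assoc, hh', Matrix.one_mul]
    have e3 : h' * f' * g * U = V * (h' * f' * g) := by
      calc h' * f' * g * U = h' * (f' * U') * g := by simp only [Matrix.mul_assoc, e1]
        _ = (h' * V') * f' * g := by rw [hH'.2.2]; simp only [Matrix.mul_assoc]
        _ = _ := by rw [e2]; simp only [Matrix.mul_assoc]
    simp only [F]
    rw [Matrix.add_mul, Matrix.mul_add, Matrix.smul_mul, Matrix.mul_smul, Matrix.sub_mul, Matrix.mul_sub, e3, hH.2.2]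
  obtain ⟨N₁, P₁, hP₁, h1⟩ := hγ p
  obtain ⟨N₂, P₂, hP₂, h2⟩ := hγ q
  obtain ⟨p₁, hp₁⟩ := PolyAlg.exists_poly hP₁
  obtain ⟨p₂, hp₂⟩ := PolyAlg.exists_poly hP₂
  obtain ⟨p₃, hp₃⟩ := PolyAlg.exists_poly hD
  have n1 : p₁ ≠ 0 := by
    rintro rfl
    have : D 0 ^ N₁ * MvPolynomial.eval (cCoords (γ 0)) p = P₁ 0 := h1 0 hD0
    rw [hp₁, hγ0] at this
    simp only [Polynomial.eval_zero] at this
    exact mul_ne_zero (pow_ne_zero _ hD0) hp this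
  have n2 : p₂ ≠ 0 := by
    rintro rfl
    have : D 1 ^ N₂ * MvPolynomial.eval (cCoords (γ 1)) q = P₂ 1 := h2 1 hD1
    rw [hp₂, hγ1] at this
    simp only [Polynomial.eval_zero] at this
    exact mul_ne_zero (pow_ne_zero _ hD1) hq this
  have n3 : p₃ ≠ 0 := by
    rintro rfl
    rw [hp₃] at hD0
    simp at hD0
  obtain ⟨t, ht⟩ : ∃ t, (p₁ * p₂ * p₃).eval t ≠ 0 := by
    by_contra hcon
    push Not at hcon
    exact mul_ne_zero (mul_ne_zero n1 n2) n3 (Polynomial.funext (by simpa using hcon))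
  rw [Polynomial.eval_mul, Polynomial.eval_mul, ← hp₁, ← hp₂, ← hp₃] at ht
  have ht3 : D t ≠ 0 := right_ne_zero_of_mul ht
  have ht1 : P₁ t ≠ 0 := left_ne_zero_of_mul (left_ne_zero_of_mul ht)
  have ht2 : P₂ t ≠ 0 := right_ne_zero_of_mul (left_ne_zero_of_mul ht)
  rw [← h1 t ht3] at ht1
  rw [← h2 t ht3] at ht2
  have uG : IsUnit (G t).det := isUnit_iff_ne_zero.2 (left_ne_zero_of_mul ht3)
  have uH : IsUnit (H t).det := isUnit_iff_ne_zero.2 (right_ne_zero_of_mul ht3)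
  have iG := Matrix.nonsing_inv_mul _ uG
  have iG' := Matrix.mul_nonsing_inv _ uG
  have iH := Matrix.nonsing_inv_mul _ uH
  have iH' := Matrix.mul_nonsing_inv _ uH
  refine ⟨_, _, _, ⟨?_, ?_, ?_⟩, right_ne_zero_of_mul ht1, right_ne_zero_of_mul ht2⟩
  · rw [conj_pow_mat iG iG', hH.1, Matrix.mul_zero, Matrix.zero_mul]
  · rw [conj_pow_mat iH iH', hH.2.1, Matrix.mul_zero, Matrix.zero_mul]
  · calc H t * F t * (G t)⁻¹ * (G t * U * (G t)⁻¹) = H t * F t * ((G t)⁻¹ * G t) * U * (G t)⁻¹ := by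
          simp only [Matrix.mul_assoc]
      _ = H t * (F t * U) * (G t)⁻¹ := by rw [iG, Matrix.mul_one]; simp only [Matrix.mul_assoc]
      _ = H t * V * ((H t)⁻¹ * H t) * F t * (G t)⁻¹ := by
          rw [hFt, iH, Matrix.mul_one]; simp only [Matrix.mul_assoc]
      _ = H t * V * (H t)⁻¹ * (H t * F t * (G t)⁻¹) := by simp only [Matrix.mul_assoc]

end HIrr


section EIrr
variable {k : Type u} [Field k]

theorem block_pow {n l : Type*} [Fintype n] [DecidableEq n] [Fintype l] [DecidableEq l] (A : Matrix n n k)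
    (Z : Matrix n l k) (U : Matrix l l k) (m : ℕ) :
    Matrix.fromBlocks A Z 0 U ^ m =
      Matrix.fromBlocks (A ^ m) (∑ i ∈ Finset.range m, A ^ (m - 1 - i) * Z * U ^ i) 0 (U ^ m) := by
  induction m with
  | zero => simp [Matrix.fromBlocks_one]
  | succ m ih =>
    rw [pow_succ', ih, Matrix.fromBlocks_multiply]
    congr 1
    · simp [pow_succ']
    · rw [Finset.sum_range_succ, Matrix.mul_sum]
      congr 1
      · refine Finset.sum_congr rfl fun i hi => ?_
        have hi' := Finset.mem_range.1 hi
        have : m + 1 - 1 - i = (m - 1 - i) + 1 := by omega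
        rw [this, pow_succ']
        simp only [Matrix.mul_assoc]
      · simp
    · simp
    · simp [pow_succ']

theorem submatrix_pow_eq {n l : Type*} [Fintype n] [DecidableEq n] [Fintype l] [DecidableEq l] (φ : l ≃ n)
    (X : Matrix n n k) (m : ℕ) : (X.submatrix φ φ) ^ m = (X ^ m).submatrix φ φ := by
  induction m with
  | zero => simp
  | succ m ih => rw [pow_succ, ih, pow_succ, Matrix.submatrix_mul_equiv]

theorem intertwine_pow {n : Type*} [Fintype n] [DecidableEq n] {X g B : Matrix n n k} (h : X * g = g * B) (m : ℕ) :
    X ^ m * g = g * B ^ m := by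
  induction m with
  | zero => simp
  | succ m ih => rw [pow_succ, Matrix.mul_assoc, h, ← Matrix.mul_assoc, ih, Matrix.mul_assoc, ← pow_succ]

def InE (m : ℕ) {n l : Type*} [Fintype n] [DecidableEq n] [Fintype l] [DecidableEq l] (U : Matrix l l k) (V : Matrix n n k)
    (Z : Matrix n l k) : Prop :=
  U ^ m = 0 ∧ V ^ m = 0 ∧ ∑ i ∈ Finset.range m, V ^ (m - 1 - i) * Z * U ^ i = 0

theorem inE_iff {m : ℕ} {n l : Type*} [Fintype n] [DecidableEq n] [Fintype l] [DecidableEq l] (U : Matrix l l k)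
    (V : Matrix n n k) (Z : Matrix n l k) : InE m U V Z ↔ Matrix.fromBlocks V Z 0 U ^ m = 0 := by
  rw [block_pow, ← Matrix.fromBlocks_zero, Matrix.fromBlocks_inj]
  unfold InE
  tauto

theorem inE_of_block {m : ℕ} {n l : Type*} [Fintype n] [DecidableEq n] [Fintype l] [DecidableEq l]
    (A f1 X11 : Matrix n n k) (f2 X21 : Matrix l n k) (X12 : Matrix n l k) (X22 : Matrix l l k)
    (hX : Matrix.fromBlocks X11 X12 X21 X22 ^ m = 0) (hd : IsUnit f1.det)
    (h1 : f1 * A = X11 * f1 + X12 * f2) (h2 : f2 * A = X21 * f1 + X22 * f2) :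
    InE m (X22 - f2 * (f1⁻¹ * X12)) A (f1⁻¹ * X12) := by
  rw [inE_iff]
  have i1 := Matrix.nonsing_inv_mul _ hd
  have i2 := Matrix.mul_nonsing_inv _ hd
  have e : Matrix.fromBlocks X11 X12 X21 X22 * Matrix.fromBlocks f1 0 f2 1 =
      Matrix.fromBlocks f1 0 f2 1 * Matrix.fromBlocks A (f1⁻¹ * X12) 0 (X22 - f2 * (f1⁻¹ * X12)) := by
    rw [Matrix.fromBlocks_multiply, Matrix.fromBlocks_multiply]
    congr 1
    · simp [h1]
    · rw [← Matrix.mul_assoc, i2]; simp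
    · simp [h2]
    · simp
  have e2 := intertwine_pow e m
  rw [hX, Matrix.zero_mul] at e2
  have e3 : Matrix.fromBlocks f1⁻¹ 0 (-(f2 * f1⁻¹)) 1 * Matrix.fromBlocks f1 0 f2 (1 : Matrix l l k) = 1 := by
    rw [Matrix.fromBlocks_multiply, ← Matrix.fromBlocks_one]
    congr 1
    · simp [i1]
    · simp
    · simp [Matrix.mul_assoc, i1]
    · simp
  rw [← Matrix.one_mul (Matrix.fromBlocks A (f1⁻¹ * X12) 0 (X22 - f2 * (f1⁻¹ * X12)) ^ m), ← e3, Matrix.mul_assoc, ← e2,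
    Matrix.mul_zero]

abbrev f1 {d e : ℕ} (x : CSpace k (d + e) d) : Matrix (Fin d) (Fin d) k := fun i j => x.2.2 (Fin.castAdd e i) j
abbrev f2 {d e : ℕ} (x : CSpace k (d + e) d) : Matrix (Fin e) (Fin d) k := fun i j => x.2.2 (Fin.natAdd d i) j
abbrev X11 {d e : ℕ} (x : CSpace k (d + e) d) : Matrix (Fin d) (Fin d) k :=
  fun i j => x.2.1 (Fin.castAdd e i) (Fin.castAdd e j)
abbrev X12 {d e : ℕ} (x : CSpace k (d + e) d) : Matrix (Fin d) (Fin e) k :=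
  fun i j => x.2.1 (Fin.castAdd e i) (Fin.natAdd d j)
abbrev X21 {d e : ℕ} (x : CSpace k (d + e) d) : Matrix (Fin e) (Fin d) k :=
  fun i j => x.2.1 (Fin.natAdd d i) (Fin.castAdd e j)
abbrev X22 {d e : ℕ} (x : CSpace k (d + e) d) : Matrix (Fin e) (Fin e) k :=
  fun i j => x.2.1 (Fin.natAdd d i) (Fin.natAdd d j)

/-- the rational retraction from the hom variety to the ext variety -/
def rho {d e : ℕ} (x : CSpace k (d + e) d) : CSpace k d e :=
  (X22 x - f2 x * ((f1 x)⁻¹ * X12 x), x.1, (f1 x)⁻¹ * X12 x)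

theorem rho_mem {m d e : ℕ} (x : CSpace k (d + e) d) (hx : InH m x.1 x.2.1 x.2.2) (hd : (f1 x).det ≠ 0) :
    InE m (rho x).1 (rho x).2.1 (rho x).2.2 := by
  refine inE_of_block x.1 (f1 x) (X11 x) (f2 x) (X21 x) (X12 x) (X22 x) ?_ (isUnit_iff_ne_zero.2 hd) ?_ ?_
  · have : Matrix.fromBlocks (X11 x) (X12 x) (X21 x) (X22 x) = x.2.1.submatrix finSumFinEquiv finSumFinEquiv := by
      ext (i | i) (j | j) <;> simp
    rw [this, submatrix_pow_eq, hx.2.1]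
    rfl
  · ext i j
    have := congrFun (congrFun hx.2.2 (Fin.castAdd e i)) j
    simpa [Matrix.mul_apply, Fin.sum_univ_add] using this
  · ext i j
    have := congrFun (congrFun hx.2.2 (Fin.natAdd d i)) j
    simpa [Matrix.mul_apply, Fin.sum_univ_add] using this

/-- the section of `rho` -/
def sec {d e : ℕ} (U : Matrix (Fin e) (Fin e) k) (V : Matrix (Fin d) (Fin d) k) (Z : Matrix (Fin d) (Fin e) k) :
    CSpace k (d + e) d :=
  (V, (Matrix.fromBlocks V Z 0 U).submatrix finSumFinEquiv.symm finSumFinEquiv.symm,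
    (Matrix.fromRows (1 : Matrix (Fin d) (Fin d) k) (0 : Matrix (Fin e) (Fin d) k)).submatrix finSumFinEquiv.symm id)

theorem sec_mem {m d e : ℕ} {U : Matrix (Fin e) (Fin e) k} {V : Matrix (Fin d) (Fin d) k} {Z : Matrix (Fin d) (Fin e) k}
    (h : InE m U V Z) : InH m (sec U V Z).1 (sec U V Z).2.1 (sec U V Z).2.2 := by
  refine ⟨h.2.1, ?_, ?_⟩
  · show ((Matrix.fromBlocks V Z 0 U).submatrix finSumFinEquiv.symm finSumFinEquiv.symm) ^ m = 0
    rw [submatrix_pow_eq, (inE_iff U V Z).1 h]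
    rfl
  · show (Matrix.fromRows (1 : Matrix (Fin d) (Fin d) k) (0 : Matrix (Fin e) (Fin d) k)).submatrix finSumFinEquiv.symm id * V
      = (Matrix.fromBlocks V Z 0 U).submatrix finSumFinEquiv.symm finSumFinEquiv.symm *
      (Matrix.fromRows (1 : Matrix (Fin d) (Fin d) k) (0 : Matrix (Fin e) (Fin d) k)).submatrix finSumFinEquiv.symm id
    rw [Matrix.submatrix_mul_equiv]
    ext i j
    refine Fin.addCases (fun i => ?_) (fun i => ?_) i
    · simp [Matrix.mul_apply, Matrix.one_apply]
    · simp [Matrix.mul_apply, Matrix.one_apply]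

theorem f1_sec {d e : ℕ} (U : Matrix (Fin e) (Fin e) k) (V : Matrix (Fin d) (Fin d) k) (Z : Matrix (Fin d) (Fin e) k) :
    f1 (sec U V Z) = 1 := by
  ext i j; simp [f1, sec]

theorem rho_sec {d e : ℕ} (U : Matrix (Fin e) (Fin e) k) (V : Matrix (Fin d) (Fin d) k) (Z : Matrix (Fin d) (Fin e) k) :
    rho (sec U V Z) = (U, V, Z) := by
  have a1 : f2 (sec U V Z) = 0 := by ext i j; simp [f2, sec]
  have a2 : X12 (sec U V Z) = Z := by ext i j; simp [X12, sec]
  have a3 : X22 (sec U V Z) = U := by ext i j; simp [X22, sec]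
  unfold rho
  rw [f1_sec, a1, a2, a3]
  simp
  rfl

theorem rho_reg {d e : ℕ} (p : MvPolynomial (CIdx d e) k) :
    ∃ q : MvPolynomial (CIdx (d + e) d) k, ∀ x : CSpace k (d + e) d, MvPolynomial.eval (cCoords x) q ≠ 0 ↔
      (f1 x).det ≠ 0 ∧ MvPolynomial.eval (cCoords (rho x)) p ≠ 0 := by
  have m1 : MR (CAlg k (d + e) d) (fun x => f1 x) := fun i j => CAlg.coord_mem (Sum.inr (Sum.inr (_, _)))
  have m2 : MR (CAlg k (d + e) d) (fun x => f2 x) := fun i j => CAlg.coord_mem (Sum.inr (Sum.inr (_, _)))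
  have m3 : MR (CAlg k (d + e) d) (fun x => X12 x) := fun i j => CAlg.coord_mem (Sum.inr (Sum.inl (_, _)))
  have m4 : MR (CAlg k (d + e) d) (fun x => X22 x) := fun i j => CAlg.coord_mem (Sum.inr (Sum.inl (_, _)))
  have m5 : MR (CAlg k (d + e) d) (fun x => x.1) := fun i j => CAlg.coord_mem (Sum.inl (_, _))
  let D : CSpace k (d + e) d → k := fun x => (f1 x).det
  have hD : D ∈ CAlg k (d + e) d := m1.det
  have mi : MR (Reg (CAlg k (d + e) d) D hD) (fun x => (f1 x)⁻¹) :=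
    m1.inv_reg (E := 1) (one_mem _) (fun x => by simp [D])
  have mz := mi.mul m3.reg
  have key : (fun x => MvPolynomial.eval (cCoords (rho x)) p) ∈ Reg (CAlg k (d + e) d) D hD := by
    apply eval_mem
    apply cCoords_mem
    · exact m4.reg.sub (m2.reg.mul mz)
    · exact m5.reg
    · exact mz
  obtain ⟨N, P, hP, h⟩ := key
  obtain ⟨q, hq⟩ := CAlg.exists_poly ((CAlg k (d + e) d).mul_mem hD hP)
  refine ⟨q, fun x => ?_⟩
  rw [← hq x, Pi.mul_apply, mul_ne_zero_iff]
  refine and_congr_right fun hx => ?_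
  rw [← h x hx, mul_ne_zero_iff]
  exact and_iff_right (pow_ne_zero _ hx)

theorem E_common [Infinite k] {m d e : ℕ} (hm : 1 ≤ m) (p q : MvPolynomial (CIdx d e) k)
    (hp : ∃ U V Z, InE m U V Z ∧ MvPolynomial.eval (cCoords ((U, V, Z) : CSpace k d e)) p ≠ 0)
    (hq : ∃ U V Z, InE m U V Z ∧ MvPolynomial.eval (cCoords ((U, V, Z) : CSpace k d e)) q ≠ 0) :
    ∃ U V Z, InE m U V Z ∧ MvPolynomial.eval (cCoords ((U, V, Z) : CSpace k d e)) p ≠ 0 ∧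
      MvPolynomial.eval (cCoords ((U, V, Z) : CSpace k d e)) q ≠ 0 := by
  obtain ⟨p', hp'⟩ := rho_reg p
  obtain ⟨q', hq'⟩ := rho_reg q
  obtain ⟨U, V, Z, hE, hp⟩ := hp
  obtain ⟨U', V', Z', hE', hq⟩ := hq
  obtain ⟨A, X, F, hH, h1, h2⟩ := H_common hm p' q'
    ⟨_, _, _, sec_mem hE, (hp' (sec U V Z)).2 ⟨by rw [f1_sec]; simp, by rw [rho_sec]; exact hp⟩⟩
    ⟨_, _, _, sec_mem hE', (hq' (sec U' V' Z')).2 ⟨by rw [f1_sec]; simp, by rw [rho_sec]; exact hq⟩⟩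
  have h1' := (hp' _).1 h1
  have h2' := (hq' _).1 h2
  exact ⟨_, _, _, rho_mem (A, X, F) hH h1'.1, h1'.2, h2'.2⟩

theorem main [Infinite k] (m : ℕ) (hm : 1 ≤ m) (d e : ℕ) :
    @IsIrreducible _ (cTop k d e)
      {x : CSpace k d e | x.1 ^ m = 0 ∧ x.2.1 ^ m = 0 ∧ x.2.2 * x.1 = x.2.1 * x.2.2} ∧
    @IsIrreducible _ (cTop k d e)
      {x : CSpace k d e | x.1 ^ m = 0 ∧ x.2.1 ^ m = 0 ∧
        ∑ i ∈ Finset.range m, x.2.1 ^ (m - 1 - i) * x.2.2 * x.1 ^ i = 0} := by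
  have hm0 : m ≠ 0 := by omega
  refine ⟨irreducible_of ⟨((0, 0, 0) : CSpace k d e), ?_⟩ ?_, irreducible_of ⟨((0, 0, 0) : CSpace k d e), ?_⟩ ?_⟩
  · exact ⟨zero_pow hm0, zero_pow hm0, by simp⟩
  · rintro p q ⟨x, hx, hxp⟩ ⟨y, hy, hyq⟩
    obtain ⟨U, V, f, h, h1, h2⟩ := H_common hm p q ⟨x.1, x.2.1, x.2.2, hx, hxp⟩ ⟨y.1, y.2.1, y.2.2, hy, hyq⟩
    exact ⟨(U, V, f), h, h1, h2⟩
  · exact ⟨zero_pow hm0, zero_pow hm0, by simp⟩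
  · rintro p q ⟨x, hx, hxp⟩ ⟨y, hy, hyq⟩
    obtain ⟨U, V, f, h, h1, h2⟩ := E_common hm p q ⟨x.1, x.2.1, x.2.2, hx, hxp⟩ ⟨y.1, y.2.1, y.2.2, hy, hyq⟩
    exact ⟨(U, V, f), h, h1, h2⟩

end EIrr


end HomExt

/-- For every `m ≥ 1` the algebra `Λ = k[x]/(x^m)` is hom-irreducible
and ext-irreducible: for all `d, e ∈ ℕ`, both the variety
`H_Λ(e,d) = {(U, V, f) : U^m = 0, V^m = 0, f U = V f}` and the variety
`E_Λ(e,d) = {(U, V, Z) : U^m = 0, V^m = 0, ∑_{i=0}^{m-1} V^{m-1-i} Z U^i = 0}`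
are irreducible. -/
theorem k_x_mod_xm_hom_and_ext_irreducible (k : Type u) [Field k] [IsAlgClosed k]
    (m : ℕ) (hm : 1 ≤ m) (d e : ℕ) :
    @IsIrreducible _ (cTop k d e)
      {x : CSpace k d e | x.1 ^ m = 0 ∧ x.2.1 ^ m = 0 ∧ x.2.2 * x.1 = x.2.1 * x.2.2} ∧
    @IsIrreducible _ (cTop k d e)
      {x : CSpace k d e | x.1 ^ m = 0 ∧ x.2.1 ^ m = 0 ∧
        ∑ i ∈ Finset.range m, x.2.1 ^ (m - 1 - i) * x.2.2 * x.1 ^ i = 0} := by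
  haveI : Infinite k := IsAlgClosed.instInfinite
  exact HomExt.main m hm d e
end
end

section
/- For every m ≥ 2, the algebra B_1 = A(1,m,m−1) is geometrically irreducible: for all d, e ∈ ℕ the Zariski-closed subset {(V, U, Z) ∈ M_{d×d}(k) × M_{e×e}(k) × M_{d×e}(k) : V^m = 0, U^m = 0, Σ_{i=0}^{m−1} V^{m−1−i} Z U^{i} = 0} is irreducible. -/
/-!
Formalization of a statement from:
"Algebras with irreducible module varieties: two-vertex case completed"
-/

universe u v

open Quiver

noncomputable section

/-- The ambient affine space for the representation varieties of `B₁ = A(1, m, m-1)` with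
dimension vector `(d, e)`: a `d × d` matrix, an `e × e` matrix and a `d × e` matrix. -/
def BSpace (k : Type u) [Field k] (d e : ℕ) : Type u :=
  Matrix (Fin d) (Fin d) k × Matrix (Fin e) (Fin e) k × Matrix (Fin d) (Fin e) k

/-- The index type for the affine coordinates on `BSpace`. -/
def BIdx (d e : ℕ) : Type := (Fin d × Fin d) ⊕ (Fin e × Fin e) ⊕ (Fin d × Fin e)

/-- The affine coordinates on `BSpace`. -/
def bCoords {k : Type u} [Field k] {d e : ℕ} (x : BSpace k d e) : BIdx d e → k
  | Sum.inl i => x.1 i.1 i.2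
  | Sum.inr (Sum.inl i) => x.2.1 i.1 i.2
  | Sum.inr (Sum.inr i) => x.2.2 i.1 i.2

/-- The Zariski topology on `BSpace`. -/
def bTop (k : Type u) [Field k] (d e : ℕ) : TopologicalSpace (BSpace k d e) :=
  (zariskiTop k (BIdx d e)).induced bCoords

section PA
open Finset
open scoped Classical

theorem rankOne_pow {k E : Type*} [Field k] [AddCommGroup E] [Module k E] (T : Module.End k E)
    (θ : E →ₗ[k] k) (z : E) (h : ∀ p, θ ((T ^ p) z) = 0) (t : k) (N : ℕ) (v : E) :
    ((T + t • (θ.smulRight z : Module.End k E)) ^ N) v =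
      (T ^ N) v + t • ∑ q ∈ range N, θ ((T ^ q) v) • (T ^ (N - 1 - q)) z := by
  induction N with
  | zero => simp
  | succ N ih =>
    rw [pow_succ', Module.End.mul_apply, ih]
    have h1 : θ (∑ q ∈ range N, θ ((T ^ q) v) • (T ^ (N - 1 - q)) z) = 0 := by
      rw [map_sum]; apply Finset.sum_eq_zero; intro q _; simp [h]
    have h2 : T (∑ q ∈ range N, θ ((T ^ q) v) • (T ^ (N - 1 - q)) z) =
        ∑ q ∈ range N, θ ((T ^ q) v) • (T ^ (N + 1 - 1 - q)) z := by
      rw [map_sum]; apply Finset.sum_congr rfl; intro q hq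
      have hq' := Finset.mem_range.1 hq
      rw [map_smul, show N + 1 - 1 - q = (N - 1 - q) + 1 by omega, pow_succ', Module.End.mul_apply]
    rw [LinearMap.add_apply, LinearMap.smul_apply, LinearMap.smulRight_apply, map_add, map_add,
      map_smul, map_smul, h1, h2, sum_range_succ, pow_succ', Module.End.mul_apply]
    simp
    abel

theorem rank_add_lt {k M : Type*} [Field k] [AddCommGroup M] [Module k M] [FiniteDimensional k M]
    (A : Module.End k M) (φ : M →ₗ[k] k) (v u : M) (hu : A u = 0) (hφ : φ u ≠ 0)
    (hv : v ∉ LinearMap.range A) :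
    Module.finrank k (LinearMap.range A) <
      Module.finrank k (LinearMap.range (A + (φ.smulRight v : Module.End k M))) := by
  apply Submodule.finrank_lt_finrank_of_lt
  refine lt_of_le_of_ne ?_ ?_
  · rintro _ ⟨w, rfl⟩
    refine ⟨w - (φ w / φ u) • u, ?_⟩
    simp [hu, hφ]
  · intro h
    apply hv
    rw [h]
    refine ⟨(φ u)⁻¹ • u, ?_⟩
    simp [hu, hφ]

/-- a Jordan chain basis -/
structure ChainBasis {k M : Type*} [Field k] [AddCommGroup M] [Module k M]
    (V : Module.End k M) where
  ι : Type
  fin : Fintype ι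
  x : ι → ℕ
  r : ι → M
  b : Module.Basis (Σ i, Fin (x i)) k M
  hb : ∀ i p, b ⟨i, p⟩ = (V ^ (p : ℕ)) (r i)
  kill : ∀ i, (V ^ (x i)) (r i) = 0
  pos : ∀ i, 0 < x i

namespace ChainBasis
variable {k M : Type*} [Field k] [AddCommGroup M] [Module k M] {V : Module.End k M}

theorem kill_ge (c : ChainBasis V) (i : c.ι) (p : ℕ) (h : c.x i ≤ p) : (V ^ p) (c.r i) = 0 := by
  rw [← Nat.sub_add_cancel h, pow_add, Module.End.mul_apply, c.kill, map_zero]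

/-- coordinate functional -/
def co (c : ChainBasis V) (i : c.ι) (p : ℕ) : M →ₗ[k] k :=
  if h : p < c.x i then c.b.coord ⟨i, ⟨p, h⟩⟩ else 0

theorem co_gen (c : ChainBasis V) (i : c.ι) (p : ℕ) (hp : p < c.x i) (j : c.ι) (q : ℕ) :
    (c.co i p) ((V ^ q) (c.r j)) = if j = i ∧ q = p then 1 else 0 := by
  rw [co, dif_pos hp]
  by_cases hq : q < c.x j
  · rw [← c.hb j ⟨q, hq⟩, Module.Basis.coord_apply, Module.Basis.repr_self]
    by_cases h : j = i ∧ q = p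
    · rw [if_pos h]
      obtain ⟨rfl, rfl⟩ := h
      simp
    · rw [if_neg h, Finsupp.single_apply, if_neg]
      intro h'
      apply h
      rw [Sigma.mk.injEq] at h'
      obtain ⟨rfl, h2⟩ := h'
      exact ⟨rfl, by simpa using h2⟩
  · rw [c.kill_ge j q (by omega), map_zero, if_neg]
    rintro ⟨rfl, rfl⟩; exact hq hp

theorem ext_gen (c : ChainBasis V) {F : Type*} [AddCommGroup F] [Module k F]
    (f g : M →ₗ[k] F) (h : ∀ j q, f ((V ^ q) (c.r j)) = g ((V ^ q) (c.r j))) : f = g := by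
  apply c.b.ext
  rintro ⟨j, q⟩
  rw [c.hb, h]

theorem co_pow (c : ChainBasis V) (i : c.ι) (p : ℕ) (hp : p < c.x i) (q : ℕ) (hq : q ≤ p) (w : M) :
    c.co i p ((V ^ q) w) = c.co i (p - q) w := by
  have : (c.co i p) ∘ₗ (V ^ q) = c.co i (p - q) := by
    apply c.ext_gen
    intro j s
    rw [LinearMap.comp_apply, ← Module.End.mul_apply, ← pow_add, c.co_gen i p hp,
      c.co_gen i (p - q) (by omega)]
    have : (j = i ∧ q + s = p) ↔ (j = i ∧ s = p - q) := by
      constructor <;> rintro ⟨h1, h2⟩ <;> exact ⟨h1, by omega⟩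
    simp only [this]
  rw [← this]; rfl

theorem co_pow_zero (c : ChainBasis V) (i : c.ι) (p : ℕ) (hp : p < c.x i) (q : ℕ) (hq : p < q)
    (w : M) : c.co i p ((V ^ q) w) = 0 := by
  have : (c.co i p) ∘ₗ (V ^ q) = 0 := by
    apply c.ext_gen
    intro j s
    rw [LinearMap.comp_apply, ← Module.End.mul_apply, ← pow_add, c.co_gen i p hp, if_neg]
    · rfl
    · rintro ⟨h1, h2⟩; omega
  exact LinearMap.congr_fun this w

theorem x_le (c : ChainBasis V) (m : ℕ) (hV : V ^ m = 0) (i : c.ι) : c.x i ≤ m := by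
  by_contra h
  have h1 := c.hb i ⟨m, by omega⟩
  rw [hV] at h1
  exact c.b.ne_zero _ h1

theorem co_eq_zero (c : ChainBasis V) (i : c.ι) (p y : ℕ) (w : M) (hw : (V ^ y) w = 0)
    (hp : p + y < c.x i) : c.co i p w = 0 := by
  have := c.co_pow i (p + y) hp y (by omega) w
  rw [hw, map_zero] at this
  rw [this]; congr 2; omega

end ChainBasis

end PA

section PB
open Polynomial DirectSum

theorem exists_basis_quot {k : Type*} [Field k] (n : ℕ) :
    ∃ b : Module.Basis (Fin n) k (k[X] ⧸ (k[X] ∙ (X : k[X]) ^ n)),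
      ∀ p, b p = Submodule.Quotient.mk ((X : k[X]) ^ (p : ℕ)) := by
  have hg : ((X : k[X]) ^ n).Monic := monic_X_pow n
  let b0 := (AdjoinRoot.powerBasis' hg).basis
  let b1 : Module.Basis (Fin n) k (AdjoinRoot ((X : k[X]) ^ n)) := b0.reindex (finCongr (by simp))
  have h : ∀ p, b1 p = AdjoinRoot.mk _ ((X : k[X]) ^ (p : ℕ)) := by
    intro p
    rw [Module.Basis.reindex_apply, PowerBasis.basis_eq_pow]
    simp
  exact ⟨b1, h⟩

theorem dfinsupp_basis_apply {ι R : Type*} [DecidableEq ι] [Semiring R] {M : ι → Type*}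
    [∀ i, AddCommMonoid (M i)] [∀ i, Module R (M i)] {η : ι → Type*}
    (b : ∀ i, Module.Basis (η i) R (M i)) (i : ι) (p : η i) :
    DFinsupp.basis b ⟨i, p⟩ = DFinsupp.single i (b i p) := by
  classical
  rw [Module.Basis.apply_eq_iff]
  ext ⟨j, q⟩
  simp only [DFinsupp.basis]
  by_cases h : i = j
  · subst h
    simp [Finsupp.single_apply]
  · simp [h, DFinsupp.single_apply]

theorem exists_chainBasis {k M : Type*} [Field k] [AddCommGroup M] [Module k M]
    [FiniteDimensional k M] (V : Module.End k M) (m : ℕ) (hV : V ^ m = 0) :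
    Nonempty (ChainBasis V) := by
  have hM : Module.IsTorsion' (Module.AEval' V) (Submonoid.powers (X : k[X])) := by
    intro x
    refine ⟨⟨X ^ m, m, rfl⟩, ?_⟩
    obtain ⟨y, rfl⟩ := (Module.AEval'.of V).surjective x
    change (X : k[X]) ^ m • (Module.AEval'.of V y) = _
    rw [Module.AEval'.X_pow_smul_of, hV]
    simp
  obtain ⟨d, n, ⟨e⟩⟩ := Module.torsion_by_prime_power_decomposition
    (R := k[X]) (p := X) irreducible_X hM
  choose bq hbq using fun i => exists_basis_quot (k := k) (n i)
  let e' : M ≃ₗ[k] (⨁ i : Fin d, k[X] ⧸ (k[X] ∙ (X : k[X]) ^ n i)) :=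
    (Module.AEval'.of V).trans (e.restrictScalars k)
  have hX : ∀ (p : ℕ) w, e' ((V ^ p) w) = (X : k[X]) ^ p • e' w := by
    intro p w
    have h : e (Module.AEval'.of V ((V ^ p) w)) = (X : k[X]) ^ p • e (Module.AEval'.of V w) := by
      rw [← map_smul, Module.AEval'.X_pow_smul_of]
      rfl
    exact h
  let B0 : Module.Basis (Σ i, Fin (n i)) k (⨁ i : Fin d, k[X] ⧸ (k[X] ∙ (X : k[X]) ^ n i)) :=
    DFinsupp.basis bq
  let r0 : Fin d → M := fun i => e'.symm (DirectSum.lof k[X] (Fin d) _ i (Submodule.Quotient.mk 1))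
  have hr : ∀ i p, (V ^ p) (r0 i) =
      e'.symm (DirectSum.lof k[X] (Fin d) _ i (Submodule.Quotient.mk ((X : k[X]) ^ p))) := by
    intro i p
    apply e'.injective
    rw [hX]
    simp only [r0, LinearEquiv.apply_symm_apply]
    rw [← map_smul, ← Submodule.Quotient.mk_smul]
    simp
  let σ : (Σ i, Fin (n i)) ≃ (Σ i : {i // 0 < n i}, Fin (n i)) :=
    { toFun := fun a => ⟨⟨a.1, a.2.pos⟩, a.2⟩
      invFun := fun a => ⟨a.1.1, a.2⟩
      left_inv := fun a => rfl
      right_inv := fun a => rfl }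
  refine ⟨{ ι := {i // 0 < n i}, fin := inferInstance, x := fun i => n i, r := fun i => r0 i,
            b := (B0.map e'.symm).reindex σ, hb := ?_, kill := ?_, pos := fun i => i.2 }⟩
  · intro i p
    rw [hr, Module.Basis.reindex_apply, Module.Basis.map_apply]
    congr 1
    change DFinsupp.basis bq ⟨i.1, p⟩ = _
    rw [dfinsupp_basis_apply, hbq]
    rfl
  · intro i
    rw [hr]
    have : (Submodule.Quotient.mk ((X : k[X]) ^ n i) : k[X] ⧸ (k[X] ∙ (X : k[X]) ^ n i)) = 0 := by
      rw [Submodule.Quotient.mk_eq_zero]; exact Submodule.mem_span_singleton_self _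
    rw [this]; simp

end PB

section PC
open Polynomial

/-- Zariski closure -/
def Cl {k : Type u} [Field k] {d e : ℕ} (A : Set (BSpace k d e)) : Set (BSpace k d e) :=
  {x | ∀ p : MvPolynomial (BIdx d e) k, MvPolynomial.eval (bCoords x) p ≠ 0 →
    ∃ y ∈ A, MvPolynomial.eval (bCoords y) p ≠ 0}

theorem exists_basic {k : Type u} [Field k] {d e : ℕ} (U : Set (BSpace k d e))
    (hU : @IsOpen _ (bTop k d e) U) (x : BSpace k d e) (hx : x ∈ U) :
    ∃ p : MvPolynomial (BIdx d e) k, MvPolynomial.eval (bCoords x) p ≠ 0 ∧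
      ∀ y, MvPolynomial.eval (bCoords y) p ≠ 0 → y ∈ U := by
  obtain ⟨W, hW, rfl⟩ := hU
  have key : ∀ W : Set (BIdx d e → k), TopologicalSpace.GenerateOpen
      {U | ∃ p : MvPolynomial (BIdx d e) k, U = {x | MvPolynomial.eval x p ≠ 0}} W →
      ∀ w ∈ W, ∃ p : MvPolynomial (BIdx d e) k, MvPolynomial.eval w p ≠ 0 ∧
      ∀ y, MvPolynomial.eval y p ≠ 0 → y ∈ W := by
    intro W hW
    induction hW with
    | basic s hs =>
      obtain ⟨p, rfl⟩ := hs
      intro w hw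
      exact ⟨p, hw, fun y hy => hy⟩
    | univ => intro w _; exact ⟨1, by simp, fun _ _ => trivial⟩
    | inter s t _ _ ihs iht =>
      intro w hw
      obtain ⟨p, hp, hp'⟩ := ihs w hw.1
      obtain ⟨q, hq, hq'⟩ := iht w hw.2
      refine ⟨p * q, by simp [hp, hq], fun y hy => ?_⟩
      rw [map_mul] at hy
      exact ⟨hp' y (left_ne_zero_of_mul hy), hq' y (right_ne_zero_of_mul hy)⟩
    | sUnion S _ ih =>
      intro w ⟨s, hs, hw⟩
      obtain ⟨p, hp, hp'⟩ := ih s hs w hw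
      exact ⟨p, hp, fun y hy => ⟨s, hs, hp' y hy⟩⟩
  obtain ⟨p, hp, hp'⟩ := key W hW _ hx
  exact ⟨p, hp, fun y hy => hp' _ hy⟩

theorem irred_of {k : Type u} [Field k] {d e : ℕ} (S G : Set (BSpace k d e))
    (hGS : G ⊆ S) (hSG : S ⊆ Cl G) (hne : S.Nonempty)
    (hG : ∀ p q : MvPolynomial (BIdx d e) k, (∃ x ∈ G, MvPolynomial.eval (bCoords x) p ≠ 0) →
      (∃ x ∈ G, MvPolynomial.eval (bCoords x) q ≠ 0) →
      ∃ x ∈ G, MvPolynomial.eval (bCoords x) p ≠ 0 ∧ MvPolynomial.eval (bCoords x) q ≠ 0) :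
    @IsIrreducible _ (bTop k d e) S := by
  refine ⟨hne, ?_⟩
  rintro U W hU hW ⟨x, hxS, hxU⟩ ⟨y, hyS, hyW⟩
  obtain ⟨p, hp, hp'⟩ := exists_basic U hU x hxU
  obtain ⟨q, hq, hq'⟩ := exists_basic W hW y hyW
  obtain ⟨z, hz, h1, h2⟩ := hG p q (hSG hxS p hp) (hSG hyS q hq)
  exact ⟨z, hGS hz, hp' z h1, hq' z h2⟩

theorem subset_Cl {k : Type u} [Field k] {d e : ℕ} (A : Set (BSpace k d e)) : A ⊆ Cl A :=
  fun x hx _ hp => ⟨x, hx, hp⟩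

theorem Cl_trans {k : Type u} [Field k] {d e : ℕ} {A B : Set (BSpace k d e)} (h : A ⊆ Cl B)
    {x : BSpace k d e} (hx : x ∈ Cl A) : x ∈ Cl B := by
  intro p hp
  obtain ⟨y, hy, hpy⟩ := hx p hp
  exact h hy p hpy

/-- polynomial functions of one variable -/
def PF (k : Type u) [Field k] : Subalgebra k (k → k) := (Polynomial.aeval (id : k → k)).range

theorem mem_PF {k : Type u} [Field k] {f : k → k} : f ∈ PF k ↔ ∃ q : k[X], ∀ t, f t = q.eval t := by
  have h : ∀ (q : k[X]) t, (Polynomial.aeval (id : k → k) q) t = q.eval t := by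
    intro q t
    induction q using Polynomial.induction_on' with
    | add p q hp hq => simp [hp, hq]
    | monomial n a => simp [Polynomial.aeval_monomial]
  constructor
  · rintro ⟨q, rfl⟩; exact ⟨q, fun t => h q t⟩
  · rintro ⟨q, hq⟩; exact ⟨q, funext fun t => by rw [hq]; exact h q t⟩

theorem PF_id (k : Type u) [Field k] : (fun t : k => t) ∈ PF k := mem_PF.2 ⟨X, by simp⟩
theorem PF_const {k : Type u} [Field k] (c : k) : (fun _ : k => c) ∈ PF k := mem_PF.2 ⟨C c, by simp⟩
theorem PF_add {k : Type u} [Field k] {f g : k → k} (hf : f ∈ PF k) (hg : g ∈ PF k) :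
    (fun t => f t + g t) ∈ PF k := (PF k).add_mem hf hg
theorem PF_mul {k : Type u} [Field k] {f g : k → k} (hf : f ∈ PF k) (hg : g ∈ PF k) :
    (fun t => f t * g t) ∈ PF k := (PF k).mul_mem hf hg
theorem PF_sum {k : Type u} [Field k] {ι : Type*} (s : Finset ι) {f : ι → k → k}
    (hf : ∀ i ∈ s, f i ∈ PF k) : (fun t => ∑ i ∈ s, f i t) ∈ PF k := by
  have := (PF k).sum_mem hf
  convert this using 1
  ext t; simp
theorem PF_prod {k : Type u} [Field k] {ι : Type*} (s : Finset ι) {f : ι → k → k}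
    (hf : ∀ i ∈ s, f i ∈ PF k) : (fun t => ∏ i ∈ s, f i t) ∈ PF k := by
  have := (PF k).prod_mem hf
  convert this using 1
  ext t; simp

theorem PF_finite {k : Type u} [Field k] {f : k → k} (hf : f ∈ PF k) (t0 : k) (h : f t0 ≠ 0) :
    {t | f t = 0}.Finite := by
  classical
  obtain ⟨q, hq⟩ := mem_PF.1 hf
  have hq0 : q ≠ 0 := by rintro rfl; simp [hq] at h
  refine (q.roots.toFinset.finite_toSet).subset ?_
  intro t ht
  change f t = 0 at ht
  rw [hq] at ht
  simp [hq0, ht]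

theorem PF_eval {k : Type u} [Field k] {ι : Type*} (p : MvPolynomial ι k) {f : ι → k → k}
    (hf : ∀ i, f i ∈ PF k) : (fun t => MvPolynomial.eval (fun i => f i t) p) ∈ PF k := by
  induction p using MvPolynomial.induction_on with
  | C a => simpa using PF_const a
  | add p q hp hq => simpa using PF_add hp hq
  | mul_X p i hp => simpa using PF_mul hp (hf i)

/-- matrix curves with polynomial entries -/
def PM {k : Type u} [Field k] {m n : Type*} (A : k → Matrix m n k) : Prop :=
  ∀ i j, (fun t => A t i j) ∈ PF k

theorem PM_const {k : Type u} [Field k] {m n : Type*} (A : Matrix m n k) : PM (fun _ => A) :=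
  fun i j => PF_const _
theorem PM_add {k : Type u} [Field k] {m n : Type*} {A B : k → Matrix m n k} (hA : PM A)
    (hB : PM B) : PM (fun t => A t + B t) := fun i j => PF_add (hA i j) (hB i j)
theorem PM_smul {k : Type u} [Field k] {m n : Type*} {a : k → k} {B : k → Matrix m n k}
    (hA : a ∈ PF k) (hB : PM B) : PM (fun t => a t • B t) := fun i j => PF_mul hA (hB i j)
theorem PM_mul {k : Type u} [Field k] {l m n : Type*} [Fintype m] {A : k → Matrix l m k}
    {B : k → Matrix m n k} (hA : PM A)
    (hB : PM B) : PM (fun t => A t * B t) := by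
  intro i j
  simp only [Matrix.mul_apply]
  exact PF_sum _ fun x _ => PF_mul (hA i x) (hB x j)
theorem PM_pow {k : Type u} [Field k] {m : Type*} [Fintype m] [DecidableEq m]
    {A : k → Matrix m m k} (hA : PM A) (N : ℕ) : PM (fun t => A t ^ N) := by
  induction N with
  | zero => simpa using PM_const 1
  | succ N ih => simpa [pow_succ] using PM_mul ih hA
theorem PM_det {k : Type u} [Field k] {m : Type*} [Fintype m] [DecidableEq m]
    {A : k → Matrix m m k} (hA : PM A) : (fun t => (A t).det) ∈ PF k := by
  simp only [Matrix.det_apply']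
  exact PF_sum _ fun σ _ => PF_mul (PF_const _) (PF_prod _ fun i _ => hA _ _)
theorem PM_adj {k : Type u} [Field k] {m : Type*} [Fintype m] [DecidableEq m]
    {A : k → Matrix m m k} (hA : PM A) : PM (fun t => (A t).adjugate) := by
  intro i j
  simp only [Matrix.adjugate_apply]
  apply PM_det
  intro a b
  by_cases h : a = j
  · subst h; simpa using PF_const _
  · simpa [Matrix.updateRow_ne h] using hA a b

/-- polynomial curves in `BSpace` -/
def PB {k : Type u} [Field k] {d e : ℕ} (c : k → BSpace k d e) : Prop :=
  PM (fun t => (c t).1) ∧ PM (fun t => (c t).2.1) ∧ PM (fun t => (c t).2.2)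

theorem PB_eval {k : Type u} [Field k] {d e : ℕ} {c : k → BSpace k d e} (hc : PB c)
    (p : MvPolynomial (BIdx d e) k) : (fun t => MvPolynomial.eval (bCoords (c t)) p) ∈ PF k := by
  have : ∀ i, (fun t => bCoords (c t) i) ∈ PF k := by
    rintro (i | i | i)
    · exact hc.1 _ _
    · exact hc.2.1 _ _
    · exact hc.2.2 _ _
  exact PF_eval p this

theorem curve_Cl {k : Type u} [Field k] [Infinite k] {d e : ℕ} {c : k → BSpace k d e} (hc : PB c)
    (A : Set (BSpace k d e)) (t0 : k) (hA : {t | c t ∉ A}.Finite) : c t0 ∈ Cl A := by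
  intro p hp
  have h1 := PF_finite (PB_eval hc p) t0 hp
  obtain ⟨t, ht⟩ := ((h1.union hA).infinite_compl).nonempty
  simp only [Set.mem_compl_iff, Set.mem_union, Set.mem_ofPred_eq, not_or, not_not] at ht
  exact ⟨c t, ht.2, ht.1⟩

/-- semicontinuity of rank -/
theorem PM_rank {k : Type u} [Field k] {m n : Type} [Fintype m] [DecidableEq m] [Fintype n]
    [DecidableEq n] {A : k → Matrix m n k} (hA : PM A) (t0 : k) :
    {t | (A t).rank < (A t0).rank}.Finite := by
  obtain ⟨r, hr⟩ : ∃ r, r = (A t0).rank := ⟨_, rfl⟩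
  obtain ⟨P, Q, hPQ⟩ : ∃ (P : Matrix (Fin r) m k) (Q : Matrix n (Fin r) k),
      P * A t0 * Q = 1 := by
    let f := Matrix.toLin' (A t0)
    have hfr : Module.finrank k (LinearMap.range f) = r := by
      rw [hr, Matrix.rank, ← Matrix.toLin'_apply']
    let E : (LinearMap.range f) ≃ₗ[k] (Fin r → k) :=
      LinearEquiv.ofFinrankEq _ _ (by rw [hfr]; simp)
    obtain ⟨s, hs⟩ := LinearMap.exists_rightInverse_of_surjective f.rangeRestrict
      f.range_rangeRestrict
    obtain ⟨ρ, hρ⟩ := LinearMap.exists_leftInverse_of_injective (LinearMap.range f).subtype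
      (Submodule.ker_subtype _)
    refine ⟨LinearMap.toMatrix' (E.toLinearMap ∘ₗ ρ), LinearMap.toMatrix' (s ∘ₗ E.symm.toLinearMap),
      ?_⟩
    apply Matrix.toLin'.injective
    rw [Matrix.toLin'_mul, Matrix.toLin'_mul, Matrix.toLin'_toMatrix', Matrix.toLin'_toMatrix',
      Matrix.toLin'_one]
    refine LinearMap.ext fun v => ?_
    have h1 : (f (s (E.symm v)) : m → k) = (LinearMap.range f).subtype (E.symm v) := by
      have := LinearMap.congr_fun hs (E.symm v)
      exact congrArg Subtype.val this
    have h2 := LinearMap.congr_fun hρ (E.symm v)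
    simp only [LinearMap.comp_apply, LinearEquiv.coe_coe, LinearMap.id_apply] at h2 ⊢
    change E (ρ (f (s (E.symm v)))) = v
    rw [h1, h2]; simp
  have hdet := PM_det (PM_mul (PM_mul (PM_const P) hA) (PM_const Q))
  refine (PF_finite hdet t0 (by simp [hPQ])).subset ?_
  intro t ht
  simp only [Set.mem_ofPred_eq] at ht ⊢
  by_contra h
  have h1 : (P * A t * Q).rank = r := by
    rw [Matrix.rank_of_isUnit _ ((Matrix.isUnit_iff_isUnit_det _).2 (isUnit_iff_ne_zero.2 h))]
    simp
  have h2 := Matrix.rank_mul_le_left (P * A t) Q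
  have h3 := Matrix.rank_mul_le_right P (A t)
  omega
end PC

section PD

/-- constructor -/
def mkB {k : Type u} [Field k] {d e : ℕ} (V : Matrix (Fin d) (Fin d) k)
    (U : Matrix (Fin e) (Fin e) k) (Z : Matrix (Fin d) (Fin e) k) : BSpace k d e := (V, U, Z)

/-- the variety -/
def BS (k : Type u) [Field k] (m d e : ℕ) : Set (BSpace k d e) :=
  {x : BSpace k d e | x.1 ^ m = 0 ∧ x.2.1 ^ m = 0 ∧
        ∑ i ∈ Finset.range m, x.1 ^ (m - 1 - i) * x.2.2 * x.2.1 ^ i = 0}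

abbrev EE (k : Type u) (d e : ℕ) : Type u := (Fin d → k) × (Fin e → k)

variable {k : Type u} [Field k] {d e : ℕ}

abbrev LV (x : BSpace k d e) : Module.End k (Fin d → k) := Matrix.toLin' x.1
abbrev LU (x : BSpace k d e) : Module.End k (Fin e → k) := Matrix.toLin' x.2.1
abbrev LZ (x : BSpace k d e) : (Fin e → k) →ₗ[k] (Fin d → k) := Matrix.toLin' x.2.2

/-- the total operator -/
def Tmap (x : BSpace k d e) : Module.End k (EE k d e) :=
  LinearMap.prod (LV x ∘ₗ LinearMap.fst k _ _ + LZ x ∘ₗ LinearMap.snd k _ _)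
    (LU x ∘ₗ LinearMap.snd k _ _)

theorem Tmap_apply (x : BSpace k d e) (v : EE k d e) :
    Tmap x v = (LV x v.1 + LZ x v.2, LU x v.2) := rfl

theorem Tmap_pow (x : BSpace k d e) (N : ℕ) (v : EE k d e) :
    (Tmap x ^ N) v = (((LV x) ^ N) v.1 +
      ∑ i ∈ Finset.range N, ((LV x) ^ (N - 1 - i)) (LZ x (((LU x) ^ i) v.2)), ((LU x) ^ N) v.2) := by
  induction N with
  | zero => simp
  | succ N ih =>
    rw [pow_succ', Module.End.mul_apply, ih, Tmap_apply]
    simp only [map_add, map_sum]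
    ext1
    · simp only []
      rw [Finset.sum_range_succ, pow_succ', Module.End.mul_apply, add_assoc]
      congr 2
      · apply Finset.sum_congr rfl
        intro i hi
        have := Finset.mem_range.1 hi
        rw [show N + 1 - 1 - i = (N - 1 - i) + 1 by omega, pow_succ', Module.End.mul_apply]
      · simp
    · simp only []
      rw [pow_succ', Module.End.mul_apply]

theorem Tmap_pow_inl (x : BSpace k d e) (N : ℕ) (w : Fin d → k) :
    (Tmap x ^ N) (w, 0) = (((LV x) ^ N) w, 0) := by
  rw [Tmap_pow]; simp

theorem Tmap_pow_snd (x : BSpace k d e) (N : ℕ) (v : EE k d e) :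
    ((Tmap x ^ N) v).2 = ((LU x) ^ N) v.2 := by
  rw [Tmap_pow]

theorem toLin'_pow' {n : ℕ} (A : Matrix (Fin n) (Fin n) k) (N : ℕ) :
    Matrix.toLin' (A ^ N) = (Matrix.toLin' A) ^ N := Matrix.toLin'_pow A N

theorem mem_BS (m : ℕ) (x : BSpace k d e) : x ∈ BS k m d e ↔ (Tmap x) ^ m = 0 := by
  have h1 : x.1 ^ m = 0 ↔ (LV x) ^ m = 0 := by
    rw [LV, ← toLin'_pow', LinearEquiv.map_eq_zero_iff]
  have h2 : x.2.1 ^ m = 0 ↔ (LU x) ^ m = 0 := by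
    rw [LU, ← toLin'_pow', LinearEquiv.map_eq_zero_iff]
  have h3 : ∑ i ∈ Finset.range m, x.1 ^ (m - 1 - i) * x.2.2 * x.2.1 ^ i = 0 ↔
      ∑ i ∈ Finset.range m, ((LV x) ^ (m - 1 - i)) ∘ₗ (LZ x) ∘ₗ ((LU x) ^ i) = 0 := by
    rw [← (Matrix.toLin' (R := k) (m := Fin d) (n := Fin e)).map_eq_zero_iff, map_sum]
    simp only [Matrix.toLin'_mul, toLin'_pow', LV, LU, LZ, LinearMap.comp_assoc]
  change (x.1 ^ m = 0 ∧ x.2.1 ^ m = 0 ∧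
        ∑ i ∈ Finset.range m, x.1 ^ (m - 1 - i) * x.2.2 * x.2.1 ^ i = 0) ↔ _
  rw [h1, h2, h3]
  constructor
  · rintro ⟨a1, a2, a3⟩
    refine LinearMap.ext fun v => ?_
    rw [Tmap_pow, a1, a2]
    have := LinearMap.congr_fun a3 v.2
    simp only [LinearMap.sum_apply, LinearMap.comp_apply, LinearMap.zero_apply] at this
    rw [this]; simp
  · intro h
    have hh : ∀ v, _ := fun v => LinearMap.congr_fun h v
    simp only [Tmap_pow, LinearMap.zero_apply, Prod.mk_eq_zero] at hh
    refine ⟨?_, ?_, ?_⟩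
    · refine LinearMap.ext fun w => ?_
      have := (hh (w, 0)).1
      simpa using this
    · refine LinearMap.ext fun w => ?_
      exact (hh (0, w)).2
    · refine LinearMap.ext fun w => ?_
      have := (hh (0, w)).1
      simpa using this

/-- back to matrices -/
def ofEnd (F : Module.End k (EE k d e)) : BSpace k d e :=
  mkB (LinearMap.toMatrix' (LinearMap.fst k _ _ ∘ₗ F ∘ₗ LinearMap.inl k _ _))
   (LinearMap.toMatrix' (LinearMap.snd k _ _ ∘ₗ F ∘ₗ LinearMap.inr k _ _))
   (LinearMap.toMatrix' (LinearMap.fst k _ _ ∘ₗ F ∘ₗ LinearMap.inr k _ _))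

theorem LV_ofEnd (F : Module.End k (EE k d e)) :
    LV (ofEnd F) = LinearMap.fst k _ _ ∘ₗ F ∘ₗ LinearMap.inl k _ _ := Matrix.toLin'_toMatrix' _
theorem LU_ofEnd (F : Module.End k (EE k d e)) :
    LU (ofEnd F) = LinearMap.snd k _ _ ∘ₗ F ∘ₗ LinearMap.inr k _ _ := Matrix.toLin'_toMatrix' _
theorem LZ_ofEnd (F : Module.End k (EE k d e)) :
    LZ (ofEnd F) = LinearMap.fst k _ _ ∘ₗ F ∘ₗ LinearMap.inr k _ _ := Matrix.toLin'_toMatrix' _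

theorem Tmap_ofEnd (F : Module.End k (EE k d e)) (hF : ∀ w, (F (w, 0)).2 = 0) :
    Tmap (ofEnd F) = F := by
  refine LinearMap.ext fun v => ?_
  rw [Tmap_apply, LV_ofEnd, LU_ofEnd, LZ_ofEnd]
  have hv : v = (v.1, 0) + (0, v.2) := by simp
  have h2 : F v = F (v.1, 0) + F (0, v.2) := by rw [← map_add, ← hv]
  rw [h2]
  ext1
  · simp
  · simp [hF]

theorem ofEnd_Tmap (x : BSpace k d e) : ofEnd (Tmap x) = x := by
  have h1 : LV (ofEnd (Tmap x)) = LV x := by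
    rw [LV_ofEnd]; refine LinearMap.ext fun v => ?_; simp [Tmap_apply]
  have h2 : LU (ofEnd (Tmap x)) = LU x := by
    rw [LU_ofEnd]; refine LinearMap.ext fun v => ?_; simp [Tmap_apply]
  have h3 : LZ (ofEnd (Tmap x)) = LZ x := by
    rw [LZ_ofEnd]; refine LinearMap.ext fun v => ?_; simp [Tmap_apply]
  exact Prod.ext (Matrix.toLin'.injective h1) (Prod.ext (Matrix.toLin'.injective h2)
    (Matrix.toLin'.injective h3))

theorem PM_toMatrix' {m n : ℕ} (F G : (Fin n → k) →ₗ[k] (Fin m → k)) :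
    PM (fun t : k => LinearMap.toMatrix' (F + t • G)) := by
  have := PM_add (PM_const (LinearMap.toMatrix' F)) (PM_smul (PF_id k)
    (PM_const (LinearMap.toMatrix' G)))
  simpa using this

theorem PB_ofEnd (F G : Module.End k (EE k d e)) : PB (fun t : k => ofEnd (F + t • G)) := by
  refine ⟨?_, ?_, ?_⟩
  · convert PM_toMatrix' (LinearMap.fst k _ _ ∘ₗ F ∘ₗ LinearMap.inl k _ _)
      (LinearMap.fst k _ _ ∘ₗ G ∘ₗ LinearMap.inl k _ _) using 2 with t
    exact congrArg LinearMap.toMatrix' (LinearMap.ext fun v => by simp)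
  · convert PM_toMatrix' (LinearMap.snd k _ _ ∘ₗ F ∘ₗ LinearMap.inr k _ _)
      (LinearMap.snd k _ _ ∘ₗ G ∘ₗ LinearMap.inr k _ _) using 2 with t
    exact congrArg LinearMap.toMatrix' (LinearMap.ext fun v => by simp)
  · convert PM_toMatrix' (LinearMap.fst k _ _ ∘ₗ F ∘ₗ LinearMap.inr k _ _)
      (LinearMap.fst k _ _ ∘ₗ G ∘ₗ LinearMap.inr k _ _) using 2 with t
    exact congrArg LinearMap.toMatrix' (LinearMap.ext fun v => by simp)

/-- the measure -/
def rk (m : ℕ) (x : BSpace k d e) : ℕ :=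
  ∑ i ∈ Finset.range m, ((x.1 ^ i).rank + (x.2.1 ^ i).rank)

def StepUp (m : ℕ) (x : BSpace k d e) : Prop := x ∈ Cl {y | y ∈ BS k m d e ∧ rk m x < rk m y}

theorem move_stepUp [Infinite k] (m : ℕ) (x : BSpace k d e) (S : Module.End k (EE k d e))
    (hS : ∀ w, (S (w, 0)).2 = 0) (hp : ∀ t : k, (Tmap x + t • S) ^ m = 0) (a : ℕ) (ha : a < m)
    (hr : ∀ t : k, t ≠ 0 → Module.finrank k (LinearMap.range ((LV x) ^ a)) <
      Module.finrank k (LinearMap.range ((LinearMap.fst k _ _ ∘ₗ (Tmap x + t • S) ∘ₗ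
        LinearMap.inl k _ _ : Module.End k (Fin d → k)) ^ a))) : StepUp m x := by
  let c : k → BSpace k d e := fun t => ofEnd (Tmap x + t • S)
  have hc : PB c := PB_ofEnd _ _
  have hc0 : c 0 = x := by simp [c, ofEnd_Tmap]
  have hT : ∀ t, Tmap (c t) = Tmap x + t • S := by
    intro t
    apply Tmap_ofEnd
    intro w
    simp [hS, Tmap_apply]
  have := curve_Cl hc {y | y ∈ BS k m d e ∧ rk m x < rk m y} 0 ?_
  · rw [hc0] at this; exact this
  have f1 : ∀ i, {t | ((c t).1 ^ i).rank < ((c 0).1 ^ i).rank}.Finite :=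
    fun i => PM_rank (PM_pow hc.1 i) 0
  have f2 : ∀ i, {t | ((c t).2.1 ^ i).rank < ((c 0).2.1 ^ i).rank}.Finite :=
    fun i => PM_rank (PM_pow hc.2.1 i) 0
  have f3 : ({0} ∪ ⋃ i ∈ Finset.range m, ({t | ((c t).1 ^ i).rank < ((c 0).1 ^ i).rank} ∪
      {t | ((c t).2.1 ^ i).rank < ((c 0).2.1 ^ i).rank})).Finite := by
    refine (Set.finite_singleton _).union ?_
    exact Set.Finite.biUnion (Finset.finite_toSet _) fun i _ => (f1 i).union (f2 i)
  refine f3.subset ?_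
  intro t ht
  by_contra hcon
  apply ht
  simp only [Set.mem_union, Set.mem_singleton_iff, Set.mem_iUnion, not_or, not_exists,
    Set.mem_ofPred_eq, not_lt, hc0] at hcon
  obtain ⟨ht0, hle⟩ := hcon
  refine ⟨?_, ?_⟩
  · rw [mem_BS, hT]; exact hp t
  · apply Finset.sum_lt_sum
    · intro i hi
      exact add_le_add (hle i hi).1 (hle i hi).2
    · refine ⟨a, Finset.mem_range.2 ha, ?_⟩
      apply add_lt_add_of_lt_of_le _ (hle a (Finset.mem_range.2 ha)).2
      rw [Matrix.rank, Matrix.rank, ← Matrix.toLin'_apply', ← Matrix.toLin'_apply', toLin'_pow',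
        toLin'_pow']
      have := hr t ht0
      rw [← LV_ofEnd] at this
      exact this
end PD

section PE

namespace ChainBasis
variable {k M : Type*} [Field k] [AddCommGroup M] [Module k M] {V : Module.End k M}

theorem co_gen_ne (c : ChainBasis V) (i : c.ι) (p : ℕ) (hp : p < c.x i) (j : c.ι) (q : ℕ)
    (h : ¬ (j = i ∧ q = p)) : (c.co i p) ((V ^ q) (c.r j)) = 0 := by
  rw [c.co_gen i p hp, if_neg h]

theorem co_gen_self (c : ChainBasis V) (i : c.ι) (p : ℕ) (hp : p < c.x i) :
    (c.co i p) ((V ^ p) (c.r i)) = 1 := by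
  rw [c.co_gen i p hp, if_pos ⟨rfl, rfl⟩]

/-- the functional -/
def th (c : ChainBasis V) (i0 i1 : c.ι) (y : ℕ) (z : M) : M →ₗ[k] k :=
  (c.co i1 0 z) • c.co i0 (c.x i0 - y) - (c.co i0 (c.x i0 - y) z) • c.co i1 0

theorem th_apply (c : ChainBasis V) (i0 i1 : c.ι) (y : ℕ) (z w : M) : c.th i0 i1 y z w =
  (c.co i1 0 z) * c.co i0 (c.x i0 - y) w - (c.co i0 (c.x i0 - y) z) * c.co i1 0 w := rfl

theorem th_pow (c : ChainBasis V) (i0 i1 : c.ι) (y : ℕ) (hb : c.x i1 ≤ y) (hy : y ≤ c.x i0)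
    (z w : M) (q : ℕ) (hq : c.x i0 - y < q) : c.th i0 i1 y z ((V ^ q) w) = 0 := by
  have := c.pos i1
  rw [th_apply, c.co_pow_zero i0 _ (by omega) q hq, c.co_pow_zero i1 0 (c.pos i1) q (by omega)]
  simp

theorem th_z (c : ChainBasis V) (i0 i1 : c.ι) (y : ℕ) (hb : c.x i1 ≤ y) (hy : y ≤ c.x i0)
    (z : M) (hz : (V ^ y) z = 0) (p : ℕ) : c.th i0 i1 y z ((V ^ p) z) = 0 := by
  have := c.pos i1
  rcases Nat.eq_zero_or_pos p with rfl | hp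
  · rw [th_apply]; simp; ring
  · rcases le_or_gt p (c.x i0 - y) with h | h
    · rw [th_apply, c.co_pow_zero i1 0 (c.pos i1) p hp, c.co_pow i0 _ (by omega) p h,
        c.co_eq_zero i0 (c.x i0 - y - p) y z hz (by omega)]
      simp
    · exact c.th_pow i0 i1 y hb hy z z p h

theorem th_small (c : ChainBasis V) (i0 i1 : c.ι) (y : ℕ) (hb : c.x i1 ≤ y) (hy : y ≤ c.x i0)
    (z w : M) (y' : ℕ) (hy' : y' < c.x i1) (hw : (V ^ y') w = 0) : c.th i0 i1 y z w = 0 := by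
  rw [th_apply, c.co_eq_zero i0 _ y' w hw (by omega), c.co_eq_zero i1 0 y' w hw (by omega)]
  simp

theorem th_rank [FiniteDimensional k M] (c : ChainBasis V) (i0 i1 : c.ι) (hne : i0 ≠ i1)
    (y : ℕ) (hb : c.x i1 ≤ y) (hy : y ≤ c.x i0)
    (z : M) (hz : (V ^ y) z = 0) (h1 : c.co i0 (c.x i0 - y) z ≠ 0) (h2 : c.co i1 0 z ≠ 0)
    (t : k) (ht : t ≠ 0) :
    Module.finrank k (LinearMap.range (V ^ (c.x i0))) < Module.finrank k (LinearMap.range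
      ((V + t • ((c.th i0 i1 y z).smulRight z : Module.End k M)) ^ (c.x i0))) := by
  have hpos := c.pos i1
  have key : (V + t • ((c.th i0 i1 y z).smulRight z : Module.End k M)) ^ (c.x i0) =
      V ^ (c.x i0) + ((t • ((c.th i0 i1 y z) ∘ₗ (V ^ (c.x i0 - y)))).smulRight ((V ^ (y-1)) z)
        : Module.End k M) := by
    refine LinearMap.ext fun w => ?_
    rw [rankOne_pow V _ z (c.th_z i0 i1 y hb hy z hz)]
    rw [Finset.sum_eq_single (c.x i0 - y)]
    · rw [show c.x i0 - 1 - (c.x i0 - y) = y - 1 by omega]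
      simp [mul_smul]
    · intro q hq hne
      have hq := Finset.mem_range.1 hq
      rcases lt_or_gt_of_ne hne with h | h
      · rw [show c.x i0 - 1 - q = (c.x i0 - 1 - q - y) + y by omega, pow_add,
          Module.End.mul_apply, hz]
        simp
      · rw [c.th_pow i0 i1 y hb hy z w q h]; simp
    · intro h
      exfalso; apply h; rw [Finset.mem_range]; omega
  rw [key]
  refine rank_add_lt _ _ _ (c.r i0) (c.kill i0) ?_ ?_
  · have h3 : c.th i0 i1 y z ((V ^ (c.x i0 - y)) (c.r i0)) = c.co i1 0 z := by
      rw [th_apply, c.co_gen_self i0 _ (by omega), c.co_gen_ne i1 0 hpos]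
      · simp
      · rintro ⟨h, _⟩; exact hne h
    simp [h3, ht, h2]
  · rintro ⟨w, hw⟩
    have h3 := c.co_pow i0 (c.x i0 - 1) (by omega) (y - 1) (by omega) z
    rw [← hw, c.co_pow_zero i0 _ (by omega) _ (by omega)] at h3
    apply h1
    rw [h3]; congr 2; omega
end ChainBasis

variable {k : Type u} [Field k] {d e : ℕ}

/-- section of the projection -/
def sec (x : BSpace k d e) (c : ChainBasis (LU x)) : (Fin e → k) →ₗ[k] EE k d e :=
  c.b.constr k (fun a => (Tmap x ^ (a.2 : ℕ)) ((0, c.r a.1) : EE k d e))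

theorem sec_gen (x : BSpace k d e) (c : ChainBasis (LU x)) (j : c.ι) (q : ℕ) (hq : q < c.x j) :
    sec x c (((LU x) ^ q) (c.r j)) = (Tmap x ^ q) ((0, c.r j) : EE k d e) := by
  have := c.hb j ⟨q, hq⟩
  simp only at this
  rw [← this, sec, Module.Basis.constr_basis]

theorem snd_sec (x : BSpace k d e) (c : ChainBasis (LU x)) (w : Fin e → k) :
    (sec x c w).2 = w := by
  have : LinearMap.snd k (Fin d → k) (Fin e → k) ∘ₗ sec x c = LinearMap.id := by
    apply c.b.ext
    rintro ⟨j, q⟩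
    rw [c.hb, LinearMap.comp_apply, sec_gen x c j q q.2]
    simp [Tmap_pow_snd]
  exact LinearMap.congr_fun this w

/-- extension of functionals -/
def ext (x : BSpace k d e) (c : ChainBasis (LU x)) (θ : (Fin d → k) →ₗ[k] k) : EE k d e →ₗ[k] k :=
  θ ∘ₗ (LinearMap.fst k _ _ - LinearMap.fst k _ _ ∘ₗ sec x c ∘ₗ LinearMap.snd k _ _)

theorem ext_inl (x : BSpace k d e) (c : ChainBasis (LU x)) (θ : (Fin d → k) →ₗ[k] k)
    (w : Fin d → k) : ext x c θ (w, 0) = θ w := by simp [ext]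

theorem ext_gen (x : BSpace k d e) (c : ChainBasis (LU x)) (θ : (Fin d → k) →ₗ[k] k)
    (j : c.ι) (q : ℕ) (hq : q < c.x j) :
    ext x c θ ((Tmap x ^ q) ((0, c.r j) : EE k d e)) = 0 := by
  simp only [ext, LinearMap.comp_apply, LinearMap.sub_apply, LinearMap.snd_apply, Tmap_pow_snd,
    LinearMap.fst_apply, sec_gen x c j q hq, sub_self, map_zero]

theorem span_E (x : BSpace k d e) (c : ChainBasis (LU x)) (f : EE k d e →ₗ[k] k)
    (h1 : ∀ w, f (w, 0) = 0) (h2 : ∀ j q, f ((Tmap x ^ q) ((0, c.r j) : EE k d e)) = 0) : f = 0 := by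
  have h3 : f ∘ₗ sec x c = 0 := by
    apply c.b.ext
    rintro ⟨j, q⟩
    rw [c.hb, LinearMap.comp_apply, sec_gen x c j q q.2, h2]; simp
  refine LinearMap.ext fun v => ?_
  have h4 : v = ((v - sec x c v.2).1, 0) + sec x c v.2 := by
    ext1
    · simp
    · simp [snd_sec]
  rw [h4, map_add, h1]
  have := LinearMap.congr_fun h3 v.2
  simp only [LinearMap.comp_apply] at this
  rw [this]; simp

/-- end vector of a chain -/
def zz (x : BSpace k d e) (c : ChainBasis (LU x)) (j : c.ι) : Fin d → k :=
  ((Tmap x ^ (c.x j)) ((0, c.r j) : EE k d e)).1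

theorem pow_zz (x : BSpace k d e) (c : ChainBasis (LU x)) (j : c.ι) (q : ℕ) (hq : c.x j ≤ q) :
    (Tmap x ^ q) ((0, c.r j) : EE k d e) = (((LV x) ^ (q - c.x j)) (zz x c j), 0) := by
  have h : (Tmap x ^ (c.x j)) ((0, c.r j) : EE k d e) = (zz x c j, 0) := by
    ext1
    · rfl
    · rw [Tmap_pow_snd]; exact c.kill j
  rw [← Nat.sub_add_cancel hq, pow_add, Module.End.mul_apply, h, Tmap_pow_inl]
  simp

theorem zz_kill (m : ℕ) (x : BSpace k d e) (hx : x ∈ BS k m d e) (c : ChainBasis (LU x)) (j : c.ι) :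
    ((LV x) ^ (m - c.x j)) (zz x c j) = 0 := by
  rw [mem_BS] at hx
  have hU : (LU x) ^ m = 0 := by
    refine LinearMap.ext fun w => ?_
    have := Tmap_pow_snd x m (0, w)
    rw [hx] at this
    simpa using this.symm
  have h := pow_zz x c j m (c.x_le m hU j)
  rw [hx] at h
  have := congrArg Prod.fst h
  exact this.symm

theorem caseM1 [Infinite k] (m : ℕ) (x : BSpace k d e) (hx : x ∈ BS k m d e)
    (c : ChainBasis (LV x)) (cU : ChainBasis (LU x)) (i0 i1 : c.ι) (hne : i0 ≠ i1)
    (hba : c.x i1 ≤ c.x i0) (ha : c.x i0 < m)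
    (hU : ∀ j, ¬ (c.x i1 ≤ m - cU.x j ∧ m - cU.x j ≤ c.x i0)) : StepUp m x := by
  have hpos := c.pos i1
  have hT := (mem_BS m x).1 hx
  obtain ⟨z, hzdef⟩ : ∃ z, z = ((LV x) ^ (c.x i0 - c.x i1)) (c.r i0) + c.r i1 := ⟨_, rfl⟩
  have hz : ((LV x) ^ (c.x i1)) z = 0 := by
    rw [hzdef, map_add, c.kill, ← Module.End.mul_apply, ← pow_add, Nat.add_sub_cancel' hba, c.kill]
    simp
  have hr1 : c.r i1 = ((LV x) ^ 0) (c.r i1) := by simp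
  have h1 : c.co i0 (c.x i0 - c.x i1) z = 1 := by
    rw [hzdef, map_add, c.co_gen_self _ _ (by omega), hr1, c.co_gen_ne _ _ (by omega)]
    · simp
    · rintro ⟨h, _⟩; exact hne h.symm
  have h2 : c.co i1 0 z = 1 := by
    rw [hzdef, map_add, hr1, c.co_gen_self _ _ (by omega), c.co_gen_ne _ _ (by omega)]
    · simp
    · rintro ⟨h, _⟩; exact hne h
  let θ := c.th i0 i1 (c.x i1) z
  let θt := ext x cU θ
  let S : Module.End k (EE k d e) := θt.smulRight ((z, 0) : EE k d e)
  have hzz : ∀ p, θt ((Tmap x ^ p) (z, 0)) = 0 := by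
    intro p
    rw [Tmap_pow_inl, ext_inl]
    exact c.th_z i0 i1 _ le_rfl hba z hz p
  refine move_stepUp m x S ?_ ?_ (c.x i0) ha ?_
  · intro w; simp [S]
  · intro t
    refine LinearMap.ext fun v => ?_
    rw [rankOne_pow (Tmap x) θt (z, 0) hzz t m v, hT, Finset.sum_eq_zero]
    · simp
    · intro q hq
      have hq := Finset.mem_range.1 hq
      rcases le_or_gt (c.x i1) (m - 1 - q) with h | h
      · rw [Tmap_pow_inl, show m - 1 - q = (m - 1 - q - c.x i1) + c.x i1 by omega, pow_add,
          Module.End.mul_apply, hz]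
        simp
      · have : θt ∘ₗ (Tmap x ^ q) = 0 := by
          apply span_E x cU
          · intro w
            rw [LinearMap.comp_apply, Tmap_pow_inl, ext_inl]
            exact c.th_pow i0 i1 _ le_rfl hba z w q (by omega)
          · intro j r
            rw [LinearMap.comp_apply, ← Module.End.mul_apply, ← pow_add]
            rcases lt_or_ge (q + r) (cU.x j) with h' | h'
            · exact ext_gen x cU θ j _ h'
            · rw [pow_zz x cU j _ h', ext_inl]
              have hk := zz_kill m x hx cU j
              have := hU j
              rcases lt_or_ge (m - cU.x j) (c.x i1) with h3 | h3
              · apply c.th_small i0 i1 _ le_rfl hba z _ (m - cU.x j) h3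
                rw [← Module.End.mul_apply, ← pow_add, add_comm, pow_add, Module.End.mul_apply, hk,
                  map_zero]
              · apply c.th_pow i0 i1 _ le_rfl hba
                omega
        have := LinearMap.congr_fun this v
        simp only [LinearMap.comp_apply] at this
        rw [this]; simp
  · intro t ht
    have := c.th_rank i0 i1 hne _ le_rfl hba z hz (by rw [h1]; exact one_ne_zero)
      (by rw [h2]; exact one_ne_zero) t ht
    have e0 : (LinearMap.fst k _ _ ∘ₗ (Tmap x + t • S) ∘ₗ
        LinearMap.inl k _ _ : Module.End k (Fin d → k)) = LV x + t • (θ.smulRight z) := by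
      refine LinearMap.ext fun w => ?_
      simp [S, Tmap_apply, θt, ext_inl]
    rw [e0]; exact this

theorem caseM2gen [Infinite k] (m : ℕ) (x : BSpace k d e) (hx : x ∈ BS k m d e)
    (c : ChainBasis (LV x)) (cU : ChainBasis (LU x)) (i0 i1 : c.ι) (hne : i0 ≠ i1)
    (ha : c.x i0 < m) (j : cU.ι) (hb : c.x i1 ≤ m - cU.x j) (hy : m - cU.x j ≤ c.x i0)
    (h1 : c.co i0 (c.x i0 - (m - cU.x j)) (zz x cU j) ≠ 0)
    (h2 : c.co i1 0 (zz x cU j) ≠ 0) : StepUp m x := by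
  have hpos := c.pos i1
  have hT := (mem_BS m x).1 hx
  have hz := zz_kill m x hx cU j
  obtain ⟨y, hydef⟩ : ∃ y, y = m - cU.x j := ⟨_, rfl⟩
  rw [← hydef] at hz hb hy h1
  let z := zz x cU j
  let θ := c.th i0 i1 y z
  let θt := ext x cU θ
  let g : EE k d e := (0, cU.r j)
  have hg : ∀ p, θt ((Tmap x ^ p) g) = 0 := by
    intro p
    rcases lt_or_ge p (cU.x j) with h | h
    · exact ext_gen x cU θ j p h
    · rw [pow_zz x cU j p h, ext_inl]
      exact c.th_z i0 i1 y hb hy z hz _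
  obtain ⟨n, hn⟩ : ∃ n, n = c.x i0 - y + 1 := ⟨_, rfl⟩
  let D : Module.End k (EE k d e) := ∑ q ∈ Finset.range n,
    ((θt ∘ₗ (Tmap x ^ q)).smulRight ((Tmap x ^ (cU.x j - 1 - q)) g))
  have hD : ∀ v, D v = ∑ q ∈ Finset.range n, θt ((Tmap x ^ q) v) • ((Tmap x ^ (cU.x j - 1 - q)) g) := by
    intro v; simp [D]
  have hDg : ∀ p, D ((Tmap x ^ p) g) = 0 := by
    intro p
    rw [hD]
    apply Finset.sum_eq_zero
    intro q _
    rw [← Module.End.mul_apply, ← pow_add, hg]; simp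
  have hDD : D * D = 0 := by
    refine LinearMap.ext fun v => ?_
    rw [Module.End.mul_apply, hD v, map_sum]
    apply Finset.sum_eq_zero
    intro q _
    rw [map_smul, hDg]; simp
  have hDTD : D * Tmap x * D = 0 := by
    refine LinearMap.ext fun v => ?_
    rw [Module.End.mul_apply, Module.End.mul_apply, hD v, map_sum, map_sum]
    apply Finset.sum_eq_zero
    intro q _
    rw [map_smul, map_smul, ← Module.End.mul_apply (Tmap x), ← pow_succ', hDg]; simp
  let S : Module.End k (EE k d e) := Tmap x * D - D * Tmap x
  have hSv : ∀ v, S v = θt v • ((z, 0) : EE k d e) -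
      θt ((Tmap x ^ n) v) • ((Tmap x ^ (cU.x j - n)) g) := by
    intro v
    have e1 : S v = ∑ q ∈ Finset.range n,
        (θt ((Tmap x ^ q) v) • ((Tmap x ^ (cU.x j - q)) g) -
        θt ((Tmap x ^ (q+1)) v) • ((Tmap x ^ (cU.x j - (q+1))) g)) := by
      rw [Finset.sum_sub_distrib]
      change Tmap x (D v) - D (Tmap x v) = _
      rw [hD, hD, map_sum]
      congr 1
      · apply Finset.sum_congr rfl
        intro q hq
        have hq := Finset.mem_range.1 hq
        rw [map_smul, ← Module.End.mul_apply (Tmap x), ← pow_succ',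
          show cU.x j - 1 - q + 1 = cU.x j - q by omega]
      · apply Finset.sum_congr rfl
        intro q hq
        rw [pow_succ, Module.End.mul_apply, show cU.x j - 1 - q = cU.x j - (q + 1) by omega]
    rw [e1, Finset.sum_range_sub' (fun q => θt ((Tmap x ^ q) v) • ((Tmap x ^ (cU.x j - q)) g))]
    simp only [pow_zero, Module.End.one_apply, Nat.sub_zero]
    rw [pow_zz x cU j _ le_rfl]
    simp [z]
  have hSinl : ∀ w, S (w, 0) = θ w • ((z, 0) : EE k d e) := by
    intro w
    rw [hSv, Tmap_pow_inl, ext_inl, ext_inl]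
    rw [show θ (((LV x) ^ n) w) = 0 from c.th_pow i0 i1 y hb hy z w n (by omega)]
    simp
  refine move_stepUp m x S ?_ ?_ (c.x i0) ha ?_
  · intro w; rw [hSinl]; simp
  · intro t
    have e1 : Tmap x + t • S = (1 - t • D) * Tmap x * (1 + t • D) := by
      have : (1 - t • D) * Tmap x * (1 + t • D) =
        Tmap x + t • (Tmap x * D - D * Tmap x) - (t * t) • (D * Tmap x * D) := by
        simp only [sub_mul, mul_add, mul_one, one_mul, smul_mul_assoc, mul_smul_comm, smul_sub, mul_smul]
        abel
      rw [this, hDTD]; simp [S]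
    have e2 : (1 + t • D) * (1 - t • D) = 1 := by
      simp only [add_mul, mul_sub, mul_one, one_mul, smul_mul_assoc, mul_smul_comm, hDD]
      simp
    have e3 : ∀ N, (Tmap x + t • S) ^ N = (1 - t • D) * (Tmap x) ^ N * (1 + t • D) := by
      intro N
      induction N with
      | zero =>
        have : (1 - t • D) * (1 + t • D) = 1 := by
          simp only [sub_mul, mul_add, mul_one, one_mul, smul_mul_assoc, mul_smul_comm, hDD]
          simp
        simp [this]
      | succ N ih =>
        rw [pow_succ, ih, e1]
        calc _ = (1 - t • D) * (Tmap x) ^ N * ((1 + t • D) * (1 - t • D)) * Tmap x * (1 + t • D) := by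
              noncomm_ring
          _ = _ := by rw [e2, mul_one, pow_succ]; simp only [mul_assoc]
    rw [e3, hT]; simp
  · intro t ht
    have := c.th_rank i0 i1 hne y hb hy z hz h1 h2 t ht
    have e0 : (LinearMap.fst k _ _ ∘ₗ (Tmap x + t • S) ∘ₗ
        LinearMap.inl k _ _ : Module.End k (Fin d → k)) = LV x + t • (θ.smulRight z) := by
      refine LinearMap.ext fun w => ?_
      simp [hSinl, Tmap_apply]
    rw [e0]; exact this
end PE

section PFF
variable {k : Type u} [Field k] {d e : ℕ}

/-- perturbation of the off-diagonal block -/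
def pert (x : BSpace k d e) (κ : (Fin e → k) →ₗ[k] k) (w : Fin d → k) (s : k) : BSpace k d e :=
  mkB x.1 x.2.1 (x.2.2 + s • LinearMap.toMatrix' (κ.smulRight w))

theorem Tmap_pert (x : BSpace k d e) (κ : (Fin e → k) →ₗ[k] k) (w : Fin d → k) (s : k) :
    Tmap (pert x κ w s) = Tmap x + s • ((κ ∘ₗ LinearMap.snd k _ _).smulRight ((w, 0) : EE k d e)
      : Module.End k (EE k d e)) := by
  refine LinearMap.ext fun v => ?_
  have h : LZ (pert x κ w s) = LZ x + s • (κ.smulRight w) := by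
    change Matrix.toLin' (x.2.2 + s • LinearMap.toMatrix' (κ.smulRight w)) = _
    rw [map_add, map_smul, Matrix.toLin'_toMatrix']
  rw [Tmap_apply, h]
  change (LV x v.1 + _, LU x v.2) = _
  simp [Tmap_apply, add_assoc]

theorem PB_pert (x : BSpace k d e) (κ : (Fin e → k) →ₗ[k] k) (w : Fin d → k) :
    PB (fun s => pert x κ w s) :=
  ⟨PM_const _, PM_const _, PM_add (PM_const _) (PM_smul (PF_id k) (PM_const _))⟩

theorem caseM2 [Infinite k] (m : ℕ) (x : BSpace k d e) (hx : x ∈ BS k m d e)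
    (c : ChainBasis (LV x)) (cU : ChainBasis (LU x)) (i0 i1 : c.ι) (hne : i0 ≠ i1)
    (ha : c.x i0 < m) (j : cU.ι) (hb : c.x i1 ≤ m - cU.x j) (hy : m - cU.x j ≤ c.x i0) :
    StepUp m x := by
  have hpos := c.pos i1
  have hposU := cU.pos j
  have hT := (mem_BS m x).1 hx
  obtain ⟨y, hydef⟩ : ∃ y, y = m - cU.x j := ⟨_, rfl⟩
  obtain ⟨w, hw⟩ : ∃ w, w = ((LV x) ^ (c.x i0 - y)) (c.r i0) + c.r i1 := ⟨_, rfl⟩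
  have hwk : ((LV x) ^ y) w = 0 := by
    rw [hw, map_add, c.kill_ge i1 y (by omega), ← Module.End.mul_apply, ← pow_add,
      Nat.add_sub_cancel' (by omega), c.kill]
    simp
  have hr1 : c.r i1 = ((LV x) ^ 0) (c.r i1) := by simp
  have h1 : c.co i0 (c.x i0 - y) w = 1 := by
    rw [hw, map_add, c.co_gen_self _ _ (by omega), hr1, c.co_gen_ne _ _ (by omega)]
    · simp
    · rintro ⟨h, _⟩; exact hne h.symm
  have h2 : c.co i1 0 w = 1 := by
    rw [hw, map_add, hr1, c.co_gen_self _ _ (by omega), c.co_gen_ne _ _ (by omega)]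
    · simp
    · rintro ⟨h, _⟩; exact hne h
  let κ := cU.co j (cU.x j - 1)
  let κt : EE k d e →ₗ[k] k := κ ∘ₗ LinearMap.snd k _ _
  have hκ : ∀ p, κt ((Tmap x ^ p) (w, 0)) = 0 := by
    intro p; rw [Tmap_pow_inl]; simp [κt]
  have hS : ∀ s, pert x κ w s ∈ BS k m d e := by
    intro s
    rw [mem_BS, Tmap_pert]
    refine LinearMap.ext fun v => ?_
    rw [rankOne_pow (Tmap x) κt (w, 0) hκ s m v, hT, Finset.sum_eq_zero]
    · simp
    · intro q hq
      have hq := Finset.mem_range.1 hq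
      rcases le_or_gt y (m - 1 - q) with h | h
      · rw [Tmap_pow_inl, show m - 1 - q = (m - 1 - q - y) + y by omega, pow_add,
          Module.End.mul_apply, hwk]
        simp
      · have : κt ((Tmap x ^ q) v) = 0 := by
          change κ ((Tmap x ^ q) v).2 = 0
          rw [Tmap_pow_snd]
          exact cU.co_pow_zero j _ (by omega) q (by omega) _
        rw [this]; simp
  have hzz : ∀ s, ((Tmap (pert x κ w s) ^ (cU.x j)) ((0, cU.r j) : EE k d e)).1 =
      zz x cU j + s • w := by
    intro s
    rw [zz, Tmap_pert, rankOne_pow (Tmap x) κt (w, 0) hκ s, Finset.sum_eq_single (cU.x j - 1)]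
    · have : κt ((Tmap x ^ (cU.x j - 1)) ((0, cU.r j) : EE k d e)) = 1 := by
        change κ ((Tmap x ^ (cU.x j - 1)) ((0, cU.r j) : EE k d e)).2 = 1
        rw [Tmap_pow_snd]
        exact cU.co_gen_self j _ (by omega)
      rw [this]
      simp [zz]
    · intro q hq hne
      have : κt ((Tmap x ^ q) ((0, cU.r j) : EE k d e)) = 0 := by
        change κ ((Tmap x ^ q) ((0, cU.r j) : EE k d e)).2 = 0
        rw [Tmap_pow_snd]
        exact cU.co_gen_ne j _ (by omega) j q (fun h => hne h.2)
      rw [this]; simp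
    · intro h; exfalso; apply h; rw [Finset.mem_range]; omega
  have h0 : pert x κ w 0 = x := by
    rw [pert, zero_smul, add_zero]; rfl
  have key := curve_Cl (PB_pert x κ w) {y | StepUp m y ∧ rk m y = rk m x} 0 ?_
  · simp only [h0] at key
    refine Cl_trans ?_ key
    rintro y ⟨hy1, hy2⟩
    rw [StepUp, hy2] at hy1
    exact hy1
  · refine ((Set.finite_singleton (-(c.co i0 (c.x i0 - y) (zz x cU j)))).union
      (Set.finite_singleton (-(c.co i1 0 (zz x cU j))))).subset ?_
    intro s hs
    by_contra hcon
    simp only [Set.mem_union, Set.mem_singleton_iff, not_or] at hcon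
    apply hs
    refine ⟨?_, rfl⟩
    have n1 : c.co i0 (c.x i0 - (m - cU.x j))
        (((Tmap (pert x κ w s) ^ (cU.x j)) ((0, cU.r j) : EE k d e)).1) ≠ 0 := by
      rw [hzz s, ← hydef, map_add, map_smul, h1, smul_eq_mul]
      intro h
      exact hcon.1 (by linear_combination h)
    have n2 : c.co i1 0
        (((Tmap (pert x κ w s) ^ (cU.x j)) ((0, cU.r j) : EE k d e)).1) ≠ 0 := by
      rw [hzz s, map_add, map_smul, h2, smul_eq_mul]
      intro h
      exact hcon.2 (by linear_combination h)
    exact caseM2gen m (pert x κ w s) (hS s) c cU i0 i1 hne ha j hb hy n1 n2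

theorem LU_pow_zero (m : ℕ) (x : BSpace k d e) (hx : x ∈ BS k m d e) : (LU x) ^ m = 0 := by
  rw [LU, ← toLin'_pow', hx.2.1, map_zero]

theorem LV_pow_zero (m : ℕ) (x : BSpace k d e) (hx : x ∈ BS k m d e) : (LV x) ^ m = 0 := by
  rw [LV, ← toLin'_pow', hx.1, map_zero]

theorem main_move [Infinite k] (m : ℕ) (x : BSpace k d e) (hx : x ∈ BS k m d e)
    (c : ChainBasis (LV x)) (i0 i1 : c.ι) (hne : i0 ≠ i1) (h0 : c.x i0 < m) (h1 : c.x i1 < m) :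
    StepUp m x := by
  wlog h : c.x i1 ≤ c.x i0 generalizing i0 i1
  · exact this i1 i0 hne.symm h1 h0 (le_of_not_ge h)
  obtain ⟨cU⟩ := exists_chainBasis (LU x) m (LU_pow_zero m x hx)
  by_cases hj : ∃ j, (c.x i1 ≤ m - cU.x j ∧ m - cU.x j ≤ c.x i0)
  · obtain ⟨j, hj1, hj2⟩ := hj
    exact caseM2 m x hx c cU i0 i1 hne h0 j hj1 hj2
  · exact caseM1 m x hx c cU i0 i1 hne h h0 (fun j hj' => hj ⟨j, hj'⟩)

/-- transpose -/
def tr (x : BSpace k d e) : BSpace k e d := mkB x.2.1.transpose x.1.transpose x.2.2.transpose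

theorem tr_tr (x : BSpace k d e) : tr (tr x) = x := rfl

theorem tr_mem (m : ℕ) (x : BSpace k d e) (hx : x ∈ BS k m d e) : tr x ∈ BS k m e d := by
  obtain ⟨h1, h2, h3⟩ := hx
  refine ⟨?_, ?_, ?_⟩
  · change x.2.1.transpose ^ m = 0
    rw [← Matrix.transpose_pow, h2, Matrix.transpose_zero]
  · change x.1.transpose ^ m = 0
    rw [← Matrix.transpose_pow, h1, Matrix.transpose_zero]
  · change ∑ i ∈ Finset.range m, x.2.1.transpose ^ (m - 1 - i) * x.2.2.transpose *
      x.1.transpose ^ i = 0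
    have := congrArg Matrix.transpose h3
    rw [Matrix.transpose_sum, Matrix.transpose_zero] at this
    rw [← Finset.sum_range_reflect] at this
    rw [← this]
    apply Finset.sum_congr rfl
    intro i hi
    have hi := Finset.mem_range.1 hi
    rw [Matrix.transpose_mul, Matrix.transpose_mul, Matrix.transpose_pow, Matrix.transpose_pow,
      Matrix.mul_assoc, show m - 1 - (m - 1 - i) = i by omega]

theorem rk_tr (m : ℕ) (x : BSpace k d e) : rk m (tr x) = rk m x := by
  apply Finset.sum_congr rfl
  intro i _
  change (x.2.1.transpose ^ i).rank + (x.1.transpose ^ i).rank = _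
  rw [← Matrix.transpose_pow, ← Matrix.transpose_pow, Matrix.rank_transpose, Matrix.rank_transpose,
    add_comm]

/-- coordinates of the transpose -/
def trIdx (d e : ℕ) : BIdx d e → BIdx e d
  | Sum.inl i => Sum.inr (Sum.inl (i.2, i.1))
  | Sum.inr (Sum.inl i) => Sum.inl (i.2, i.1)
  | Sum.inr (Sum.inr i) => Sum.inr (Sum.inr (i.2, i.1))

theorem bCoords_tr (x : BSpace k d e) : bCoords (tr x) ∘ trIdx d e = bCoords x := by
  funext i
  rcases i with (i | i | i) <;> rfl

theorem StepUp_tr (m : ℕ) (x : BSpace k d e) (h : StepUp m (tr x)) : StepUp m x := by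
  intro p hp
  obtain ⟨y, ⟨hy1, hy2⟩, hpy⟩ := h (MvPolynomial.rename (trIdx d e) p) (by
    rw [MvPolynomial.eval_rename, bCoords_tr]; exact hp)
  refine ⟨tr y, ⟨tr_mem m y hy1, ?_⟩, ?_⟩
  · rw [rk_tr] at hy2 ⊢; exact hy2
  · rw [MvPolynomial.eval_rename] at hpy
    have := bCoords_tr (tr y)
    rw [tr_tr] at this
    rw [this] at hpy
    exact hpy

/-- generic Jordan type -/
def Good (m : ℕ) {n : ℕ} (A : Matrix (Fin n) (Fin n) k) : Prop :=
  ∃ c : ChainBasis (Matrix.toLin' A), (∀ i, c.x i ≤ m) ∧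
    ∀ i i', c.x i < m → c.x i' < m → i = i'

def GG (k : Type u) [Field k] (m d e : ℕ) : Set (BSpace k d e) :=
  {x | x ∈ BS k m d e ∧ Good m x.1 ∧ Good m x.2.1.transpose}

theorem good_or (m : ℕ) [Infinite k] (x : BSpace k d e) (hx : x ∈ BS k m d e) :
    Good m x.1 ∨ StepUp m x := by
  obtain ⟨c⟩ := exists_chainBasis (LV x) m (LV_pow_zero m x hx)
  by_cases h : ∀ i i', c.x i < m → c.x i' < m → i = i'
  · exact Or.inl ⟨c, c.x_le m (LV_pow_zero m x hx), h⟩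
  · right
    push Not at h
    obtain ⟨i, i', h1, h2, h3⟩ := h
    exact main_move m x hx c i i' h3 h1 h2

theorem rk_le (m : ℕ) (x : BSpace k d e) : rk m x ≤ m * (d + e) := by
  have : rk m x ≤ ∑ i ∈ Finset.range m, (d + e) := by
    apply Finset.sum_le_sum
    intro i _
    apply add_le_add
    · simpa using Matrix.rank_le_card_width (x.1 ^ i)
    · simpa using Matrix.rank_le_card_width (x.2.1 ^ i)
  simpa using this

theorem BS_subset [Infinite k] (m : ℕ) : BS k m d e ⊆ Cl (GG k m d e) := by
  have key : ∀ N, ∀ x : BSpace k d e, x ∈ BS k m d e → m * (d + e) ≤ rk m x + N →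
      x ∈ Cl (GG k m d e) := by
    intro N
    induction N with
    | zero =>
      intro x hx hN
      have hno : ¬ StepUp m x := by
        intro h
        obtain ⟨y, ⟨_, hy⟩, _⟩ := h 1 (by simp)
        have := rk_le m y
        omega
      apply subset_Cl
      refine ⟨hx, (good_or m x hx).resolve_right hno, ?_⟩
      exact (good_or m (tr x) (tr_mem m x hx)).resolve_right (fun h => hno (StepUp_tr m x h))
    | succ N ih =>
      intro x hx hN
      by_cases hs : StepUp m x
      · refine Cl_trans ?_ hs
        rintro y ⟨hy1, hy2⟩
        exact ih y hy1 (by omega)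
      · apply subset_Cl
        refine ⟨hx, (good_or m x hx).resolve_right hs, ?_⟩
        exact (good_or m (tr x) (tr_mem m x hx)).resolve_right (fun h => hs (StepUp_tr m x h))
  intro x hx
  exact key _ x hx le_add_self
end PFF

section PG
variable {k : Type u} [Field k] {d e : ℕ}

theorem card_fiber {M : Type*} [AddCommGroup M] [Module k M] {A : Module.End k M} (n m : ℕ)
    (hnM : Module.finrank k M = n) (c : ChainBasis A) (h1 : ∀ i, c.x i ≤ m)
    (h2 : ∀ i i', c.x i < m → c.x i' < m → i = i') (v : ℕ) :
    Nat.card {i // c.x i = v} =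
      if v = m then n / m else if v = n % m ∧ v ≠ 0 then 1 else 0 := by
  classical
  have := c.fin
  have hn : n = ∑ i, c.x i := by
    have := Module.finrank_eq_card_basis c.b
    rw [← hnM, this]; simp
  rcases Nat.eq_zero_or_pos m with rfl | hm
  · have hE : IsEmpty c.ι := ⟨fun i => by have := c.pos i; have := h1 i; omega⟩
    have hn0 : n = 0 := by rw [hn]; simp
    subst hn0
    simp
  · by_cases hmid : ∃ i, c.x i < m
    · obtain ⟨i0, hi0⟩ := hmid
      have hx : ∀ i, i ≠ i0 → c.x i = m := by
        intro i hi
        by_contra hcon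
        exact hi (h2 i i0 (lt_of_le_of_ne (h1 i) hcon) hi0)
      have hcard : n = c.x i0 + m * (Fintype.card c.ι - 1) := by
        rw [hn, ← Finset.add_sum_erase _ _ (Finset.mem_univ i0)]
        rw [Finset.sum_congr rfl (fun i hi => hx i (Finset.ne_of_mem_erase hi))]
        simp [Finset.card_erase_of_mem, mul_comm]
      have hmod : n % m = c.x i0 := by
        rw [hcard, Nat.add_mul_mod_self_left, Nat.mod_eq_of_lt hi0]
      have hdiv : n / m = Fintype.card c.ι - 1 := by
        rw [hcard, Nat.add_mul_div_left _ _ hm, Nat.div_eq_of_lt hi0, zero_add]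
      have hp := c.pos i0
      rw [hmod, hdiv]
      by_cases hv : v = m
      · rw [if_pos hv, Nat.card_eq_fintype_card, Fintype.card_subtype]
        have : (Finset.univ.filter fun i => c.x i = v) = Finset.univ.erase i0 := by
          ext i
          simp only [Finset.mem_filter, Finset.mem_univ, true_and, Finset.mem_erase, and_true]
          constructor
          · rintro h rfl; omega
          · intro h; rw [hx i h, hv]
        rw [this, Finset.card_erase_of_mem (Finset.mem_univ _)]; rfl
      · rw [if_neg hv]
        by_cases hv2 : v = c.x i0
        · rw [if_pos ⟨hv2, by omega⟩, Nat.card_eq_fintype_card, Fintype.card_subtype]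
          have : (Finset.univ.filter fun i => c.x i = v) = {i0} := by
            ext i
            simp only [Finset.mem_filter, Finset.mem_univ, true_and, Finset.mem_singleton]
            constructor
            · intro h; by_contra hc; rw [hx i hc] at h; omega
            · rintro rfl; exact hv2.symm
          rw [this]; simp
        · rw [if_neg (fun h => hv2 h.1), Nat.card_eq_zero]
          left
          refine ⟨fun ⟨i, hi⟩ => ?_⟩
          by_cases hc : i = i0
          · subst hc; exact hv2 hi.symm
          · rw [hx i hc] at hi; exact hv hi.symm
    · push Not at hmid
      have hx : ∀ i, c.x i = m := fun i => le_antisymm (h1 i) (hmid i)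
      have hcard : n = m * (Fintype.card c.ι) := by
        rw [hn, Finset.sum_congr rfl (fun i _ => hx i)]
        simp [mul_comm]
      have hmod : n % m = 0 := by rw [hcard]; simp
      have hdiv : n / m = Fintype.card c.ι := by
        rw [hcard]; exact Nat.mul_div_cancel_left _ hm
      rw [hmod, hdiv]
      by_cases hv : v = m
      · rw [if_pos hv, Nat.card_eq_fintype_card, Fintype.card_subtype]
        simp [hx, hv]
      · rw [if_neg hv, if_neg (fun h => h.2 h.1), Nat.card_eq_zero]
        left
        exact ⟨fun ⟨i, hi⟩ => hv (by rw [← hi, hx])⟩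

theorem good_conj {n : ℕ} (m : ℕ) {A A' : Matrix (Fin n) (Fin n) k} (hA : Good m A)
    (hA' : Good m A') : ∃ g : Matrix (Fin n) (Fin n) k, g.det ≠ 0 ∧ A' = g * A * g⁻¹ := by
  obtain ⟨c, h1, h2⟩ := hA
  obtain ⟨c', h1', h2'⟩ := hA'
  have := c.fin
  have := c'.fin
  have hfib : ∀ v, Nonempty ({i // c.x i = v} ≃ {i // c'.x i = v}) := by
    intro v
    classical
    refine Fintype.card_eq.1 ?_
    rw [← Nat.card_eq_fintype_card, ← Nat.card_eq_fintype_card]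
    rw [card_fiber n m (by simp) c h1 h2, card_fiber n m (by simp) c' h1' h2']
  let τ : c.ι ≃ c'.ι := Equiv.ofFiberEquiv (fun v => (hfib v).some)
  have hτ : ∀ i, c'.x (τ i) = c.x i := fun i => Equiv.ofFiberEquiv_map _ i
  let σ : (Σ i, Fin (c.x i)) ≃ (Σ i, Fin (c'.x i)) :=
    Equiv.sigmaCongr τ (fun i => finCongr (hτ i).symm)
  let L : (Fin n → k) ≃ₗ[k] (Fin n → k) := c.b.equiv c'.b σ
  have hL : ∀ i p, L (((Matrix.toLin' A) ^ p) (c.r i)) = ((Matrix.toLin' A') ^ p) (c'.r (τ i)) := by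
    intro i p
    rcases lt_or_ge p (c.x i) with h | h
    · have e1 := c.hb i ⟨p, h⟩
      have e2 := c'.hb (τ i) ⟨p, by rw [hτ]; exact h⟩
      simp only at e1 e2
      rw [← e1, ← e2, Module.Basis.equiv_apply]
      rfl
    · rw [c.kill_ge i p h, c'.kill_ge _ p (by rw [hτ]; exact h), map_zero]
  have hcomm : L.toLinearMap ∘ₗ Matrix.toLin' A = Matrix.toLin' A' ∘ₗ L.toLinearMap := by
    apply c.ext_gen
    intro j q
    simp only [LinearMap.comp_apply, LinearEquiv.coe_coe]
    rw [hL, ← Module.End.mul_apply, ← Module.End.mul_apply, ← pow_succ', ← pow_succ', hL]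
  let g := LinearMap.toMatrix' L.toLinearMap
  let g' := LinearMap.toMatrix' L.symm.toLinearMap
  have hgg : g * g' = 1 := by
    rw [← LinearMap.toMatrix'_comp]; simp
  have hdet : g.det ≠ 0 := by
    intro h
    have := congrArg Matrix.det hgg
    rw [Matrix.det_mul, h] at this
    simp at this
  have hm : g * A = A' * g := by
    have := congrArg LinearMap.toMatrix' hcomm
    rw [LinearMap.toMatrix'_comp, LinearMap.toMatrix'_comp, LinearMap.toMatrix'_toLin',
      LinearMap.toMatrix'_toLin'] at this
    exact this
  refine ⟨g, hdet, ?_⟩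
  rw [hm, Matrix.mul_assoc, Matrix.mul_nonsing_inv _ (isUnit_iff_ne_zero.2 hdet), Matrix.mul_one]

theorem good_of_conj {n : ℕ} (m : ℕ) {A : Matrix (Fin n) (Fin n) k} (hA : Good m A)
    (g : Matrix (Fin n) (Fin n) k) (hg : g.det ≠ 0) (δ : k) (hδ : δ ≠ 0) :
    Good m (δ • (g * A * g⁻¹)) := by
  obtain ⟨c, h1, h2⟩ := hA
  have hu : IsUnit g.det := isUnit_iff_ne_zero.2 hg
  let L : (Fin n → k) ≃ₗ[k] (Fin n → k) :=
    LinearEquiv.ofLinearMap (Matrix.toLin' g) (Matrix.toLin' g⁻¹)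
      (by rw [← Matrix.toLin'_mul, Matrix.mul_nonsing_inv _ hu, Matrix.toLin'_one])
      (by rw [← Matrix.toLin'_mul, Matrix.nonsing_inv_mul _ hu, Matrix.toLin'_one])
  have hL : ∀ w, L w = Matrix.toLin' g w := fun w => rfl
  have hpow : ∀ p w, ((Matrix.toLin' (δ • (g * A * g⁻¹))) ^ p) (L w) =
      δ ^ p • L (((Matrix.toLin' A) ^ p) w) := by
    intro p w
    rw [← toLin'_pow', ← toLin'_pow', hL, hL, ← LinearMap.comp_apply, ← LinearMap.comp_apply,
      ← Matrix.toLin'_mul, ← Matrix.toLin'_mul, ← LinearMap.smul_apply, ← map_smul]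
    congr 2
    induction p with
    | zero => simp
    | succ p ih =>
      rw [pow_succ', Matrix.mul_assoc, ih, pow_succ' A, pow_succ' δ]
      simp only [Matrix.mul_smul, Matrix.smul_mul, smul_smul, Matrix.mul_assoc]
      rw [← Matrix.mul_assoc g⁻¹, Matrix.nonsing_inv_mul _ hu, Matrix.one_mul, mul_comm]
  refine ⟨{ ι := c.ι, fin := c.fin, x := c.x, r := fun i => L (c.r i),
            b := (c.b.map L).isUnitSMul (w := fun a => δ ^ (a.2 : ℕ))
              (fun a => isUnit_iff_ne_zero.2 (pow_ne_zero _ hδ)),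
            hb := ?_, kill := ?_, pos := c.pos }, h1, h2⟩
  · intro i p
    rw [Module.Basis.isUnitSMul_apply, Module.Basis.map_apply, c.hb, hpow]
  · intro i
    rw [hpow, c.kill]; simp

/-- group action with scaling -/
def act (g : Matrix (Fin d) (Fin d) k) (h : Matrix (Fin e) (Fin e) k) (δ ε : k)
    (x : BSpace k d e) : BSpace k d e :=
  mkB (δ • (g * x.1 * g⁻¹)) (δ • (h * x.2.1 * h⁻¹)) (ε • (g * x.2.2 * h⁻¹))

theorem mconj_pow {n : ℕ} (g A : Matrix (Fin n) (Fin n) k) (hg : g.det ≠ 0) (δ : k) (p : ℕ) :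
    (δ • (g * A * g⁻¹)) ^ p = δ ^ p • (g * A ^ p * g⁻¹) := by
  have hu : IsUnit g.det := isUnit_iff_ne_zero.2 hg
  induction p with
  | zero => simp [Matrix.mul_nonsing_inv _ hu]
  | succ p ih =>
    rw [pow_succ', ih, pow_succ' A, pow_succ' δ]
    simp only [Matrix.mul_smul, Matrix.smul_mul, smul_smul, Matrix.mul_assoc]
    rw [← Matrix.mul_assoc g⁻¹ g, Matrix.nonsing_inv_mul _ hu, Matrix.one_mul, mul_comm]

theorem act_BS (m : ℕ) (g : Matrix (Fin d) (Fin d) k) (h : Matrix (Fin e) (Fin e) k) (δ ε : k)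
    (hg : g.det ≠ 0) (hh : h.det ≠ 0) (x : BSpace k d e) (hx : x ∈ BS k m d e) :
    act g h δ ε x ∈ BS k m d e := by
  obtain ⟨h1, h2, h3⟩ := hx
  have hgu : IsUnit g.det := isUnit_iff_ne_zero.2 hg
  have hhu : IsUnit h.det := isUnit_iff_ne_zero.2 hh
  refine ⟨?_, ?_, ?_⟩
  · change (δ • (g * x.1 * g⁻¹)) ^ m = 0
    rw [mconj_pow _ _ hg, h1]; simp
  · change (δ • (h * x.2.1 * h⁻¹)) ^ m = 0
    rw [mconj_pow _ _ hh, h2]; simp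
  · change ∑ i ∈ Finset.range m, (δ • (g * x.1 * g⁻¹)) ^ (m - 1 - i) * (ε • (g * x.2.2 * h⁻¹)) *
      (δ • (h * x.2.1 * h⁻¹)) ^ i = 0
    have : ∀ i ∈ Finset.range m, (δ • (g * x.1 * g⁻¹)) ^ (m - 1 - i) * (ε • (g * x.2.2 * h⁻¹)) *
      (δ • (h * x.2.1 * h⁻¹)) ^ i =
        (δ ^ (m - 1) * ε) • (g * (x.1 ^ (m - 1 - i) * x.2.2 * x.2.1 ^ i) * h⁻¹) := by
      intro i hi
      have hi := Finset.mem_range.1 hi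
      rw [mconj_pow _ _ hg, mconj_pow _ _ hh]
      simp only [Matrix.mul_smul, Matrix.smul_mul, smul_smul, Matrix.mul_assoc]
      rw [← Matrix.mul_assoc g⁻¹ g, Matrix.nonsing_inv_mul _ hgu, Matrix.one_mul,
        ← Matrix.mul_assoc h⁻¹ h, Matrix.nonsing_inv_mul _ hhu, Matrix.one_mul]
      congr 1
      rw [show m - 1 = (m - 1 - i) + i by omega, pow_add]
      rw [show (m - 1 - i) + i - i = m - 1 - i by omega]
      ring
    rw [Finset.sum_congr rfl this, ← Finset.smul_sum, ← Matrix.sum_mul, ← Matrix.mul_sum, h3]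
    simp

theorem act_GG (m : ℕ) (g : Matrix (Fin d) (Fin d) k) (h : Matrix (Fin e) (Fin e) k) (δ ε : k)
    (hg : g.det ≠ 0) (hh : h.det ≠ 0) (hδ : δ ≠ 0) (x : BSpace k d e) (hx : x ∈ GG k m d e) :
    act g h δ ε x ∈ GG k m d e := by
  obtain ⟨h1, h2, h3⟩ := hx
  refine ⟨act_BS m g h δ ε hg hh x h1, good_of_conj m h2 g hg δ hδ, ?_⟩
  have hhu : IsUnit h.det := isUnit_iff_ne_zero.2 hh
  have := good_of_conj m h3 (h⁻¹).transpose (by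
    rw [Matrix.det_transpose, Matrix.det_nonsing_inv, Ring.inverse_eq_inv']
    exact inv_ne_zero hh) δ hδ
  convert this using 1
  change (δ • (h * x.2.1 * h⁻¹)).transpose = _
  rw [← Matrix.transpose_nonsing_inv, Matrix.nonsing_inv_nonsing_inv _ hhu, Matrix.transpose_smul,
    Matrix.transpose_mul, Matrix.transpose_mul, Matrix.mul_assoc]

/-- polynomial parametrization -/
def par (V0 : Matrix (Fin d) (Fin d) k) (U0 : Matrix (Fin e) (Fin e) k)
    (g : Matrix (Fin d) (Fin d) k) (h : Matrix (Fin e) (Fin e) k) (μ : k)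
    (Z : Matrix (Fin d) (Fin e) k) : BSpace k d e :=
  mkB ((μ * h.det) • (g * V0 * g.adjugate)) ((μ * g.det) • (h * U0 * h.adjugate))
    (g * Z * h.adjugate)

theorem adj_eq {n : ℕ} (g : Matrix (Fin n) (Fin n) k) (hg : g.det ≠ 0) :
    g.adjugate = g.det • g⁻¹ := by
  rw [Matrix.inv_def, Ring.inverse_eq_inv', smul_smul, mul_inv_cancel₀ hg, one_smul]

theorem par_eq (V0 : Matrix (Fin d) (Fin d) k) (U0 : Matrix (Fin e) (Fin e) k)
    (g : Matrix (Fin d) (Fin d) k) (h : Matrix (Fin e) (Fin e) k) (μ : k)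
    (Z : Matrix (Fin d) (Fin e) k) (hg : g.det ≠ 0) (hh : h.det ≠ 0) :
    par V0 U0 g h μ Z = act g h (μ * h.det * g.det) h.det (mkB V0 U0 Z) := by
  rw [par, act, adj_eq g hg, adj_eq h hh]
  simp only [Matrix.mul_smul, smul_smul]
  rw [show μ * g.det * h.det = μ * h.det * g.det by ring]
  rfl

theorem GG_par (m : ℕ) (x s : BSpace k d e) (hx : x ∈ GG k m d e) (hs : s ∈ GG k m d e) :
    ∃ g h μ Z, g.det ≠ 0 ∧ h.det ≠ 0 ∧ μ ≠ 0 ∧ mkB x.1 x.2.1 Z ∈ BS k m d e ∧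
      par x.1 x.2.1 g h μ Z = s := by
  obtain ⟨g, hg, hgV⟩ := good_conj m hx.2.1 hs.2.1
  obtain ⟨h', hh', hhU⟩ := good_conj m hx.2.2 hs.2.2
  have hgu : IsUnit g.det := isUnit_iff_ne_zero.2 hg
  have hhu' : IsUnit h'.det := isUnit_iff_ne_zero.2 hh'
  obtain ⟨h, hdef⟩ : ∃ h, h = (h'⁻¹).transpose := ⟨_, rfl⟩
  have hh : h.det ≠ 0 := by
    rw [hdef, Matrix.det_transpose, Matrix.det_nonsing_inv, Ring.inverse_eq_inv']
    exact inv_ne_zero hh'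
  have hhu : IsUnit h.det := isUnit_iff_ne_zero.2 hh
  have hU : s.2.1 = h * x.2.1 * h⁻¹ := by
    have := congrArg Matrix.transpose hhU
    rw [Matrix.transpose_transpose, Matrix.transpose_mul, Matrix.transpose_mul,
      Matrix.transpose_transpose] at this
    rw [this, hdef, ← Matrix.transpose_nonsing_inv, Matrix.nonsing_inv_nonsing_inv _ hhu',
      Matrix.mul_assoc]
  have hZ1 : mkB x.1 x.2.1 (h.det⁻¹ • (g⁻¹ * s.2.2 * h)) ∈ BS k m d e := by
    have := act_BS m g⁻¹ h⁻¹ 1 h.det⁻¹ (by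
      rw [Matrix.det_nonsing_inv, Ring.inverse_eq_inv']; exact inv_ne_zero hg) (by
      rw [Matrix.det_nonsing_inv, Ring.inverse_eq_inv']; exact inv_ne_zero hh) s hs.1
    convert this using 1
    rw [act, hgV, hU, Matrix.nonsing_inv_nonsing_inv _ hhu, Matrix.nonsing_inv_nonsing_inv _ hgu,
      one_smul, one_smul]
    congr 1
    · simp only [Matrix.mul_assoc]
      rw [Matrix.nonsing_inv_mul _ hgu, Matrix.mul_one, ← Matrix.mul_assoc,
        Matrix.nonsing_inv_mul _ hgu, Matrix.one_mul]
    · simp only [Matrix.mul_assoc]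
      rw [Matrix.nonsing_inv_mul _ hhu, Matrix.mul_one, ← Matrix.mul_assoc,
        Matrix.nonsing_inv_mul _ hhu, Matrix.one_mul]
  refine ⟨g, h, (h.det * g.det)⁻¹, _, hg, hh, inv_ne_zero (mul_ne_zero hh hg), hZ1, ?_⟩
  rw [par_eq _ _ _ _ _ _ hg hh, mul_assoc, inv_mul_cancel₀ (mul_ne_zero hh hg)]
  have e3 : h.det • (g * (h.det⁻¹ • (g⁻¹ * s.2.2 * h)) * h⁻¹) = s.2.2 := by
    simp only [Matrix.mul_smul, Matrix.smul_mul, smul_smul, mul_inv_cancel₀ hh, one_smul,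
      Matrix.mul_assoc]
    rw [Matrix.mul_nonsing_inv _ hhu, Matrix.mul_one, ← Matrix.mul_assoc,
      Matrix.mul_nonsing_inv _ hgu, Matrix.one_mul]
  have e1 : (1 : k) • (g * x.1 * g⁻¹) = s.1 := by rw [one_smul, hgV]
  have e2 : (1 : k) • (h * x.2.1 * h⁻¹) = s.2.1 := by rw [one_smul, hU]
  exact Prod.ext e1 (Prod.ext e2 e3)

theorem BS_linear (m : ℕ) (V0 : Matrix (Fin d) (Fin d) k) (U0 : Matrix (Fin e) (Fin e) k)
    (Z1 Z2 : Matrix (Fin d) (Fin e) k) (h1 : mkB V0 U0 Z1 ∈ BS k m d e)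
    (h2 : mkB V0 U0 Z2 ∈ BS k m d e) (t : k) : mkB V0 U0 (Z1 + t • Z2) ∈ BS k m d e := by
  refine ⟨h1.1, h1.2.1, ?_⟩
  have e1 : ∑ i ∈ Finset.range m, V0 ^ (m - 1 - i) * Z1 * U0 ^ i = 0 := h1.2.2
  have e2 : ∑ i ∈ Finset.range m, V0 ^ (m - 1 - i) * Z2 * U0 ^ i = 0 := h2.2.2
  change ∑ i ∈ Finset.range m, V0 ^ (m - 1 - i) * (Z1 + t • Z2) * U0 ^ i = 0
  simp only [Matrix.mul_add, Matrix.add_mul, Matrix.mul_smul, Matrix.smul_mul,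
    Finset.sum_add_distrib, ← Finset.smul_sum, e1, e2]
  simp

theorem GG_irred [Infinite k] (m : ℕ) (p q : MvPolynomial (BIdx d e) k)
    (hp : ∃ x ∈ GG k m d e, MvPolynomial.eval (bCoords x) p ≠ 0)
    (hq : ∃ x ∈ GG k m d e, MvPolynomial.eval (bCoords x) q ≠ 0) :
    ∃ x ∈ GG k m d e, MvPolynomial.eval (bCoords x) p ≠ 0 ∧
      MvPolynomial.eval (bCoords x) q ≠ 0 := by
  obtain ⟨x, hx, hpx⟩ := hp
  obtain ⟨y, hy, hqy⟩ := hq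
  obtain ⟨g1, h1, μ1, Z1, hg1, hh1, hμ1, hZ1, hpar1⟩ := GG_par m x x hx hx
  obtain ⟨g2, h2, μ2, Z2, hg2, hh2, hμ2, hZ2, hpar2⟩ := GG_par m x y hx hy
  let g : k → Matrix (Fin d) (Fin d) k := fun t => (1 - t) • g1 + t • g2
  let h : k → Matrix (Fin e) (Fin e) k := fun t => (1 - t) • h1 + t • h2
  let μ : k → k := fun t => (1 - t) * μ1 + t * μ2
  let Z : k → Matrix (Fin d) (Fin e) k := fun t => (1 - t) • Z1 + t • Z2
  have P1 : (fun t : k => 1 - t) ∈ PF k := (PF k).sub_mem (PF_const 1) (PF_id k)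
  have Pg : PM g := PM_add (PM_smul P1 (PM_const _)) (PM_smul (PF_id k) (PM_const _))
  have Ph : PM h := PM_add (PM_smul P1 (PM_const _)) (PM_smul (PF_id k) (PM_const _))
  have PZ : PM Z := PM_add (PM_smul P1 (PM_const _)) (PM_smul (PF_id k) (PM_const _))
  have Pμ : μ ∈ PF k := PF_add (PF_mul P1 (PF_const _)) (PF_mul (PF_id k) (PF_const _))
  let c : k → BSpace k d e := fun t => par x.1 x.2.1 (g t) (h t) (μ t) (Z t)
  have Pc : PB c := by
    refine ⟨?_, ?_, ?_⟩
    · exact PM_smul (PF_mul Pμ (PM_det Ph)) (PM_mul (PM_mul Pg (PM_const _)) (PM_adj Pg))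
    · exact PM_smul (PF_mul Pμ (PM_det Pg)) (PM_mul (PM_mul Ph (PM_const _)) (PM_adj Ph))
    · exact PM_mul (PM_mul Pg PZ) (PM_adj Ph)
  have c0 : c 0 = x := by simp [c, g, h, μ, Z, hpar1]
  have c1 : c 1 = y := by simp [c, g, h, μ, Z, hpar2]
  have f1 := PF_finite (PM_det Pg) 0 (by simpa [g] using hg1)
  have f2 := PF_finite (PM_det Ph) 0 (by simpa [h] using hh1)
  have f3 := PF_finite Pμ 0 (by simpa [μ] using hμ1)
  have f4 := PF_finite (PB_eval Pc p) 0 (by rw [c0]; exact hpx)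
  have f5 := PF_finite (PB_eval Pc q) 1 (by rw [c1]; exact hqy)
  obtain ⟨t, ht⟩ := ((f1.union (f2.union (f3.union (f4.union f5)))).infinite_compl).nonempty
  simp only [Set.mem_compl_iff, Set.mem_union, Set.mem_ofPred_eq, not_or] at ht
  obtain ⟨t1, t2, t3, t4, t5⟩ := ht
  refine ⟨c t, ?_, t4, t5⟩
  have hZt : mkB x.1 x.2.1 (Z t) ∈ BS k m d e := by
    have z0 : mkB x.1 x.2.1 (0 : Matrix (Fin d) (Fin e) k) ∈ BS k m d e := by
      refine ⟨hx.1.1, hx.1.2.1, ?_⟩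
      change ∑ i ∈ Finset.range m, x.1 ^ (m - 1 - i) * (0 : Matrix (Fin d) (Fin e) k) *
        x.2.1 ^ i = 0
      simp
    have z1 := BS_linear m _ _ _ _ z0 hZ1 (1 - t)
    rw [zero_add] at z1
    exact BS_linear m _ _ _ _ z1 hZ2 t
  change par x.1 x.2.1 (g t) (h t) (μ t) (Z t) ∈ _
  rw [par_eq _ _ _ _ _ _ t1 t2]
  exact act_GG m _ _ _ _ t1 t2 (mul_ne_zero (mul_ne_zero t3 t2) t1) _ ⟨hZt, hx.2.1, hx.2.2⟩

end PG

/-- For every `m ≥ 2` the algebra `B₁ = A(1, m, m-1)` is geometrically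
irreducible: for all `d, e ∈ ℕ` the Zariski-closed subset
`{(V, U, Z) : V^m = 0, U^m = 0, ∑_{i=0}^{m-1} V^{m-1-i} Z U^i = 0}` of
`M_{d×d}(k) × M_{e×e}(k) × M_{d×e}(k)` is irreducible. -/
theorem B_one_geometrically_irreducible (k : Type u) [Field k] [IsAlgClosed k]
    (m : ℕ) (hm : 2 ≤ m) (d e : ℕ) :
    @IsIrreducible _ (bTop k d e)
      {x : BSpace k d e | x.1 ^ m = 0 ∧ x.2.1 ^ m = 0 ∧
        ∑ i ∈ Finset.range m, x.1 ^ (m - 1 - i) * x.2.2 * x.2.1 ^ i = 0} := by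
  have : Infinite k := IsAlgClosed.instInfinite
  refine irred_of (BS k m d e) (GG k m d e) (fun x hx => hx.1) (BS_subset m) ?_ (GG_irred m)
  refine ⟨mkB 0 0 0, ?_, ?_, ?_⟩
  · exact zero_pow (by omega)
  · exact zero_pow (by omega)
  · apply Finset.sum_eq_zero
    intro i _
    change _ * (0 : Matrix (Fin d) (Fin e) k) * _ = 0
    simp
end
end
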